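/- arXiv:2308.04357 — 7 statements merged into one kernel-verified Lean document; each statement's English description precedes it below -/
import Mathlib

section
/- For all integers s ≥ 3, t ≥ 1 and n ≥ 1, it holds that f(n; s, t) ≤ f(n; s−1, t+1)^{s+t} · n^{s−1}. -/
/-- A triple `x < y < z` is non-increasing (w.r.t. a pair-coloring `χ`, queried as
`χ x y` for `x < y`) if `χ(x,y) ≥ χ(y,z)` and moreover `χ(x,z) = χ(x,y)` or
`χ(x,z) = χ(y,z)`. -/
def NonIncTriple {N n : ℕ} (χ : Fin N → Fin N → Fin n) (x y z : Fin N) : Prop :=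
  χ y z ≤ χ x y ∧ (χ x z = χ x y ∨ χ x z = χ y z)

/-- Every coloring of the pairs of `{1, …, N}` by `n` colors admits a copy of `H_{s,t}`:
vertices `x_1 < … < x_s = y_1 < … < y_t` (encoded as a single strictly monotone
`u : Fin (s+t-1) → Fin N`, with `x_{i+1} = u i` and `y_{j+1} = u (s-1+j)`) such that
`{x_1, …, x_s}` is non-increasing and `χ(x_{s−1},x_s) ≥ χ(y_1,y_2) ≥ … ≥ χ(y_{t−1},y_t)`
(i.e. the colors of consecutive edges `(u i, u (i+1))` for `i ≥ s − 2` are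
non-increasing). -/
def HasHstCopy (n N s t : ℕ) : Prop :=
  ∀ χ : Fin N → Fin N → Fin n,
    ∃ u : Fin (s + t - 1) → Fin N, StrictMono u ∧
      (∀ i j k : Fin (s + t - 1), i < j → j < k → (k : ℕ) < s →
        NonIncTriple χ (u i) (u j) (u k)) ∧
      (∀ (i : ℕ) (_h1 : s - 2 ≤ i) (h2 : i + 2 ≤ s + t - 2),
        χ (u ⟨i + 1, by omega⟩) (u ⟨i + 2, by omega⟩) ≤
          χ (u ⟨i, by omega⟩) (u ⟨i + 1, by omega⟩))

/-- `f(n; s, t)`: the minimum `N` such that every coloring of the pairs of `{1, …, N}`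
by `n` colors admits a copy of `H_{s,t}`. -/
noncomputable def fFun (n s t : ℕ) : ℕ := sInf {N | HasHstCopy n N s t}

/-!
Put `M = f(n; s - 1, t + 1)`, and let `p` be the position of `x_{s-1}` in a copy of
`H_{s-1,t+1}`, a sequence of `m = s + t - 1` vertices. Since every `M`-set of vertices contains
such a copy, double counting gives so many copies among `M ^ (m + 1) * n ^ (s - 1)` vertices that,
by pigeonhole, `M` of them agree off position `p` and give the same colors to the edges from
vertex `p` to the earlier vertices and to the next one. Let `a` be one of these copies; their
`p`-th vertices form a set of `M` vertices, any of which can play the role of `a p`, and which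
itself contains a copy `b`. If the color of `b p, b (p + 1)` is at most every color `a i, a p`
with `i < p`, then `a 0, …, a (p - 1), b p, b (p + 1), …` is a copy of `H_{s,t}`. Otherwise that
color exceeds some color `a i, a p`, hence the color of `a p, a (p + 1)`, and
`b 0, …, b p, a (p + 1), a (p + 2), …` is a copy of `H_{s,t}`.
-/

open Finset

section Counting

variable {V D : Type*} [Fintype V] {q M : ℕ}

theorem card_filter_subset_powersetCard_le [DecidableEq V] (S : Finset V) (M : ℕ) :
    #{T ∈ powersetCard M univ | S ⊆ T} ≤ (Fintype.card V - #S).choose (M - #S) := by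
  rw [← card_compl, ← card_powersetCard]
  refine card_le_card_of_injOn (· \ S) (fun T hT => ?_) (fun T hT T' hT' hTT' => ?_)
  · obtain ⟨hTM, hST⟩ := mem_filter.1 hT
    rw [mem_coe, mem_powersetCard, card_sdiff_of_subset hST, (mem_powersetCard.1 hTM).2]
    exact ⟨fun x hx => mem_compl.2 (mem_sdiff.1 hx).2, rfl⟩
  · rw [← sdiff_union_of_subset (mem_filter.1 hT).2, ← sdiff_union_of_subset (mem_filter.1 hT').2]
    exact congrArg (· ∪ S) hTT'

theorem choose_card_le_card_mul_of_forall_exists_subset {m : ℕ} {𝒢 : Finset (Finset V)}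
    (hm : ∀ S ∈ 𝒢, #S = m) (hM : ∀ T : Finset V, #T = M → ∃ S ∈ 𝒢, S ⊆ T) :
    (Fintype.card V).choose M ≤ #𝒢 * (Fintype.card V - m).choose (M - m) := by
  classical
  have double_count : #(powersetCard M (univ : Finset V)) * 1 ≤
      #𝒢 * (Fintype.card V - m).choose (M - m) := by
    refine card_mul_le_card_mul (fun T S => S ⊆ T) (fun T hT => ?_) (fun S hS => ?_)
    · obtain ⟨S, hS, hST⟩ := hM T (mem_powersetCard.1 hT).2
      exact card_pos.2 ⟨S, (mem_bipartiteAbove _).2 ⟨hS, hST⟩⟩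
    · rw [← hm S hS]
      exact card_filter_subset_powersetCard_le S M
  rwa [mul_one, card_powersetCard, card_univ] at double_count

theorem choose_le_mul_choose_of_choose_le {N m g : ℕ} (hmM : m ≤ M) (hMN : M ≤ N)
    (hg : N.choose M ≤ g * (N - m).choose (M - m)) : N.choose m ≤ g * M.choose m := by
  refine Nat.le_of_mul_le_mul_right ?_ (Nat.choose_pos (Nat.sub_le_sub_right hMN m))
  calc N.choose m * (N - m).choose (M - m) = N.choose M * M.choose m := (Nat.choose_mul hmM).symm
    _ ≤ g * (N - m).choose (M - m) * M.choose m := Nat.mul_le_mul_right _ hg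
    _ = g * M.choose m * (N - m).choose (M - m) := by ring

theorem choose_succ_mul_succ_le_pow (M q : ℕ) : M.choose (q + 1) * (q + 1) ≤ M ^ (q + 1) := by
  rw [Nat.choose_succ_right_eq, pow_succ]
  exact Nat.mul_le_mul (Nat.choose_le_pow M q) (Nat.sub_le M q)

theorem choose_mul_mul_pred_lt_of_choose_le {N c g : ℕ} (hqM : q < M) (hc : 0 < c)
    (hN : M ^ (q + 2) * c ≤ N) (hg : N.choose (q + 1) ≤ g * M.choose (q + 1)) :
    N.choose q * c * (M - 1) < g := by
  by_contra! hle
  obtain ⟨k, rfl⟩ : ∃ k, M = k + 1 := ⟨M - 1, by omega⟩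
  rw [Nat.add_sub_cancel] at hle
  have hqc : q < (k + 1) ^ (q + 1) * c :=
    calc q < k + 1 := hqM
      _ ≤ (k + 1) ^ (q + 1) := Nat.le_self_pow q.succ_ne_zero _
      _ ≤ (k + 1) ^ (q + 1) * c := Nat.le_mul_of_pos_right _ hc
  have hN' : (k + 1) ^ (q + 1) * c + c * k * (k + 1) ^ (q + 1) ≤ N :=
    le_of_eq_of_le (by ring) hN
  have hmul : N.choose q * (N - q) ≤ N.choose q * (c * k * (k + 1) ^ (q + 1)) :=
    calc N.choose q * (N - q) = N.choose (q + 1) * (q + 1) := (N.choose_succ_right_eq q).symm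
      _ ≤ g * (k + 1).choose (q + 1) * (q + 1) := Nat.mul_le_mul_right _ hg
      _ = g * ((k + 1).choose (q + 1) * (q + 1)) := mul_assoc ..
      _ ≤ N.choose q * c * k * (k + 1) ^ (q + 1) :=
        Nat.mul_le_mul hle (choose_succ_mul_succ_le_pow _ q)
      _ = N.choose q * (c * k * (k + 1) ^ (q + 1)) := by ring
  have hsub := Nat.le_of_mul_le_mul_left hmul (Nat.choose_pos (by omega))
  omega

variable [LinearOrder V]

theorem card_fin_orderEmbedding (k : ℕ) :
    Fintype.card (Fin k ↪o V) = (Fintype.card V).choose k := by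
  rw [← Nat.card_eq_fintype_card, ← Nat.card_eq_fintype_card,
    Nat.card_congr Set.powersetCard.ofFinEmbEquiv, Set.powersetCard.card]

theorem choose_mul_mul_pred_lt_card_of_forall_exists_mem {c : ℕ}
    {G : Finset (Fin (q + 1) ↪o V)} (hc : 0 < c) (hV : M ^ (q + 2) * c ≤ Fintype.card V)
    (hG : ∀ T : Finset V, #T = M → ∃ u ∈ G, ∀ i, u i ∈ T) :
    (Fintype.card V).choose q * c * (M - 1) < #G := by
  classical
  have hMV : M ≤ Fintype.card V :=
    calc M ≤ M ^ (q + 2) := Nat.le_self_pow (by omega) M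
      _ ≤ M ^ (q + 2) * c := Nat.le_mul_of_pos_right _ hc
      _ ≤ Fintype.card V := hV
  have hqM : q < M := by
    obtain ⟨T, -, hT⟩ := exists_subset_card_eq (s := (univ : Finset V)) hMV
    obtain ⟨u, -, hu⟩ := hG T hT
    simpa [hT] using card_le_card_of_injOn (s := univ) u (fun i _ => hu i) u.injective.injOn
  refine choose_mul_mul_pred_lt_of_choose_le hqM hc hV
    (choose_le_mul_choose_of_choose_le hqM hMV ?_)
  let range (u : Fin (q + 1) ↪o V) : Finset V := univ.map u.toEmbedding
  refine (choose_card_le_card_mul_of_forall_exists_subset (𝒢 := G.image range) ?_ ?_).trans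
    (Nat.mul_le_mul_right _ card_image_le)
  · simp [range]
  · intro T hT
    obtain ⟨u, huG, hu⟩ := hG T hT
    exact ⟨range u, mem_image_of_mem _ huG, by simpa [range, subset_iff] using hu⟩

theorem exists_lt_card_forall_exists_eq_off [Fintype D] {k : ℕ} {G : Finset (Fin (q + 1) ↪o V)}
    (p : Fin (q + 1)) (f : (Fin (q + 1) ↪o V) → D)
    (hG : (Fintype.card V).choose q * Fintype.card D * k < #G) :
    ∃ a ∈ G, ∃ A : Finset V, k < #A ∧
      ∀ x ∈ A, ∃ u ∈ G, u p = x ∧ (∀ i ≠ p, u i = a i) ∧ f u = f a := by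
  classical
  let profile (u : Fin (q + 1) ↪o V) : (Fin q ↪o V) × D := (p.succAboveOrderEmb.trans u, f u)
  obtain ⟨κ, -, hκ⟩ := exists_lt_card_fiber_of_mul_lt_card_of_maps_to
    (f := profile) (t := univ) (n := k) (fun u _ => mem_univ (profile u))
    (by rwa [card_univ, Fintype.card_prod, card_fin_orderEmbedding])
  set F := {u ∈ G | profile u = κ}
  have eq_off : ∀ u ∈ F, ∀ v ∈ F, ∀ i ≠ p, u i = v i := by
    intro u hu v hv i hi
    obtain ⟨j, rfl⟩ := Fin.exists_succAbove_eq hi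
    have := (mem_filter.1 hu).2.trans (mem_filter.1 hv).2.symm
    exact DFunLike.congr_fun (congrArg Prod.fst this) j
  have apply_injOn : Set.InjOn (fun u : Fin (q + 1) ↪o V => u p) F := by
    intro u hu v hv huv
    ext i
    rcases eq_or_ne i p with rfl | hi
    exacts [huv, eq_off u hu v hv i hi]
  obtain ⟨a, ha⟩ := card_pos.1 (Nat.zero_lt_of_lt hκ)
  refine ⟨a, (mem_filter.1 ha).1, F.image (· p), ?_, ?_⟩
  · rwa [card_image_of_injOn apply_injOn]
  · rintro _ hx
    obtain ⟨u, hu, rfl⟩ := mem_image.1 hx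
    exact ⟨u, (mem_filter.1 hu).1, rfl, eq_off u hu a ha,
      congrArg Prod.snd ((mem_filter.1 hu).2.trans (mem_filter.1 ha).2.symm)⟩

end Counting

section Copies

variable {V W C : Type*}

/-- `u 0, …, u (m - 1)` is a copy of `H_{s,t}` with `m = s + t - 1` vertices, for a pair-coloring
`χ` of an arbitrary ordered vertex set. As vertices are numbered from `0`, the vertices
`x_1, …, x_s` are those at positions `< s`, and `color_path_le` concerns the path starting with
the edge `x_{s-1}, x_s`. -/
structure IsHCopy [Preorder V] [LE C] {m : ℕ} (χ : V → V → C) (s : ℕ) (u : Fin m → V) :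
    Prop where
  strictMono : StrictMono u
  color_le {i j k : Fin m} : i < j → j < k → (k : ℕ) < s → χ (u j) (u k) ≤ χ (u i) (u j)
  color_eq {i j k : Fin m} : i < j → j < k → (k : ℕ) < s →
    χ (u i) (u k) = χ (u i) (u j) ∨ χ (u i) (u k) = χ (u j) (u k)
  color_path_le {i j k : Fin m} : (i : ℕ) + 1 = j → (j : ℕ) + 1 = k → s ≤ k →
    χ (u j) (u k) ≤ χ (u i) (u j)

/-- `x` is a twin of the vertex `a p` of the sequence `a`: it lies on the same side of every other
vertex of `a` as `a p` does, and its edges to the earlier vertices and to the next one have the same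
colors as those of `a p`. Nothing is asked of its edges to later vertices, whose colors do not
matter when `p` is the last position of the non-increasing part. -/
structure IsTwin [LT V] {m : ℕ} (χ : V → V → C) (p : Fin m) (a : Fin m → V) (x : V) :
    Prop where
  lt_left {i : Fin m} : i < p → a i < x
  lt_right {i : Fin m} : p < i → x < a i
  color_left {i : Fin m} : i < p → χ (a i) x = χ (a i) (a p)
  color_next {i : Fin m} : (p : ℕ) + 1 = i → χ x (a i) = χ (a p) (a i)

namespace IsHCopy

variable [Preorder V] [Preorder C] {χ : V → V → C} {m s : ℕ} {a b u : Fin m → V} {p q : Fin m}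

theorem consecutive_color_le (h : IsHCopy χ s u) {i j k : Fin m} (hij : (i : ℕ) + 1 = j)
    (hjk : (j : ℕ) + 1 = k) : χ (u j) (u k) ≤ χ (u i) (u j) := by
  rcases lt_or_ge (k : ℕ) s with hk | hk
  · exact h.color_le (by omega) (by omega) hk
  · exact h.color_path_le hij hjk hk

theorem mono (h : IsHCopy χ s u) {s' : ℕ} (hs : s' ≤ s) : IsHCopy χ s' u where
  strictMono := h.strictMono
  color_le hij hjk hk := h.color_le hij hjk (hk.trans_le hs)
  color_eq hij hjk hk := h.color_eq hij hjk (hk.trans_le hs)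
  color_path_le hij hjk _ := h.consecutive_color_le hij hjk

theorem comp [Preorder W] {e : W ↪o V} {u : Fin m → W}
    (h : IsHCopy (fun x y => χ (e x) (e y)) s u) : IsHCopy χ s (e ∘ u) where
  strictMono := e.strictMono.comp h.strictMono
  color_le := h.color_le
  color_eq := h.color_eq
  color_path_le := h.color_path_le

theorem color_next_le_color (h : IsHCopy χ (p + 1) u) (hpq : (p : ℕ) + 1 = q) {i j : Fin m}
    (hij : i < j) (hjp : j ≤ p) : χ (u p) (u q) ≤ χ (u i) (u j) := by
  have le_last : ∀ i < p, χ (u p) (u q) ≤ χ (u i) (u p) := by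
    intro i hip
    obtain ⟨r, hrp⟩ : ∃ r : Fin m, (r : ℕ) + 1 = p := ⟨⟨p - 1, by omega⟩, by grind⟩
    have hr : χ (u p) (u q) ≤ χ (u r) (u p) := h.consecutive_color_le hrp hpq
    obtain rfl | hir : i = r ∨ i < r := by omega
    · exact hr
    · rcases h.color_eq hir (by omega) p.val.lt_succ_self with heq | heq <;> rw [heq]
      · exact hr.trans (h.color_le hir (by omega) p.val.lt_succ_self)
      · exact hr
  rcases hjp.eq_or_lt with rfl | hjp
  · exact le_last i hij
  · exact (le_last j hjp).trans (h.color_le hij hjp p.val.lt_succ_self)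

theorem glue_left (ha : IsHCopy χ (p + 1) a) (hb : IsHCopy χ (p + 1) b)
    (htwin : ∀ j, IsTwin χ p a (b j)) (hpq : (p : ℕ) + 1 = q)
    (hle : ∀ i < p, χ (b p) (b q) ≤ χ (a i) (a p)) :
    IsHCopy χ (p + 2) (fun i => if i < p then a i else b i) where
  strictMono i j hij := by
    rcases lt_or_ge j p with hj | hj
    · simpa only [hij.trans hj, hj, if_true] using ha.strictMono hij
    rcases lt_or_ge i p with hi | hi
    · simpa only [hi, hj.not_gt, if_true, if_false] using (htwin j).lt_left hi
    · simpa only [hi.not_gt, hj.not_gt, if_false] using hb.strictMono hij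
  color_le {i j k} hij hjk hk := by
    rcases lt_or_ge k p with hkp | hkp
    · simpa only [hij.trans (hjk.trans hkp), hjk.trans hkp, hkp, if_true]
        using ha.color_le hij hjk (by omega)
    rcases lt_or_ge j p with hj | hj
    · simpa only [hij.trans hj, hj, hkp.not_gt, if_true, if_false, (htwin k).color_left hj]
        using ha.color_le hij hj p.val.lt_succ_self
    · obtain rfl : j = p := by omega
      obtain rfl : k = q := by omega
      simpa only [hij, lt_irrefl, hkp.not_gt, if_true, if_false, (htwin j).color_left hij]
        using hle i hij
  color_eq {i j k} hij hjk hk := by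
    rcases lt_or_ge k p with hkp | hkp
    · simpa only [hij.trans (hjk.trans hkp), hjk.trans hkp, hkp, if_true]
        using ha.color_eq hij hjk (by omega)
    rcases lt_or_ge j p with hj | hj
    · simpa only [hij.trans hj, hj, hkp.not_gt, if_true, if_false, (htwin k).color_left hj,
        (htwin k).color_left (hij.trans hj)] using ha.color_eq hij hj p.val.lt_succ_self
    · have hi : i < p := by omega
      simp only [hi, hj.not_gt, hkp.not_gt, if_true, if_false, (htwin _).color_left hi, true_or]
  color_path_le {i j k} hij hjk hk := by
    have hi : ¬ i < p := by omega
    have hj : ¬ j < p := by omega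
    have hk' : ¬ k < p := by omega
    simpa only [hi, hj, hk', if_false] using hb.consecutive_color_le hij hjk

theorem glue_right (ha : IsHCopy χ (p + 1) a) (hb : IsHCopy χ (p + 1) b)
    (htwin : ∀ j, IsTwin χ p a (b j)) (hpq : (p : ℕ) + 1 = q)
    (hle : χ (a p) (a q) ≤ χ (b p) (b q)) :
    IsHCopy χ (p + 2) (fun i => if i ≤ p then b i else a i) where
  strictMono i j hij := by
    rcases le_or_gt j p with hj | hj
    · simpa only [hij.le.trans hj, hj, if_true] using hb.strictMono hij
    rcases le_or_gt i p with hi | hi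
    · simpa only [hi, hj.not_ge, if_true, if_false] using (htwin i).lt_right hj
    · simpa only [hi.not_ge, hj.not_ge, if_false] using ha.strictMono hij
  color_le {i j k} hij hjk hk := by
    have hj : j ≤ p := by omega
    rcases le_or_gt k p with hkp | hkp
    · simpa only [hij.le.trans hj, hj, hkp, if_true] using hb.color_le hij hjk (by omega)
    · obtain rfl : k = q := by omega
      simpa only [hij.le.trans hj, hj, hkp.not_ge, if_true, if_false, (htwin j).color_next hpq]
        using hle.trans (hb.color_next_le_color hpq hij hj)
  color_eq {i j k} hij hjk hk := by
    have hj : j ≤ p := by omega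
    rcases le_or_gt k p with hkp | hkp
    · simpa only [hij.le.trans hj, hj, hkp, if_true] using hb.color_eq hij hjk (by omega)
    · obtain rfl : k = q := by omega
      simp only [hij.le.trans hj, hj, hkp.not_ge, if_true, if_false, (htwin _).color_next hpq,
        or_true]
  color_path_le {i j k} hij hjk hk := by
    have hj : ¬ j ≤ p := by omega
    have hk' : ¬ k ≤ p := by omega
    rcases le_or_gt i p with hi | hi
    · obtain rfl : i = p := by omega
      simpa only [hi, hj, hk', if_true, if_false, (htwin i).color_next hij]
        using ha.consecutive_color_le hij hjk
    · simpa only [hi.not_ge, hj, hk', if_false] using ha.consecutive_color_le hij hjk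

end IsHCopy

theorem IsHCopy.exists_succ_of_forall_isTwin [Preorder V] [LinearOrder C] {χ : V → V → C} {m : ℕ}
    {a b : Fin m → V} {p q : Fin m} (ha : IsHCopy χ (p + 1) a) (hb : IsHCopy χ (p + 1) b)
    (htwin : ∀ j, IsTwin χ p a (b j)) (hpq : (p : ℕ) + 1 = q) :
    ∃ w : Fin m → V, IsHCopy χ (p + 2) w := by
  by_cases! hle : ∀ i < p, χ (b p) (b q) ≤ χ (a i) (a p)
  · exact ⟨_, ha.glue_left hb htwin hpq hle⟩
  · obtain ⟨i, hip, hlt⟩ := hle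
    exact ⟨_, ha.glue_right hb htwin hpq
      ((ha.color_next_le_color hpq hip le_rfl).trans hlt.le)⟩

end Copies

section Forcing

variable {V C : Type*} [Fintype V] [LinearOrder V] [Fintype C] [Nonempty C] {m M : ℕ}
  {p q : Fin m}

theorem exists_isHCopy_forall_isTwin [LE C] {χ : V → V → C} {s : ℕ} (hpq : (p : ℕ) + 1 = q)
    (hV : M ^ (m + 1) * Fintype.card C ^ ((p : ℕ) + 1) ≤ Fintype.card V)
    (hM : ∀ T : Finset V, #T = M → ∃ u : Fin m → V, IsHCopy χ s u ∧ ∀ i, u i ∈ T) :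
    ∃ a : Fin m → V, IsHCopy χ s a ∧ ∃ A : Finset V, M ≤ #A ∧ ∀ x ∈ A, IsTwin χ p a x := by
  classical
  obtain ⟨r, rfl⟩ : ∃ r, m = r + 1 := ⟨m - 1, by omega⟩
  let G : Finset (Fin (r + 1) ↪o V) := {u | IsHCopy χ s u}
  let colors (u : Fin (r + 1) ↪o V) : (Set.Iio p → C) × C :=
    (fun i => χ (u i) (u p), χ (u p) (u q))
  have card_colors : Fintype.card ((Set.Iio p → C) × C) = Fintype.card C ^ ((p : ℕ) + 1) := by
    simp [pow_succ]
  have hG : (Fintype.card V).choose r * Fintype.card ((Set.Iio p → C) × C) * (M - 1) < #G := by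
    rw [card_colors]
    refine choose_mul_mul_pred_lt_card_of_forall_exists_mem (by positivity) hV fun T hT => ?_
    obtain ⟨u, hu, huT⟩ := hM T hT
    exact ⟨.ofStrictMono u hu.strictMono, by simpa [G] using hu, huT⟩
  obtain ⟨a, haG, A, hA, hAa⟩ := exists_lt_card_forall_exists_eq_off p colors hG
  refine ⟨a, (mem_filter.1 haG).2, A, by omega, fun x hx => ?_⟩
  obtain ⟨u, -, rfl, hua, hcolors⟩ := hAa x hx
  have hq : u q = a q := hua q (by omega)
  exact {
    lt_left := fun hi => hua _ hi.ne ▸ u.strictMono hi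
    lt_right := fun hi => hua _ hi.ne' ▸ u.strictMono hi
    color_left := fun {i} hi => by
      have := congrFun (congrArg Prod.fst hcolors) ⟨i, hi⟩
      simpa only [colors, hua i hi.ne] using this
    color_next := fun {i} hi => by
      obtain rfl : i = q := by omega
      simpa only [colors, hq] using congrArg Prod.snd hcolors }

theorem exists_isHCopy_succ [LinearOrder C] (hpq : (p : ℕ) + 1 = q)
    (hM : ∀ ψ : Fin M → Fin M → C, ∃ u : Fin m → Fin M, IsHCopy ψ (p + 1) u)
    (hV : M ^ (m + 1) * Fintype.card C ^ ((p : ℕ) + 1) ≤ Fintype.card V) (χ : V → V → C) :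
    ∃ u : Fin m → V, IsHCopy χ (p + 2) u := by
  have exists_copy_mem (T : Finset V) (hT : M ≤ #T) :
      ∃ u : Fin m → V, IsHCopy χ (p + 1) u ∧ ∀ i, u i ∈ T := by
    let e := T.orderEmbOfCardLe hT
    obtain ⟨u, hu⟩ := hM fun x y => χ (e x) (e y)
    exact ⟨e ∘ u, hu.comp, fun i => T.orderEmbOfCardLe_mem hT (u i)⟩
  obtain ⟨a, ha, A, hMA, hA⟩ :=
    exists_isHCopy_forall_isTwin hpq hV fun T hT => exists_copy_mem T hT.ge
  obtain ⟨b, hb, hbA⟩ := exists_copy_mem A hMA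
  exact ha.exists_succ_of_forall_isTwin hb (fun j => hA _ (hbA j)) hpq

end Forcing

theorem hasHstCopy_iff {n N s t m : ℕ} (hm : s + t = m + 1) :
    HasHstCopy n N s t ↔
      ∀ χ : Fin N → Fin N → Fin n, ∃ u : Fin m → Fin N, IsHCopy χ s u := by
  obtain rfl : m = s + t - 1 := by omega
  refine forall_congr' fun χ => exists_congr fun u =>
    ⟨fun ⟨hmono, htriple, hpath⟩ => ⟨hmono, ?_, ?_, ?_⟩,
      fun h => ⟨h.strictMono, ?_, ?_⟩⟩
  · exact fun hij hjk hk => (htriple _ _ _ hij hjk hk).1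
  · exact fun hij hjk hk => (htriple _ _ _ hij hjk hk).2
  · rintro ⟨i, hi⟩ ⟨_, _⟩ ⟨_, _⟩ rfl rfl hk
    exact hpath i (by grind) (by grind)
  · exact fun i j k hij hjk hk => ⟨h.color_le hij hjk hk, h.color_eq hij hjk hk⟩
  · exact fun i hi _ => h.color_path_le rfl rfl (by grind)

theorem HasHstCopy.of_succ_left {n N s t : ℕ} (h : HasHstCopy n N (s + 1) t) :
    HasHstCopy n N s (t + 1) := by
  rw [hasHstCopy_iff (m := s + t) (by omega)] at h ⊢
  exact fun χ => (h χ).imp fun _ hu => hu.mono s.le_succ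

theorem HasHstCopy.pow_mul_pow {n M s t : ℕ} (hs : 1 ≤ s) (ht : 1 ≤ t) (hn : 1 ≤ n)
    (h : HasHstCopy n M s (t + 1)) : HasHstCopy n (M ^ (s + 1 + t) * n ^ s) (s + 1) t := by
  have : Nonempty (Fin n) := ⟨⟨0, hn⟩⟩
  rw [hasHstCopy_iff (m := s + t) (by omega)] at h ⊢
  obtain ⟨p, rfl⟩ : ∃ p, s = p + 1 := ⟨s - 1, by omega⟩
  refine exists_isHCopy_succ (p := ⟨p, by omega⟩) (q := ⟨p + 1, by omega⟩) rfl h ?_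
  rw [Fintype.card_fin, Fintype.card_fin, add_right_comm (p + 1)]

/-- `f(n; s, t) ≤ f(n; s−1, t+1)^(s+t) · n^(s−1)` for
`s ≥ 3`, `t ≥ 1`, `n ≥ 1`. -/
theorem stmt7 (s t n : ℕ) (hs : 3 ≤ s) (ht : 1 ≤ t) (hn : 1 ≤ n) :
    fFun n s t ≤ fFun n (s - 1) (t + 1) ^ (s + t) * n ^ (s - 1) := by
  obtain ⟨s, rfl⟩ : ∃ r, s = r + 1 := ⟨s - 1, by omega⟩
  rw [Nat.add_sub_cancel]
  rcases Set.eq_empty_or_nonempty {N | HasHstCopy n N s (t + 1)} with hempty | hne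
  · -- `sInf ∅ = 0`, so the bound can only hold here because `f(n; s, t)` is an `sInf ∅` as well.
    have hempty_succ : {N | HasHstCopy n N (s + 1) t} = ∅ :=
      Set.subset_eq_empty (fun _ hN => HasHstCopy.of_succ_left hN) hempty
    simp only [fFun, hempty_succ, Nat.sInf_empty, zero_le]
  · exact Nat.sInf_le (HasHstCopy.pow_mul_pow (by omega) ht hn (Nat.sInf_mem hne))
end

section
/- For all integers s ≥ 2 and t ≥ 1, there is a constant K = K(s,t) such that f(n; s, t) ≤ K · n^{C(s,t)} for all n ≥ 1, where C(s,t) = (s+t)^{s−1} − 3(s+t)^{s−2} + Σ_{i=0}^{s−3} (s−1−i)(s+t)^i. -/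
/-- The exponent `C(s,t) = (s+t)^(s−1) − 3(s+t)^(s−2) + Σ_{i=0}^{s−3} (s−1−i)(s+t)^i`. -/
def Cst (s t : ℕ) : ℕ :=
  (s + t) ^ (s - 1) - 3 * (s + t) ^ (s - 2) +
    ∑ i ∈ Finset.range (s - 2), (s - 1 - i) * (s + t) ^ i

/-!
Let `f` be such that any `f` vertices span a copy of `H_{s,t+1}`. A random `f`-tuple of vertices
spans one, so averaging produces a copy whose vertex `x_s = y_1` can be replaced by each of more
than `f * n ^ s` vertices. By pigeonhole, `f` of these replacements have the same colors to
`x_1, …, x_{s-1}` and to `y_2`; they span another copy of `H_{s,t+1}`, with vertices `x'_i` and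
`y'_j`. If `χ(x'_{s-1}, x'_s)` is at most all `χ(x_i, x'_s)`, then `x_1, …, x_{s-1}, x'_{s-1}, x'_s`
followed by `y'_2, …, y'_t` is a copy of `H_{s+1,t}`; otherwise `x'_1, …, x'_s, y_2` followed by
`y_3, …, y_{t+1}` is one.

For `s = 2`, label each vertex, for every `k < t`, with the least color bounding the first edge of
a non-increasing path with `k` edges from it. If `v < w` have the same labels, then by induction on
`k` the color `χ(v, w)` bounds the first edge of such a path from `w` for every `k < t`.
-/

section Copies

variable {V C : Type*} [LinearOrder V] [LinearOrder C]

/-- The condition `NonIncTriple` for arbitrary ordered sets of vertices and colors. -/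
def IsNonIncTriple (χ : V → V → C) (x y z : V) : Prop :=
  χ y z ≤ χ x y ∧ (χ x z = χ x y ∨ χ x z = χ y z)

/-- A non-increasing set, listed in increasing order. -/
def NonIncSet (χ : V → V → C) (l : List V) : Prop :=
  l.Pairwise (· < ·) ∧ l.Triplewise (IsNonIncTriple χ)

/-- `v :: l` is an increasing sequence of vertices whose consecutive edges have non-increasing
colors, all at most `c`. -/
def NonIncPath (χ : V → V → C) : C → V → List V → Prop
  | _, _, [] => True
  | c, v, w :: l => v < w ∧ χ v w ≤ c ∧ NonIncPath χ (χ v w) w l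

/-- A copy of `H_{s,t}` with `pre = [x_1, …, x_{s-1}]`, `v = x_s = y_1` and `post = [y_2, …, y_t]`,
for `s ≥ 2`. Bounding `χ v y_2` by the color of every edge `x_i v`, instead of the last one only,
changes nothing because `{x_1, …, x_s}` is non-increasing. -/
structure IsHst (χ : V → V → C) (pre : List V) (v : V) (post : List V) : Prop where
  nonIncSet : NonIncSet χ (pre ++ [v])
  nonIncPath : ∀ x ∈ pre, NonIncPath χ (χ x v) v post

/-- Any `N` vertices contain a copy of `H_{p+1,q+1}`. -/
def ForcesHst (χ : V → V → C) (N p q : ℕ) : Prop :=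
  ∀ B : Finset V, N ≤ B.card → ∃ pre v post, pre.length = p ∧ post.length = q ∧
    IsHst χ pre v post ∧ ∀ w ∈ pre ++ v :: post, w ∈ B

variable {χ : V → V → C} {c d : C} {v x y : V} {l pre post : List V}

lemma NonIncPath.mono (h : NonIncPath χ c v l) (hcd : c ≤ d) : NonIncPath χ d v l := by
  cases l with
  | nil => trivial
  | cons w l => exact ⟨h.1, h.2.1.trans hcd, h.2.2⟩

lemma NonIncPath.take (h : NonIncPath χ c v l) (k : ℕ) : NonIncPath χ c v (l.take k) := by
  induction l generalizing c v k with
  | nil => simpa only [List.take_nil] using h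
  | cons w l ih =>
    cases k with
    | zero => trivial
    | succ k => exact ⟨h.1, h.2.1, ih h.2.2 k⟩

lemma NonIncPath.pairwise_lt (h : NonIncPath χ c v l) : (v :: l).Pairwise (· < ·) := by
  rw [← List.isChain_iff_pairwise]
  induction l generalizing c v with
  | nil => exact List.isChain_singleton v
  | cons w l ih => exact List.isChain_cons_cons.2 ⟨h.1, ih h.2.2⟩

lemma NonIncPath.color_getElem_le (h : NonIncPath χ (χ x v) v l) (i : ℕ)
    (hi : i + 2 < (x :: v :: l).length) :
    χ (x :: v :: l)[i + 1] (x :: v :: l)[i + 2] ≤ χ (x :: v :: l)[i] (x :: v :: l)[i + 1] := by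
  induction i generalizing x v l with
  | zero =>
    cases l with
    | nil => simp at hi
    | cons w l => exact h.2.1
  | succ i ih =>
    cases l with
    | nil => simp at hi
    | cons w l => exact ih h.2.2 (by simpa using hi)

lemma nonIncSet_append_singleton :
    NonIncSet χ (l ++ [y]) ↔ NonIncSet χ l ∧ (∀ x ∈ l, x < y) ∧
      l.Pairwise fun x x' ↦ IsNonIncTriple χ x x' y := by
  simp only [NonIncSet, List.pairwise_append, List.triplewise_append, List.pairwise_singleton,
    List.triplewise_singleton, List.mem_singleton, forall_eq, true_and, implies_true]
  tauto

lemma NonIncSet.pairwise_last_le (h : NonIncSet χ (l ++ [x, v])) :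
    (l ++ [x, v]).Pairwise fun a b ↦ χ x v ≤ χ a b := by
  rw [List.append_cons, nonIncSet_append_singleton] at h
  obtain ⟨-, -, h_triple⟩ := h
  have le_color_last : ∀ a ∈ l ++ [x], χ x v ≤ χ a v := by
    intro a ha
    rcases List.mem_append.1 ha with ha | ha
    · obtain ⟨h_le, h_eq | h_eq⟩ :=
        (List.pairwise_append.1 h_triple).2.2 a ha x (List.mem_singleton_self x)
      · exact h_le.trans_eq h_eq.symm
      · exact h_eq.ge
    · rw [List.mem_singleton.1 ha]
  rw [List.append_cons, List.pairwise_append]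
  refine ⟨h_triple.imp_of_mem fun _ hb hab ↦ (le_color_last _ hb).trans hab.1,
    List.pairwise_singleton _ _, ?_⟩
  simpa only [List.mem_singleton, forall_eq] using le_color_last

lemma IsHst.take (h : IsHst χ pre v post) (k : ℕ) : IsHst χ pre v (post.take k) :=
  ⟨h.nonIncSet, fun x hx ↦ (h.nonIncPath x hx).take k⟩

lemma IsHst.lt_of_mem (h : IsHst χ pre v post) (hx : x ∈ pre) : x < v :=
  (nonIncSet_append_singleton.1 h.nonIncSet).2.1 x hx

lemma IsHst.pairwise_lt (h : IsHst χ pre v post) (hpre : pre ≠ []) :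
    (pre ++ v :: post).Pairwise (· < ·) := by
  obtain ⟨x, hx⟩ := List.exists_mem_of_ne_nil pre hpre
  have h_post := (h.nonIncPath x hx).pairwise_lt
  refine List.pairwise_append.2 ⟨(nonIncSet_append_singleton.1 h.nonIncSet).1.1, h_post, ?_⟩
  intro a ha b hb
  rcases List.mem_cons.1 hb with rfl | hb
  · exact h.lt_of_mem ha
  · exact (h.lt_of_mem ha).trans (List.rel_of_pairwise_cons h_post hb)

lemma IsHst.append_pre {pre' post' : List V} {x' v' : V} (hx : IsHst χ pre x' post)
    (hv : IsHst χ pre v' post) (h_color : ∀ x ∈ pre, χ x x' = χ x v')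
    (h' : IsHst χ (pre' ++ [x']) v' post') (h_le : ∀ x ∈ pre, χ x' v' ≤ χ x v') :
    IsHst χ (pre ++ [x']) v' post' := by
  have hx' : x' ∈ pre' ++ [x'] := List.mem_append_right _ (List.mem_singleton_self x')
  obtain ⟨-, h_lt, h_triple⟩ := nonIncSet_append_singleton.1 hv.nonIncSet
  constructor
  · refine nonIncSet_append_singleton.2 ⟨hx.nonIncSet, ?_, ?_⟩
    · simpa only [List.forall_mem_append, List.forall_mem_singleton] using
        ⟨h_lt, h'.lt_of_mem hx'⟩
    · refine List.pairwise_append.2 ⟨h_triple, List.pairwise_singleton _ _, ?_⟩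
      simp only [List.mem_singleton, forall_eq]
      exact fun x hx ↦ ⟨(h_le x hx).trans_eq (h_color x hx).symm, Or.inl (h_color x hx).symm⟩
  · simp only [List.forall_mem_append, List.forall_mem_singleton]
    exact ⟨fun x hx ↦ (h'.nonIncPath x' hx').mono (h_le x hx), h'.nonIncPath x' hx'⟩

lemma IsHst.append_post {pre' post' : List V} {x' v' : V}
    (h : ∀ w ∈ pre' ++ [x', v'], IsHst χ pre w (y :: post))
    (h_color : ∀ w ∈ pre' ++ [x', v'], χ w y = χ v' y)
    (h' : IsHst χ (pre' ++ [x']) v' post') (hx : x ∈ pre) (h_lt : χ x v' < χ x' v') :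
    IsHst χ (pre' ++ [x', v']) y post := by
  have h_set : NonIncSet χ (pre' ++ [x', v']) := by simpa using h'.nonIncSet
  obtain ⟨-, h_le, h_path⟩ := (h v' (by simp)).nonIncPath x hx
  constructor
  · refine nonIncSet_append_singleton.2 ⟨h_set, fun w hw ↦ ((h w hw).nonIncPath x hx).1, ?_⟩
    refine h_set.pairwise_last_le.imp_of_mem fun {a b} ha hb hab ↦ ⟨?_, Or.inr ?_⟩
    · calc χ b y = χ v' y := h_color b hb
        _ ≤ χ x v' := h_le
        _ ≤ χ x' v' := h_lt.le
        _ ≤ χ a b := hab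
    · rw [h_color a ha, h_color b hb]
  · intro w hw
    rwa [h_color w hw]

end Copies

section Counting

lemma card_mul_card_le_of_card_update_le {κ V : Type*} [Fintype κ] [DecidableEq κ] [Fintype V]
    [DecidableEq V] {L : ℕ} (S : Finset (κ → V)) (a : κ)
    (h : ∀ φ : κ → V, (Finset.univ.filter fun v ↦ Function.update φ a v ∈ S).card ≤ L) :
    S.card * Fintype.card V ≤ Fintype.card V ^ Fintype.card κ * L := by
  have h_count := Finset.card_mul_le_card_mul (s := S) (t := Finset.univ) (n := L)
    (m := Fintype.card V) (fun x φ ↦ ∃ v, Function.update φ a v = x) ?_ ?_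
  · simpa using h_count
  · intro x _
    rw [← Finset.card_univ, ← Finset.card_image_of_injective _ (Function.update_injective x a)]
    refine Finset.card_le_card (Finset.image_subset_iff.2 fun v _ ↦ ?_)
    exact (Finset.mem_bipartiteAbove _).2 ⟨Finset.mem_univ _, x a, by simp⟩
  · intro φ _
    refine (Finset.card_le_card ?_).trans
      ((Finset.card_image_le (f := Function.update φ a)).trans (h φ))
    intro x hx
    obtain ⟨hxS, v, rfl⟩ := (Finset.mem_bipartiteBelow _).1 hx
    exact Finset.mem_image_of_mem _ (by simpa using hxS)

lemma exists_lt_card_of_forall_injective {κ V J D : Type*} [Fintype κ] [DecidableEq κ]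
    [Fintype V] [Fintype J] {L : ℕ} (e : J → κ) (g : J → (κ → V) → D) (P : D → V → Prop)
    [∀ d, DecidablePred (P d)]
    (hg : ∀ j φ v, g j (Function.update φ (e j) v) = g j φ)
    (hP : ∀ φ : κ → V, Function.Injective φ → ∃ j, P (g j φ) (φ (e j)))
    (h_card : Fintype.card κ ^ 2 + Fintype.card J * L < Fintype.card V) :
    ∃ d, L < (Finset.univ.filter (P d)).card := by
  classical
  by_contra! hL
  let collisions (ab : κ × κ) : Finset (κ → V) :=
    Finset.univ.filter fun φ ↦ ab.1 ≠ ab.2 ∧ φ ab.1 = φ ab.2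
  let hits (j : J) : Finset (κ → V) := Finset.univ.filter fun φ ↦ P (g j φ) (φ (e j))
  have card_collisions (ab : κ × κ) :
      (collisions ab).card * Fintype.card V ≤ Fintype.card V ^ Fintype.card κ * 1 := by
    refine card_mul_card_le_of_card_update_le _ ab.1 fun φ ↦ Finset.card_le_one.2 ?_
    intro v hv w hw
    simp only [collisions, Finset.mem_filter, Finset.mem_univ, true_and,
      Function.update_self] at hv hw
    rw [hv.2, hw.2, Function.update_of_ne hv.1.symm, Function.update_of_ne hv.1.symm]
  have card_hits (j : J) :
      (hits j).card * Fintype.card V ≤ Fintype.card V ^ Fintype.card κ * L :=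
    card_mul_card_le_of_card_update_le _ (e j) fun φ ↦ by simpa [hits, hg] using hL (g j φ)
  have h_cover : (Finset.univ : Finset (κ → V)) ⊆
      Finset.univ.biUnion collisions ∪ Finset.univ.biUnion hits := by
    intro φ _
    by_cases hφ : Function.Injective φ
    · exact Finset.mem_union_right _ (by simpa [hits] using hP φ hφ)
    · obtain ⟨a, b, hab, hne⟩ := Function.not_injective_iff.1 hφ
      exact Finset.mem_union_left _ (by simpa [collisions] using ⟨a, b, hne, hab⟩)
  have h_total : Fintype.card V ^ Fintype.card κ * Fintype.card V ≤
      Fintype.card V ^ Fintype.card κ * (Fintype.card κ ^ 2 + Fintype.card J * L) :=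
    calc Fintype.card V ^ Fintype.card κ * Fintype.card V
        = (Finset.univ : Finset (κ → V)).card * Fintype.card V := by simp
      _ ≤ (∑ ab, (collisions ab).card + ∑ j, (hits j).card) * Fintype.card V :=
          Nat.mul_le_mul_right _ ((Finset.card_le_card h_cover).trans
            ((Finset.card_union_le _ _).trans
              (add_le_add Finset.card_biUnion_le Finset.card_biUnion_le)))
      _ ≤ ∑ _ab : κ × κ, Fintype.card V ^ Fintype.card κ * 1 +
            ∑ _j : J, Fintype.card V ^ Fintype.card κ * L := by
          rw [add_mul, Finset.sum_mul, Finset.sum_mul]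
          exact add_le_add (Finset.sum_le_sum fun ab _ ↦ card_collisions ab)
            (Finset.sum_le_sum fun j _ ↦ card_hits j)
      _ = Fintype.card V ^ Fintype.card κ * (Fintype.card κ ^ 2 + Fintype.card J * L) := by
          simp; ring
  exact h_card.not_ge (Nat.le_of_mul_le_mul_left h_total (pow_pos (by omega) _))

lemma exists_subset_le_card_forall_eq {ι V C : Type*} [Fintype ι] [Fintype C] {f : ℕ}
    (F : ι → V → C) (A : Finset V)
    (hA : Fintype.card C ^ Fintype.card ι * f < A.card) :
    ∃ B ⊆ A, f ≤ B.card ∧ ∀ i, ∀ v ∈ B, ∀ w ∈ B, F i v = F i w := by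
  classical
  obtain ⟨c, -, hc⟩ := Finset.exists_lt_card_fiber_of_mul_lt_card_of_maps_to
    (f := fun v i ↦ F i v) (fun v _ ↦ Finset.mem_univ _)
    (by simpa only [Finset.card_univ, Fintype.card_fun] using hA)
  refine ⟨_, Finset.filter_subset _ A, hc.le, fun i v hv w hw ↦ ?_⟩
  exact congrFun ((Finset.mem_filter.1 hv).2.trans (Finset.mem_filter.1 hw).2.symm) i

end Counting

section Recursion

variable {V C : Type*} [LinearOrder V] [LinearOrder C] {χ : V → V → C} {N M f p q L : ℕ}

lemma ForcesHst.mono (h : ForcesHst χ N p q) (hNM : N ≤ M) : ForcesHst χ M p q :=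
  fun B hB ↦ h B (hNM.trans hB)

lemma ForcesHst.pos (h : ForcesHst χ N p q) : 0 < N := by
  by_contra! hN
  obtain ⟨_, _, _, _, _, _, h_mem⟩ := h ∅ (by simpa using hN)
  exact Finset.notMem_empty _ (h_mem _ (List.mem_append_right _ List.mem_cons_self))

lemma ForcesHst.exists_indices (h : ForcesHst χ f p q) (hp : p ≠ 0) {φ : Fin f → V}
    (hφ : Function.Injective φ) :
    ∃ (i : Fin f) (a b : List (Fin f)), a.length = p ∧ b.length = q ∧ i ∉ a ∧ i ∉ b ∧
      IsHst χ (a.map φ) (φ i) (b.map φ) := by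
  obtain ⟨pre, v, post, h_pre, h_post, h_copy, h_mem⟩ :=
    h (Finset.univ.map ⟨φ, hφ⟩) (by simp)
  simp only [Finset.mem_map, Finset.mem_univ, true_and, Function.Embedding.coeFn_mk,
    List.forall_mem_append, List.forall_mem_cons] at h_mem
  obtain ⟨a, rfl⟩ : pre ∈ Set.range (List.map φ) := Set.range_list_map φ ▸ h_mem.1
  obtain ⟨b, rfl⟩ : post ∈ Set.range (List.map φ) := Set.range_list_map φ ▸ h_mem.2.2
  obtain ⟨i, rfl⟩ := h_mem.2.1
  rw [List.length_map] at h_pre h_post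
  have h_sorted := h_copy.pairwise_lt (by simpa [← List.length_eq_zero_iff, h_pre] using hp)
  refine ⟨i, a, b, h_pre, h_post, fun hi ↦ ?_, fun hi ↦ ?_, h_copy⟩
  · exact (h_copy.lt_of_mem (List.mem_map_of_mem hi)).ne rfl
  · exact (List.rel_of_pairwise_cons (List.pairwise_append.1 h_sorted).2.1
      (List.mem_map_of_mem hi)).ne rfl

lemma ForcesHst.exists_many_copies (h : ForcesHst χ f p q) (hp : p ≠ 0) {B : Finset V}
    (hB : f ^ 2 + f ^ (p + q + 1) * L < B.card) :
    ∃ pre post, pre.length = p ∧ post.length = q ∧ (∀ w ∈ pre ++ post, w ∈ B) ∧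
      ∃ A ⊆ B, L < A.card ∧ ∀ v ∈ A, IsHst χ pre v post := by
  classical
  let J := {j : Fin f × List.Vector (Fin f) p × List.Vector (Fin f) q //
    j.1 ∉ j.2.1.toList ∧ j.1 ∉ j.2.2.toList}
  have card_J : Fintype.card J ≤ f ^ (p + q + 1) := by
    refine (Fintype.card_subtype_le _).trans_eq ?_
    simp only [Fintype.card_prod, card_vector, Fintype.card_fin]
    ring
  obtain ⟨⟨pre, post⟩, h_many⟩ := exists_lt_card_of_forall_injective (V := B) (L := L)
    (fun j : J ↦ j.1.1) (fun j φ ↦ (j.1.2.1.toList.map φ, j.1.2.2.toList.map φ))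
    (fun d v ↦ d.1.length = p ∧ d.2.length = q ∧
      IsHst χ (d.1.map (↑)) (v : V) (d.2.map (↑)))
    (by
      rintro ⟨⟨i, a, b⟩, hia, hib⟩ φ v
      refine Prod.ext (List.map_congr_left fun k hk ↦ ?_) (List.map_congr_left fun k hk ↦ ?_)
      · exact Function.update_of_ne (ne_of_mem_of_not_mem hk hia) _ _
      · exact Function.update_of_ne (ne_of_mem_of_not_mem hk hib) _ _)
    (by
      intro φ hφ
      obtain ⟨i, a, b, ha, hb, hia, hib, h_copy⟩ :=
        h.exists_indices hp (Subtype.val_injective.comp hφ)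
      refine ⟨⟨⟨i, ⟨a, ha⟩, ⟨b, hb⟩⟩, hia, hib⟩, ?_⟩
      simpa [List.Vector.toList, ha, hb] using h_copy)
    (by
      rw [Fintype.card_fin, Fintype.card_coe]
      exact (Nat.add_le_add_left (Nat.mul_le_mul_right L card_J) _).trans_lt hB)
  obtain ⟨v, hv⟩ := Finset.card_pos.1 (Nat.zero_lt_of_lt h_many)
  obtain ⟨h_pre, h_post, -⟩ := (Finset.mem_filter.1 hv).2
  refine ⟨pre.map (↑), post.map (↑), by simpa using h_pre, by simpa using h_post, ?_,
    (Finset.univ.filter _).map (Function.Embedding.subtype _),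
    fun _ ↦ Finset.property_of_mem_map_subtype _, (Finset.card_map _).symm ▸ h_many,
    Finset.forall_mem_map.2 fun w hw ↦ (Finset.mem_filter.1 hw).2.2.2⟩
  rw [← List.map_append]
  exact List.forall_mem_map.2 fun w _ ↦ w.2

lemma ForcesHst.exists_of_homogeneous {pre post : List V} {y : V} {B : Finset V}
    (h : ForcesHst χ f (p + 1) (q + 1)) (hf : f ≤ B.card) (h_pre : pre.length = p + 1)
    (h_post : post.length = q) (h_copy : ∀ v ∈ B, IsHst χ pre v (y :: post))
    (h_color : ∀ x ∈ pre, ∀ v ∈ B, ∀ w ∈ B, χ x v = χ x w)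
    (hy : ∀ v ∈ B, ∀ w ∈ B, χ v y = χ w y) :
    ∃ pre' v' post', pre'.length = p + 2 ∧ post'.length = q ∧ IsHst χ pre' v' post' ∧
      ∀ w ∈ pre' ++ v' :: post', w ∈ B ∨ w ∈ pre ++ y :: post := by
  obtain ⟨pre', v', post', h_pre', h_post', h', h_mem⟩ := h B hf
  obtain rfl | ⟨pre', x', rfl⟩ := List.eq_nil_or_concat' pre'
  · simp at h_pre'
  rw [List.append_assoc, List.singleton_append] at h_mem
  have hx'B : x' ∈ B := h_mem x' (by simp)
  have hv'B : v' ∈ B := h_mem v' (by simp)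
  by_cases h_le : ∀ x ∈ pre, χ x' v' ≤ χ x v'
  · refine ⟨pre ++ [x'], v', post'.take q, by simpa using h_pre, by simp [h_post'], ?_, ?_⟩
    · exact (IsHst.append_pre (h_copy x' hx'B) (h_copy v' hv'B)
        (fun x hx ↦ h_color x hx x' hx'B v' hv'B) h' h_le).take q
    · grind [List.mem_of_mem_take]
  · push Not at h_le
    obtain ⟨x, hx, h_lt⟩ := h_le
    have h_mem' : ∀ w ∈ pre' ++ [x', v'], w ∈ B := by grind
    refine ⟨pre' ++ [x', v'], y, post, by simpa using h_pre', h_post, ?_, by grind⟩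
    exact IsHst.append_post (fun w hw ↦ h_copy w (h_mem' w hw))
      (fun w hw ↦ hy w (h_mem' w hw) v' hv'B) h' hx h_lt

theorem ForcesHst.succ [Fintype C] (h : ForcesHst χ f (p + 1) (q + 1)) :
    ForcesHst χ (2 * f ^ (p + q + 4) * Fintype.card C ^ (p + 2) + 1) (p + 2) q := by
  intro B hB
  obtain ⟨v₀, -⟩ : B.Nonempty := Finset.card_pos.1 (Nat.zero_lt_of_lt hB)
  have : Nonempty C := ⟨χ v₀ v₀⟩
  have h_large : f ^ 2 + f ^ (p + 1 + (q + 1) + 1) * (Fintype.card C ^ (p + 2) * f) < B.card := by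
    have h_sq : f ^ 2 ≤ f ^ (p + q + 4) * Fintype.card C ^ (p + 2) :=
      (Nat.pow_le_pow_right h.pos (by omega)).trans
        (Nat.le_mul_of_pos_right _ (pow_pos Fintype.card_pos _))
    calc _ = f ^ 2 + f ^ (p + q + 4) * Fintype.card C ^ (p + 2) := by ring
      _ ≤ 2 * f ^ (p + q + 4) * Fintype.card C ^ (p + 2) := by linarith
      _ < B.card := hB
  obtain ⟨pre, _ | ⟨y, post⟩, h_pre, h_post, h_mem, A, hAB, hA, h_copy⟩ :=
    h.exists_many_copies (Nat.succ_ne_zero p) h_large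
  · simp at h_post
  let F : Option (Fin pre.length) → V → C
    | none, v => χ v y
    | some i, v => χ (pre.get i) v
  obtain ⟨B', hB'A, hfB', hF⟩ := exists_subset_le_card_forall_eq F A (by simpa [h_pre] using hA)
  have h_color : ∀ x ∈ pre, ∀ v ∈ B', ∀ w ∈ B', χ x v = χ x w := by
    intro x hx
    obtain ⟨i, rfl⟩ := List.mem_iff_get.1 hx
    exact hF (some i)
  obtain ⟨pre', v', post', h_pre', h_post', h', h_mem'⟩ :=
    h.exists_of_homogeneous hfB' h_pre (by simpa using h_post) (fun v hv ↦ h_copy v (hB'A hv))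
      h_color (hF none)
  exact ⟨pre', v', post', h_pre', h_post', h',
    fun w hw ↦ (h_mem' w hw).elim (fun hwB' ↦ hAB (hB'A hwB')) (h_mem w)⟩

end Recursion

section BaseCase

variable {V C : Type*} [LinearOrder V] [LinearOrder C] {χ : V → V → C}

lemma exists_lt_forall_eq_of_isUpperSet {ι : Type*} [Fintype ι] [Fintype C] {B : Finset V}
    (S : ι → V → Set C) (hS : ∀ i v, IsUpperSet (S i v))
    (hB : (Fintype.card C + 1) ^ Fintype.card ι < B.card) :
    ∃ v ∈ B, ∃ w ∈ B, v < w ∧ ∀ i, S i v = S i w := by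
  classical
  have card_withTop : Fintype.card (WithTop C) = Fintype.card C + 1 := Fintype.card_option
  let label (v : V) (i : ι) : WithTop C := (Finset.univ.filter (· ∈ S i v)).min
  have mem_iff (i : ι) (v : V) (c : C) : c ∈ S i v ↔ label v i ≤ c := by
    refine ⟨fun hc ↦ Finset.min_le (by simpa using hc), fun hc ↦ ?_⟩
    obtain ⟨d, hd, hdc⟩ := WithTop.le_coe_iff.1 hc
    exact hS i v hdc (by simpa using Finset.mem_of_min hd)
  have eq_of_label_eq {v w : V} (h : label v = label w) (i : ι) : S i v = S i w := by
    ext c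
    rw [mem_iff, mem_iff, h]
  obtain ⟨v, hv, w, hw, hne, h_eq⟩ := Finset.exists_ne_map_eq_of_card_lt_of_maps_to
    (s := B) (t := (Finset.univ : Finset (ι → WithTop C))) (f := label)
    (by rwa [Finset.card_univ, Fintype.card_fun, card_withTop]) (fun _ _ ↦ Finset.mem_univ _)
  rcases hne.lt_or_gt with h_lt | h_lt
  · exact ⟨v, hv, w, hw, h_lt, eq_of_label_eq h_eq⟩
  · exact ⟨w, hw, v, hv, h_lt, eq_of_label_eq h_eq.symm⟩

/-- The colors bounding the first edge of some non-increasing path in `B` with `k` edges that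
starts at `v`. -/
def pathBounds (χ : V → V → C) (B : Finset V) (k : ℕ) (v : V) : Set C :=
  {c | ∃ l : List V, l.length = k ∧ (∀ w ∈ l, w ∈ B) ∧ NonIncPath χ c v l}

lemma isUpperSet_pathBounds (B : Finset V) (k : ℕ) (v : V) :
    IsUpperSet (pathBounds χ B k v) :=
  fun _ _ hcd ⟨l, h_length, h_mem, h_path⟩ ↦ ⟨l, h_length, h_mem, h_path.mono hcd⟩

lemma color_mem_pathBounds_succ {B : Finset V} {k : ℕ} {v w : V} (hw : w ∈ B) (hvw : v < w)
    (h : χ v w ∈ pathBounds χ B k w) : χ v w ∈ pathBounds χ B (k + 1) v := by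
  obtain ⟨l, h_length, h_mem, h_path⟩ := h
  exact ⟨w :: l, congrArg Nat.succ h_length, List.forall_mem_cons.2 ⟨hw, h_mem⟩,
    hvw, le_rfl, h_path⟩

theorem forcesHst_one [Fintype C] (χ : V → V → C) (q : ℕ) :
    ForcesHst χ ((Fintype.card C + 1) ^ q + 1) 1 q := by
  intro B hB
  obtain ⟨v, hv, w, hw, hvw, h_eq⟩ := exists_lt_forall_eq_of_isUpperSet
    (fun i : Fin q ↦ pathBounds χ B (i + 1)) (fun i ↦ isUpperSet_pathBounds B (i + 1))
    (by simpa using hB)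
  have color_mem : ∀ k ≤ q, χ v w ∈ pathBounds χ B k w := by
    intro k hk
    induction k with
    | zero => exact ⟨[], rfl, by simp, trivial⟩
    | succ k ih =>
      rw [← h_eq ⟨k, hk⟩]
      exact color_mem_pathBounds_succ hw hvw (ih (by omega))
  obtain ⟨l, h_length, h_mem, h_path⟩ := color_mem q le_rfl
  refine ⟨[v], w, l, rfl, h_length, ⟨?_, by simpa using h_path⟩, ?_⟩
  · simpa [NonIncSet] using hvw
  · simpa [hv, hw] using h_mem

end BaseCase

lemma Cst_two (q : ℕ) : Cst 2 (q + 1) = q := by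
  norm_num [Cst]
  omega

lemma Cst_add_two (r t : ℕ) : Cst (r + 2) t =
    (r + 2 + t - 3) * (r + 2 + t) ^ r +
      ∑ i ∈ Finset.range r, (r + 1 - i) * (r + 2 + t) ^ i := by
  rw [Cst, Nat.sub_mul, ← pow_succ']
  rfl

lemma Cst_succ (r t : ℕ) :
    Cst (r + 3) t = Cst (r + 2) (t + 1) * (r + t + 3) + (r + 2) := by
  rw [Cst_add_two, Cst_add_two, Finset.sum_range_succ', add_mul, Finset.sum_mul,
    show r + 1 + 2 + t = r + t + 3 by ring, show r + 2 + (t + 1) = r + t + 3 by ring]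
  have h_sum : ∑ i ∈ Finset.range r, (r + 1 + 1 - (i + 1)) * (r + t + 3) ^ (i + 1) =
      ∑ i ∈ Finset.range r, (r + 1 - i) * (r + t + 3) ^ i * (r + t + 3) :=
    Finset.sum_congr rfl fun i _ ↦ by rw [Nat.add_sub_add_right, pow_succ, mul_assoc]
  rw [h_sum, pow_succ, Nat.sub_zero, pow_zero]
  ring

universe u v

theorem exists_forcesHst_mul_pow (r q : ℕ) :
    ∃ K : ℕ, ∀ (V : Type u) (C : Type v) [LinearOrder V] [LinearOrder C] [Fintype C] [Nonempty C]
      (χ : V → V → C), ForcesHst χ (K * Fintype.card C ^ Cst (r + 2) (q + 1)) (r + 1) q := by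
  induction r generalizing q with
  | zero =>
    refine ⟨2 ^ q + 1, fun V C _ _ _ _ χ ↦ (forcesHst_one χ q).mono ?_⟩
    have h_pos : 0 < Fintype.card C := Fintype.card_pos
    calc (Fintype.card C + 1) ^ q + 1
        ≤ (2 * Fintype.card C) ^ q + Fintype.card C ^ q :=
          add_le_add (Nat.pow_le_pow_left (by omega) q) (Nat.pow_pos h_pos)
      _ = (2 ^ q + 1) * Fintype.card C ^ Cst (0 + 2) (q + 1) := by rw [Nat.zero_add, Cst_two]; ring
  | succ r ih =>
    obtain ⟨K, hK⟩ := ih (q + 1)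
    refine ⟨2 * K ^ (r + q + 4) + 1, fun V C _ _ _ _ χ ↦ (hK V C χ).succ.mono ?_⟩
    set n := Fintype.card C
    have h_pos : 0 < n := Fintype.card_pos
    have h_exponent :
        (n ^ Cst (r + 2) (q + 2)) ^ (r + q + 4) * n ^ (r + 2) = n ^ Cst (r + 3) (q + 1) := by
      rw [← pow_mul, ← pow_add, Cst_succ]
      ring_nf
    calc 2 * (K * n ^ Cst (r + 2) (q + 2)) ^ (r + q + 4) * n ^ (r + 2) + 1
        = 2 * K ^ (r + q + 4) * n ^ Cst (r + 3) (q + 1) + 1 := by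
          rw [← h_exponent, mul_pow]; ring
      _ ≤ (2 * K ^ (r + q + 4) + 1) * n ^ Cst (r + 3) (q + 1) := by
          rw [add_one_mul]
          exact Nat.add_le_add_left (Nat.pow_pos h_pos) _

lemma hasHstCopy_of_forcesHst {n N r q : ℕ}
    (h : ∀ χ : Fin N → Fin N → Fin n, ForcesHst χ N (r + 1) q) :
    HasHstCopy n N (r + 2) (q + 1) := by
  intro χ
  obtain ⟨pre, v, post, h_pre, h_post, h_copy, -⟩ := h χ Finset.univ (by simp)
  obtain rfl | ⟨init, x, rfl⟩ := List.eq_nil_or_concat' pre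
  · simp at h_pre
  have h_init : init.length = r := by simpa using h_pre
  have h_length : (init ++ [x] ++ v :: post).length = r + 2 + (q + 1) - 1 := by
    simp [h_init, h_post]; omega
  refine ⟨fun i ↦ (init ++ [x] ++ v :: post)[i], ?_, ?_, ?_⟩
  · intro i j hij
    exact List.pairwise_iff_getElem.1 (h_copy.pairwise_lt (by simp)) i j _ _ hij
  · intro i j k hij hjk hk
    have getElem_left (m : ℕ) (hm : m < r + 2) :
        (init ++ [x] ++ v :: post)[m] = (init ++ [x] ++ [v])[m]'(by simpa [h_init] using hm) := by
      grind
    have h_triple := List.triplewise_iff_getElem.1 h_copy.nonIncSet.2 i j k hij hjk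
      (by simpa [h_init] using hk)
    rwa [← getElem_left i (by omega), ← getElem_left j (by omega), ← getElem_left k hk] at h_triple
  · intro i hi hi2
    obtain ⟨j, rfl⟩ := Nat.exists_eq_add_of_le hi
    have h_path := (h_copy.nonIncPath x (by simp)).color_getElem_le j (by grind)
    have getElem_right (m : ℕ) (hm : m < (x :: v :: post).length) :
        (init ++ [x] ++ v :: post)[r + m]'(by grind) = (x :: v :: post)[m] := by
      grind
    rwa [← getElem_right, ← getElem_right, ← getElem_right] at h_path

/-- for all `s ≥ 2`, `t ≥ 1` there is `K = K(s,t)` with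
`f(n; s, t) ≤ K · n^(C(s,t))` for all `n ≥ 1`. -/
theorem stmt8 (s t : ℕ) (hs : 2 ≤ s) (ht : 1 ≤ t) :
    ∃ K : ℕ, ∀ n : ℕ, 1 ≤ n → fFun n s t ≤ K * n ^ Cst s t := by
  obtain ⟨r, rfl⟩ := Nat.exists_eq_add_of_le' hs
  obtain ⟨q, rfl⟩ := Nat.exists_eq_add_of_le' ht
  obtain ⟨K, hK⟩ := exists_forcesHst_mul_pow.{0, 0} r q
  refine ⟨K, fun n hn ↦ Nat.sInf_le (hasHstCopy_of_forcesHst fun χ ↦ ?_)⟩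
  have : NeZero n := ⟨Nat.one_le_iff_ne_zero.1 hn⟩
  simpa only [Fintype.card_fin] using hK _ _ χ
end

section
/- For every integer s ≥ 3 and every coloring χ of the pairs of {1,…,N} by colors in {1,…,n}, every non-increasing set of size 2^{2s−3} contains a lexicographic set of size s. -/
/-!
In every triple of a non-increasing set `S` the color of the long edge repeats the color of one
of the two short edges. Let `p` be the least and `q` the greatest element of `S`. Each `y ∈ S`
strictly between them satisfies `χ p y = χ p q` or `χ y q = χ p q`, so `S` is covered by the
elements joined to `p` in color `χ p q` and those joined to `q` in that color. A forward
lexicographic set inside the first part can be extended by `p`, a backward one inside the second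
part by `q`. Hence the thresholds forcing a forward set of size `a + 2` or a backward set of
size `b + 2` obey Pascal's recursion, and more than `(a + b).choose a` elements suffice; for
`a = b` this is a central binomial coefficient, at most a power of four.
-/

section Lexicographic

open Finset

variable {α β : Type*} {χ : α → α → β} {p q : α} {k : β} {m t : ℕ}

/-- Lexicographic sets of type (1): the color of a pair depends only on its smaller element. The
colors `c_i` are left implicit, so that no value has to be chosen at the greatest element. -/
def IsForwardLex [LT α] (χ : α → α → β) (T : Set α) : Prop :=
  ∀ ⦃x⦄, x ∈ T → ∀ ⦃y⦄, y ∈ T → ∀ ⦃z⦄, z ∈ T → x < y → x < z → χ x y = χ x z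

/-- Lexicographic sets of type (2): the color of a pair depends only on its larger element. The
colors `c_{j-1}` are left implicit, as in `IsForwardLex`. -/
def IsBackwardLex [LT α] (χ : α → α → β) (T : Set α) : Prop :=
  ∀ ⦃x⦄, x ∈ T → ∀ ⦃y⦄, y ∈ T → ∀ ⦃z⦄, z ∈ T → x < z → y < z → χ x z = χ y z

section Preorder

variable [Preorder α] {T : Set α}

theorem isForwardLex_pair (x y : α) : IsForwardLex χ {x, y} := by
  rintro u (rfl | rfl) v (rfl | rfl) w (rfl | rfl) <;> simp

theorem isBackwardLex_pair (x y : α) : IsBackwardLex χ {x, y} := by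
  rintro u (rfl | rfl) v (rfl | rfl) w (rfl | rfl) <;> simp

theorem IsForwardLex.insert (hT : IsForwardLex χ T) (hlt : ∀ y ∈ T, p < y)
    (hk : ∀ y ∈ T, χ p y = k) : IsForwardLex χ (insert p T) := by
  have mem_of_lt {x y : α} (hx : x ∈ Insert.insert p T) (hy : y ∈ Insert.insert p T)
      (hxy : x < y) : y ∈ T := by
    refine hy.resolve_left ?_
    rintro rfl
    exact hx.elim hxy.ne fun hx => (hlt x hx).asymm hxy
  intro x hx y hy z hz hxy hxz
  have hyT := mem_of_lt hx hy hxy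
  have hzT := mem_of_lt hx hz hxz
  rcases hx with rfl | hx
  · rw [hk y hyT, hk z hzT]
  · exact hT hx hyT hzT hxy hxz

theorem IsBackwardLex.insert (hT : IsBackwardLex χ T) (hlt : ∀ x ∈ T, x < q)
    (hk : ∀ x ∈ T, χ x q = k) : IsBackwardLex χ (insert q T) :=
  fun _ hx _ hy _ hz hxz hyz =>
    IsForwardLex.insert (α := αᵒᵈ) (χ := fun x y => χ y x) (p := q)
      (fun _ hz _ hx _ hy hxz hyz => hT hx hy hz hxz hyz) hlt hk hz hx hy hxz hyz

theorem IsForwardLex.exists_colors {e : Fin (t + 1) → α} (he : StrictMono e)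
    (h : IsForwardLex χ (Set.range e)) :
    ∃ c : Fin (t + 1) → β, ∀ i j, i < j → χ (e i) (e j) = c i :=
  ⟨fun i => χ (e i) (e (Fin.last t)), fun i j hij =>
    h ⟨i, rfl⟩ ⟨j, rfl⟩ ⟨Fin.last t, rfl⟩ (he hij) (he (hij.trans_le j.le_last))⟩

theorem IsBackwardLex.exists_colors {e : Fin (t + 1) → α} (he : StrictMono e)
    (h : IsBackwardLex χ (Set.range e)) :
    ∃ c : Fin (t + 1) → β, ∀ i j, i < j →
      χ (e i) (e j) = c ⟨(j : ℕ) - 1, lt_of_le_of_lt (Nat.sub_le _ _) j.isLt⟩ := by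
  -- Addition in `Fin` wraps around: the unconstrained last color is `χ (e 0) (e 0)`.
  refine ⟨fun k => χ (e 0) (e (k + 1)), fun i j hij => ?_⟩
  have hj : 0 < j := (Fin.zero_le i).trans_lt hij
  have pred_add_one :
      (⟨(j : ℕ) - 1, lt_of_le_of_lt (Nat.sub_le _ _) j.isLt⟩ : Fin (t + 1)) + 1 = j := by
    obtain ⟨j, rfl⟩ := Fin.exists_succ_eq.mpr hj.ne'
    exact Fin.coeSucc_eq_succ
  simp only [pred_add_one]
  exact h ⟨i, rfl⟩ ⟨0, rfl⟩ ⟨j, rfl⟩ (he hij) (he hj)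

end Preorder

variable [LinearOrder α] {S : Finset α}

theorem exists_card_le_card_filter_add_card_filter [DecidableEq β]
    (hχ : ∀ x ∈ S, ∀ y ∈ S, ∀ z ∈ S, x < y → y < z → χ x z = χ x y ∨ χ x z = χ y z)
    (hS : 1 < #S) :
    ∃ p ∈ S, ∃ q ∈ S, ∃ k, #S ≤ #{y ∈ S | p < y ∧ χ p y = k} + #{x ∈ S | x < q ∧ χ x q = k} := by
  have hne : S.Nonempty := card_pos.mp (zero_lt_one.trans hS)
  obtain ⟨p, q, hp, hq, hpq⟩ : ∃ p q, IsLeast (S : Set α) p ∧ IsGreatest (S : Set α) q ∧ p < q :=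
    ⟨_, _, S.isLeast_min' hne, S.isGreatest_max' hne, S.min'_lt_max'_of_card hS⟩
  refine ⟨p, hp.1, q, hq.1, χ p q, (card_le_card fun y hy => ?_).trans (card_union_le _ _)⟩
  simp only [mem_union, mem_filter]
  rcases (hp.2 hy).eq_or_lt with rfl | hpy
  · exact Or.inr ⟨hy, hpq, rfl⟩
  rcases (hq.2 hy).eq_or_lt with rfl | hyq
  · exact Or.inl ⟨hy, hpq, rfl⟩
  exact (hχ p hp.1 y hy q hq.1 hpy hyq).imp
    (fun h => ⟨hy, hpy, h.symm⟩) (fun h => ⟨hy, hyq, h.symm⟩)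

theorem exists_isForwardLex_insert [DecidableEq β] (hp : p ∈ S) :
    (∃ T ⊆ {y ∈ S | p < y ∧ χ p y = k}, #T = m ∧ IsForwardLex χ (T : Set α)) →
      ∃ T ⊆ S, #T = m + 1 ∧ IsForwardLex χ (T : Set α) := by
  rintro ⟨T, hT, rfl, hlex⟩
  have hlt : ∀ y ∈ T, p < y := fun y hy => (mem_filter.mp (hT hy)).2.1
  have hk : ∀ y ∈ T, χ p y = k := fun y hy => (mem_filter.mp (hT hy)).2.2
  refine ⟨insert p T, insert_subset hp (hT.trans (filter_subset _ _)),
    card_insert_of_notMem fun h => (hlt p h).false, ?_⟩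
  rw [coe_insert]
  exact hlex.insert hlt hk

theorem exists_isBackwardLex_insert [DecidableEq β] (hq : q ∈ S) :
    (∃ T ⊆ {x ∈ S | x < q ∧ χ x q = k}, #T = m ∧ IsBackwardLex χ (T : Set α)) →
      ∃ T ⊆ S, #T = m + 1 ∧ IsBackwardLex χ (T : Set α) := by
  rintro ⟨T, hT, rfl, hlex⟩
  have hlt : ∀ x ∈ T, x < q := fun x hx => (mem_filter.mp (hT hx)).2.1
  have hk : ∀ x ∈ T, χ x q = k := fun x hx => (mem_filter.mp (hT hx)).2.2
  refine ⟨insert q T, insert_subset hq (hT.trans (filter_subset _ _)),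
    card_insert_of_notMem fun h => (hlt q h).false, ?_⟩
  rw [coe_insert]
  exact hlex.insert hlt hk

theorem exists_isForwardLex_or_isBackwardLex {a b : ℕ}
    (hχ : ∀ x ∈ S, ∀ y ∈ S, ∀ z ∈ S, x < y → y < z → χ x z = χ x y ∨ χ x z = χ y z)
    (hS : (a + b).choose a < #S) :
    (∃ T ⊆ S, #T = a + 2 ∧ IsForwardLex χ (T : Set α)) ∨
      ∃ T ⊆ S, #T = b + 2 ∧ IsBackwardLex χ (T : Set α) := by
  classical
  induction a generalizing b S with
  | zero =>
    obtain ⟨x, hx, y, hy, hxy⟩ := one_lt_card.mp (by simpa using hS)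
    exact Or.inl ⟨{x, y}, insert_subset hx (singleton_subset_iff.mpr hy), card_pair hxy,
      by simpa only [coe_pair] using isForwardLex_pair x y⟩
  | succ a iha =>
    induction b generalizing S with
    | zero =>
      obtain ⟨x, hx, y, hy, hxy⟩ := one_lt_card.mp (by simpa using hS)
      exact Or.inr ⟨{x, y}, insert_subset hx (singleton_subset_iff.mpr hy), card_pair hxy,
        by simpa only [coe_pair] using isBackwardLex_pair x y⟩
    | succ b ihb =>
      have hcard : 1 < #S := lt_of_le_of_lt (Nat.choose_pos (Nat.le_add_right _ _)) hS
      obtain ⟨p, hp, q, hq, k, card_le⟩ := exists_card_le_card_filter_add_card_filter hχ hcard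
      set A := {y ∈ S | p < y ∧ χ p y = k}
      set B := {x ∈ S | x < q ∧ χ x q = k}
      have hAS : A ⊆ S := filter_subset _ _
      have hBS : B ⊆ S := filter_subset _ _
      have pascal : (a + 1 + (b + 1)).choose (a + 1) =
          (a + (b + 1)).choose a + (a + 1 + b).choose (a + 1) := by
        rw [show a + 1 + b = a + (b + 1) by ring, ← Nat.choose_succ_succ',
          show a + (b + 1) + 1 = a + 1 + (b + 1) by ring]
      have large : (a + (b + 1)).choose a < #A ∨ (a + 1 + b).choose (a + 1) < #B := by omega
      rcases large with hA | hB
      · exact (iha (fun x hx y hy z hz => hχ x (hAS hx) y (hAS hy) z (hAS hz)) hA).imp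
          (exists_isForwardLex_insert hp) (fun ⟨T, hT, h⟩ => ⟨T, hT.trans hAS, h⟩)
      · exact (ihb (fun x hx y hy z hz => hχ x (hBS hx) y (hBS hy) z (hBS hz)) hB).imp
          (fun ⟨T, hT, h⟩ => ⟨T, hT.trans hBS, h⟩) (exists_isBackwardLex_insert hq)

theorem centralBinom_lt_two_pow (t : ℕ) : t.centralBinom < 2 ^ (2 * t + 1) :=
  calc
    t.centralBinom ≤ 4 ^ t := t.centralBinom_le_four_pow
    _ = 2 ^ (2 * t) := by rw [pow_mul]; norm_num
    _ < 2 ^ (2 * t + 1) := Nat.pow_lt_pow_succ one_lt_two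

theorem stmt9_general [Fintype α]
    (hχ : ∀ x y z : α, x < y → y < z → χ x z = χ x y ∨ χ x z = χ y z)
    (ht : t.centralBinom < Fintype.card α) :
    ∃ e : Fin (t + 2) → α, StrictMono e ∧
      ∃ c : Fin (t + 2) → β,
        ((∀ i j : Fin (t + 2), i < j → χ (e i) (e j) = c i) ∨
         (∀ i j : Fin (t + 2), i < j →
            χ (e i) (e j) = c ⟨(j : ℕ) - 1, lt_of_le_of_lt (Nat.sub_le _ _) j.isLt⟩)) := by
  have hcard : (t + t).choose t < #(univ : Finset α) := by
    rwa [← two_mul, ← Nat.centralBinom_eq_two_mul_choose, card_univ]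
  rcases exists_isForwardLex_or_isBackwardLex (fun x _ y _ z _ => hχ x y z) hcard with
    ⟨T, -, hT, hlex⟩ | ⟨T, -, hT, hlex⟩
  · rw [← T.range_orderEmbOfFin hT] at hlex
    obtain ⟨c, hc⟩ := hlex.exists_colors (T.orderEmbOfFin hT).strictMono
    exact ⟨_, (T.orderEmbOfFin hT).strictMono, c, Or.inl hc⟩
  · rw [← T.range_orderEmbOfFin hT] at hlex
    obtain ⟨c, hc⟩ := hlex.exists_colors (T.orderEmbOfFin hT).strictMono
    exact ⟨_, (T.orderEmbOfFin hT).strictMono, c, Or.inr hc⟩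

end Lexicographic

/-- for `s ≥ 3`, every non-increasing set of size `2^(2s−3)`
(given by a strictly monotone `g` all of whose triples are non-increasing) contains a
lexicographic set of size `s`: a subset (selected by a strictly monotone
`e : Fin s → Fin (2^(2s−3))`) for which there exist colors `c_1, …, c_{s−1}` with either
`χ(x_i, x_j) = c_i` for all `i < j`, or `χ(x_i, x_j) = c_{j−1}` for all `i < j`.
In 0-indexed form the colors are `c : Fin s → Fin n` (the value at the last index is
unconstrained), the forward condition reads `χ (x i) (x j) = c i` and the backward
condition reads `χ (x i) (x j) = c (j − 1)`. -/
theorem stmt9 (s N n : ℕ) (hs : 3 ≤ s) (χ : Fin N → Fin N → Fin n)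
    (g : Fin (2 ^ (2 * s - 3)) → Fin N) (hg : StrictMono g)
    (hni : ∀ i j k : Fin (2 ^ (2 * s - 3)), i < j → j < k →
      NonIncTriple χ (g i) (g j) (g k)) :
    ∃ e : Fin s → Fin (2 ^ (2 * s - 3)), StrictMono e ∧
      ∃ c : Fin s → Fin n,
        ((∀ i j : Fin s, i < j → χ (g (e i)) (g (e j)) = c i) ∨
         (∀ i j : Fin s, i < j →
            χ (g (e i)) (g (e j)) = c ⟨(j : ℕ) - 1, lt_of_le_of_lt (Nat.sub_le _ _) j.isLt⟩)) := by
  obtain ⟨t, rfl⟩ := Nat.exists_eq_add_of_le' (Nat.le_of_succ_le hs)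
  exact stmt9_general (fun i j k hij hjk => (hni i j k hij hjk).2)
    ((centralBinom_lt_two_pow t).trans_eq (Fintype.card_fin _).symm)
end

section
/- For all integers m, t ≥ 1, every red/blue edge-coloring of the complete graph on {1,…,N}, where N = (R(K_t,K_t) − 1)·m^2 + 1, contains a monochromatic t-clique chain consisting of m cliques. -/
/-- `χ i j` is the color of the edge `{i, j}` for `i < j`: `true` = red, `false` = blue.
The classical Ramsey property: every red/blue coloring of `K_N` contains a red `K_s`
or a blue `K_n`. -/
def HasRamseyProp (s n N : ℕ) : Prop :=
  ∀ χ : Fin N → Fin N → Bool,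
    (∃ f : Fin s → Fin N, StrictMono f ∧ ∀ i j : Fin s, i < j → χ (f i) (f j) = true) ∨
    (∃ f : Fin n → Fin N, StrictMono f ∧ ∀ i j : Fin n, i < j → χ (f i) (f j) = false)

/-- The classical Ramsey number `R(K_s, K_n)`. -/
noncomputable def ramsey (s n : ℕ) : ℕ := sInf {N | HasRamseyProp s n N}

/-- A `b`-monochromatic `t`-clique chain with `m` cliques: cliques `X_0, …, X_{m−1}`,
each of size `t`, all of whose internal edges have color `b`, such that consecutive
cliques intersect in exactly one vertex, which is the largest element of the earlier
clique and the smallest element of the later one. -/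
def IsCliqueChain {N : ℕ} (χ : Fin N → Fin N → Bool) (b : Bool) (t m : ℕ)
    (X : Fin m → Finset (Fin N)) : Prop :=
  (∀ i : Fin m, (X i).card = t) ∧
  (∀ i : Fin m, ∀ a ∈ X i, ∀ c ∈ X i, a < c → χ a c = b) ∧
  (∀ (i : ℕ) (h1 : i < m) (h2 : i + 1 < m),
    (X ⟨i, h1⟩ ∩ X ⟨i + 1, h2⟩).card = 1 ∧
    ∃ z : Fin N, z ∈ X ⟨i, h1⟩ ∧ z ∈ X ⟨i + 1, h2⟩ ∧
      (∀ a ∈ X ⟨i, h1⟩, a ≤ z) ∧ (∀ c ∈ X ⟨i + 1, h2⟩, z ≤ c))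

/-!
Call `(u, v)` a `b`-edge if `u` and `v` are the extreme elements of a `b`-monochromatic clique of
the prescribed size; clique chains are exactly the walks along such edges. Without a red walk of
length `k` or a blue walk of length `l`, label each vertex by the lengths of the longest red and
blue walks ending there. Some label is shared by at least `R` vertices, where `R` is the Ramsey
number, and these contain a monochromatic clique. But the label increases strictly from the smallest
to the largest element of that clique, a contradiction.
-/

section

open Finset

section Order

variable {α : Type*}

theorem inter_eq_singleton_of_isGreatest_of_isLeast [PartialOrder α] {s t : Set α} {z : α}
    (hs : IsGreatest s z) (ht : IsLeast t z) : s ∩ t = {z} :=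
  Set.eq_singleton_iff_unique_mem.2
    ⟨⟨hs.1, ht.1⟩, fun _ hx => le_antisymm (hs.2 hx.1) (ht.2 hx.2)⟩

theorem exists_fin_lt_of_forall_relSeries_length_ne {r : SetRel α α} {m : ℕ}
    (h : ∀ p : RelSeries r, p.length ≠ m) :
    ∃ f : α → Fin m, ∀ ⦃a b⦄, (a, b) ∈ r → f a < f b := by
  classical
  let EndsWalk (a : α) (k : ℕ) : Prop := ∃ p : RelSeries r, p.length = k ∧ p.last = a
  let rank (a : α) : ℕ := Nat.findGreatest (EndsWalk a) m
  have rank_spec (a : α) : EndsWalk a (rank a) :=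
    Nat.findGreatest_spec (Nat.zero_le m) ⟨.singleton r a, rfl, rfl⟩
  have rank_lt (a : α) : rank a < m := by
    obtain ⟨p, hp, -⟩ := rank_spec a
    exact (Nat.findGreatest_le m).lt_of_ne fun heq => h p (hp.trans heq)
  refine ⟨fun a => ⟨rank a, rank_lt a⟩, fun a b hab => ?_⟩
  obtain ⟨p, hp, rfl⟩ := rank_spec a
  exact Nat.le_findGreatest (rank_lt _) ⟨p.snoc b hab, by simp [hp], p.last_snoc b hab⟩

end Order

section MonoClique

variable {α β κ : Type*} [LinearOrder α] [LinearOrder β] {χ : α → α → κ} {b : κ} {k : ℕ}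
  {A B : Finset α}

/-- `A` contains a clique with `k` vertices all of whose edges have color `b`. As in
`HasRamseyProp`, the color of the edge `{x, y}` is `χ x y` for `x < y`, and the other values of `χ`
are ignored. -/
def ContainsMonoClique (χ : α → α → κ) (b : κ) (k : ℕ) (A : Finset α) : Prop :=
  ∃ S ⊆ A, #S = k ∧ ∀ x ∈ S, ∀ y ∈ S, x < y → χ x y = b

namespace ContainsMonoClique

theorem mono (h : ContainsMonoClique χ b k A) (hAB : A ⊆ B) : ContainsMonoClique χ b k B := by
  obtain ⟨S, hSA, hS⟩ := h
  exact ⟨S, hSA.trans hAB, hS⟩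

theorem map {A : Finset β} (e : β ↪o α)
    (h : ContainsMonoClique (fun x y => χ (e x) (e y)) b k A) :
    ContainsMonoClique χ b k (A.map e.toEmbedding) := by
  obtain ⟨S, hSA, hcard, hS⟩ := h
  refine ⟨S.map e.toEmbedding, map_subset_map.2 hSA, by rw [card_map, hcard], ?_⟩
  simpa only [forall_mem_map, RelEmbedding.coe_toEmbedding, e.lt_iff_lt] using hS

theorem succ_of_filter [DecidableEq κ] {a : α} (ha : a ∈ A)
    (h : ContainsMonoClique χ b k {x ∈ A | a < x ∧ χ a x = b}) :
    ContainsMonoClique χ b (k + 1) A := by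
  obtain ⟨S, hSA, hcard, hS⟩ := h
  have mem_S {x : α} (hx : x ∈ S) : x ∈ A ∧ a < x ∧ χ a x = b := mem_filter.1 (hSA hx)
  have ha_notMem : a ∉ S := fun haS => (mem_S haS).2.1.false
  refine ⟨insert a S, insert_subset ha fun x hx => (mem_S hx).1,
    by rw [card_insert_of_notMem ha_notMem, hcard], fun x hx y hy hxy => ?_⟩
  rcases mem_insert.1 hx with rfl | hxS <;> rcases mem_insert.1 hy with rfl | hyS
  · exact absurd hxy (lt_irrefl _)
  · exact (mem_S hyS).2.2
  · exact absurd hxy (mem_S hxS).2.1.not_gt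
  · exact hS x hxS y hyS hxy

end ContainsMonoClique

theorem exists_strictMono_iff_containsMonoClique_univ [Fintype α] :
    (∃ f : Fin k → α, StrictMono f ∧ ∀ i j, i < j → χ (f i) (f j) = b) ↔
      ContainsMonoClique χ b k univ := by
  constructor
  · rintro ⟨f, hf, hχ⟩
    have hk : ContainsMonoClique (fun i j => χ (f i) (f j)) b k univ :=
      ⟨univ, subset_rfl, card_fin k, fun i _ j _ => hχ i j⟩
    exact (hk.map (.ofStrictMono f hf)).mono (subset_univ _)
  · rintro ⟨S, -, hcard, hS⟩
    let e := S.orderEmbOfFin hcard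
    exact ⟨e, e.strictMono, fun i j hij => hS _ (S.orderEmbOfFin_mem hcard i) _
      (S.orderEmbOfFin_mem hcard j) (e.strictMono hij)⟩

end MonoClique

section Ramsey

variable {s n M K N : ℕ}

theorem hasRamseyProp_iff_containsMonoClique :
    HasRamseyProp s n N ↔ ∀ χ : Fin N → Fin N → Bool,
      ContainsMonoClique χ true s univ ∨ ContainsMonoClique χ false n univ := by
  simp only [HasRamseyProp, exists_strictMono_iff_containsMonoClique_univ]

namespace HasRamseyProp

theorem containsMonoClique {α : Type*} [LinearOrder α] (h : HasRamseyProp s n N)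
    (χ : α → α → Bool) {A : Finset α} (hA : N ≤ #A) :
    ContainsMonoClique χ true s A ∨ ContainsMonoClique χ false n A := by
  let e := A.orderEmbOfCardLe hA
  have he : univ.map e.toEmbedding ⊆ A :=
    forall_mem_map.2 fun i _ => A.orderEmbOfCardLe_mem hA i
  exact (hasRamseyProp_iff_containsMonoClique.1 h fun i j => χ (e i) (e j)).imp
    (fun hc => (hc.map e).mono he) (fun hc => (hc.map e).mono he)

theorem mono (h : HasRamseyProp s n M) (hMN : M ≤ N) : HasRamseyProp s n N :=
  hasRamseyProp_iff_containsMonoClique.2 fun χ =>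
    h.containsMonoClique χ (hMN.trans_eq (card_fin N).symm)

theorem succ_succ (hM : HasRamseyProp s (n + 1) M) (hK : HasRamseyProp (s + 1) n K)
    (h : 0 < M + K) : HasRamseyProp (s + 1) (n + 1) (M + K) := by
  obtain ⟨L, hL⟩ : ∃ L, M + K = L + 1 := Nat.exists_eq_add_one.2 h
  rw [hL, hasRamseyProp_iff_containsMonoClique]
  intro χ
  let nbrs (b : Bool) : Finset (Fin (L + 1)) := {x | 0 < x ∧ χ 0 x = b}
  have card_nbrs : #(nbrs true) + #(nbrs false) = L := by
    have card_pos_vertices : #({x | 0 < x} : Finset (Fin (L + 1))) = L := by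
      rw [filter_lt_eq_Ioi, Fin.card_Ioi, Fin.val_zero, Nat.add_sub_cancel, Nat.sub_zero]
    simpa only [nbrs, filter_filter, Bool.not_eq_true, card_pos_vertices] using
      card_filter_add_card_filter_not (s := ({x | 0 < x} : Finset (Fin (L + 1)))) (χ 0 · = true)
  obtain hred | hblue : M ≤ #(nbrs true) ∨ K ≤ #(nbrs false) := by lia
  · exact (hM.containsMonoClique χ hred).imp (.succ_of_filter (mem_univ 0))
      (.mono · (subset_univ _))
  · exact (hK.containsMonoClique χ hblue).imp (.mono · (subset_univ _))
      (.succ_of_filter (mem_univ 0))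

end HasRamseyProp

theorem hasRamseyProp_choose (s n : ℕ) : HasRamseyProp s n ((s + n).choose s) := by
  induction s generalizing n with
  | zero =>
    exact hasRamseyProp_iff_containsMonoClique.2 fun _ => .inl ⟨∅, by simp⟩
  | succ s ihs =>
    induction n with
    | zero => exact hasRamseyProp_iff_containsMonoClique.2 fun _ => .inr ⟨∅, by simp⟩
    | succ n ihn =>
      have pascal : (s + 1 + (n + 1)).choose (s + 1) =
          (s + (n + 1)).choose s + (s + 1 + n).choose (s + 1) := by
        rw [← add_assoc, Nat.choose_succ_succ, add_right_comm s 1 n, add_assoc s n 1]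
      rw [pascal]
      exact (ihs (n + 1)).succ_succ ihn (Nat.add_pos_left (Nat.choose_pos (by lia)) _)

theorem hasRamseyProp_ramsey (s n : ℕ) : HasRamseyProp s n (ramsey s n) :=
  Nat.sInf_mem (s := {N | HasRamseyProp s n N}) ⟨_, hasRamseyProp_choose s n⟩

end Ramsey

section CliqueRel

variable {α κ : Type*} [LinearOrder α] {b : κ} {t : ℕ}

/-- The relation between the smallest and the largest element of a `b`-monochromatic `t`-clique.
A `RelSeries` of length `m` for this relation is a `b`-monochromatic `t`-clique chain with `m`
cliques, recorded by the `m + 1` endpoints of its cliques. -/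
def cliqueRel (χ : α → α → κ) (b : κ) (t : ℕ) : SetRel α α :=
  {p | ∃ S : Finset α, #S = t ∧ (∀ x ∈ S, ∀ y ∈ S, x < y → χ x y = b) ∧
    IsLeast (S : Set α) p.1 ∧ IsGreatest (S : Set α) p.2}

theorem ContainsMonoClique.exists_mem_cliqueRel {χ : α → α → κ} {A : Finset α}
    (h : ContainsMonoClique χ b t A) (ht : 0 < t) :
    ∃ u ∈ A, ∃ v ∈ A, (u, v) ∈ cliqueRel χ b t := by
  obtain ⟨S, hSA, hcard, hS⟩ := h
  have hne : S.Nonempty := card_pos.1 (hcard ▸ ht)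
  exact ⟨S.min' hne, hSA (S.min'_mem hne), S.max' hne, hSA (S.max'_mem hne),
    S, hcard, hS, S.isLeast_min' hne, S.isGreatest_max' hne⟩

theorem exists_isCliqueChain_of_relSeries {N : ℕ} {χ : Fin N → Fin N → Bool} {b : Bool}
    (p : RelSeries (cliqueRel χ b t)) :
    ∃ X : Fin p.length → Finset (Fin N), IsCliqueChain χ b t p.length X := by
  choose X hcard hχ hleast hgreatest using p.step
  refine ⟨X, hcard, hχ, fun i hi hi' => ?_⟩
  have hz : IsGreatest (X ⟨i, hi⟩ : Set (Fin N)) (p ⟨i + 1, by lia⟩) := hgreatest ⟨i, hi⟩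
  have hz' : IsLeast (X ⟨i + 1, hi'⟩ : Set (Fin N)) (p ⟨i + 1, by lia⟩) := hleast ⟨i + 1, hi'⟩
  have hinter : X ⟨i, hi⟩ ∩ X ⟨i + 1, hi'⟩ = {p ⟨i + 1, by lia⟩} :=
    mod_cast inter_eq_singleton_of_isGreatest_of_isLeast hz hz'
  exact ⟨card_eq_one.2 ⟨_, hinter⟩, _, hz.1, hz'.1, hz.2, hz'.2⟩

theorem HasRamseyProp.exists_relSeries_cliqueRel [Fintype α] {s n k l M : ℕ}
    (hM : HasRamseyProp s n (M + 1)) (hs : 0 < s) (hn : 0 < n)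
    (hα : k * l * M < Fintype.card α) (χ : α → α → Bool) :
    (∃ p : RelSeries (cliqueRel χ true s), p.length = k) ∨
      ∃ p : RelSeries (cliqueRel χ false n), p.length = l := by
  by_contra! h
  obtain ⟨f, hf⟩ := exists_fin_lt_of_forall_relSeries_length_ne h.1
  obtain ⟨g, hg⟩ := exists_fin_lt_of_forall_relSeries_length_ne h.2
  obtain ⟨c, hc⟩ : ∃ c, M < #{v | (f v, g v) = c} :=
    Fintype.exists_lt_card_fiber_of_mul_lt_card _ (by simpa using hα)
  have label_eq {v : α} (hv : v ∈ ({v | (f v, g v) = c} : Finset α)) : (f v, g v) = c :=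
    (mem_filter_univ v).1 hv
  rcases hM.containsMonoClique χ hc with hred | hblue
  · obtain ⟨u, hu, v, hv, huv⟩ := hred.exists_mem_cliqueRel hs
    exact (hf huv).ne (congrArg Prod.fst ((label_eq hu).trans (label_eq hv).symm))
  · obtain ⟨u, hu, v, hv, huv⟩ := hblue.exists_mem_cliqueRel hn
    exact (hg huv).ne (congrArg Prod.snd ((label_eq hu).trans (label_eq hv).symm))

end CliqueRel

theorem stmt12_general {s n k l N : ℕ} (hs : 0 < s) (hn : 0 < n)
    (hN : (ramsey s n - 1) * (k * l) < N) (χ : Fin N → Fin N → Bool) :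
    (∃ X : Fin k → Finset (Fin N), IsCliqueChain χ true s k X) ∨
      ∃ X : Fin l → Finset (Fin N), IsCliqueChain χ false n l X := by
  have hR : HasRamseyProp s n (ramsey s n - 1 + 1) :=
    (hasRamseyProp_ramsey s n).mono le_tsub_add
  have hcard : k * l * (ramsey s n - 1) < Fintype.card (Fin N) := by
    rwa [Fintype.card_fin, mul_comm]
  obtain ⟨p, rfl⟩ | ⟨p, rfl⟩ := hR.exists_relSeries_cliqueRel hs hn hcard χ
  · exact .inl (exists_isCliqueChain_of_relSeries p)
  · exact .inr (exists_isCliqueChain_of_relSeries p)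

end

/-- for `m, t ≥ 1`, every red/blue edge-coloring of `K_N` with
`N = (R(K_t,K_t) − 1)·m² + 1` contains a monochromatic `t`-clique chain of `m`
cliques. -/
theorem stmt12 (m t N : ℕ) (hm : 1 ≤ m) (ht : 1 ≤ t)
    (hN : N = (ramsey t t - 1) * m ^ 2 + 1) (χ : Fin N → Fin N → Bool) :
    ∃ (b : Bool) (X : Fin m → Finset (Fin N)), IsCliqueChain χ b t m X := by
  obtain ⟨X, hX⟩ | ⟨X, hX⟩ := stmt12_general ht ht (by rw [← sq, hN]; exact Nat.lt_add_one _) χ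
  exacts [⟨true, X, hX⟩, ⟨false, X, hX⟩]
end

section
/- For every q ≥ 1, every M, n ≥ 1 and all functions χ_0,…,χ_{q−1} : {1,…,M} → {1,…,n}, there exists a (χ_0,…,χ_{q−1})-forest F with |L(F)| ≥ M/2^{q−1} − n. -/
/-!
A forest is described by its leaves and, for every depth `d`, the map sending a leaf to its ancestor
at depth `d`; well-orderedness then says that, for each `d`, the intervals from ancestor to leaf
intersect only if they have the same ancestor as left end. Induct on the depth. For the colouring
`χ₀`, send every vertex to the last record (new strict maximum of `χ₀`) weakly before it. At most
`n` vertices are records; apply induction to the others and give each root the record it is sent to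
as its parent. This can violate well-orderedness only between consecutive new trees, so it suffices
to keep the leaves of every other tree, which costs a factor `2`. Nothing is lost at the lowest
level, where every tree being attached is a single vertex.
-/

/-- A `(χ_0, …, χ_{q−1})`-forest: a balanced well-ordered rooted forest of depth `q`
with vertex set contained in `{1, …, M}` (modeled as `Fin M`), such that for every
vertex `a` at depth `d ≤ q − 1`, `χ_d(a) ≥ χ_d(a')` for every child `a'` of `a`.
The forest is encoded by its vertex set `verts`, a parent map `par` (roots have
parent `none`) and a depth function `dep`. -/
structure ChiForest (M n q : ℕ) (χ : Fin q → Fin M → Fin n) where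
  verts : Finset (Fin M)
  par : Fin M → Option (Fin M)
  dep : Fin M → ℕ
  /-- parents of vertices are vertices -/
  par_mem : ∀ v ∈ verts, ∀ u : Fin M, par v = some u → u ∈ verts
  /-- the roots are exactly the vertices of depth `0` -/
  root_iff : ∀ v ∈ verts, (par v = none ↔ dep v = 0)
  /-- depth increases by one along edges -/
  dep_par : ∀ v ∈ verts, ∀ u : Fin M, par v = some u → dep v = dep u + 1
  /-- the forest has depth `q` -/
  depth_le : ∀ v ∈ verts, dep v ≤ q
  /-- balanced: every leaf (vertex with no children) is at depth `q` -/
  balanced : ∀ v ∈ verts, (∀ u ∈ verts, par u ≠ some v) → dep v = q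
  /-- well-ordered, part 1: every vertex comes before all of its descendants -/
  desc_gt : ∀ u ∈ verts, ∀ v ∈ verts,
    Relation.TransGen (fun a b : Fin M => par a = some b) u v → v < u
  /-- well-ordered, part 2: for vertices `y < y'` of the same depth, all descendants
  of `y` come before `y'` -/
  well_ordered : ∀ y ∈ verts, ∀ y' ∈ verts, dep y = dep y' → y < y' →
    ∀ u ∈ verts, Relation.TransGen (fun a b : Fin M => par a = some b) u y → u < y'
  /-- for a vertex `a` at depth `d`, `χ_d(a) ≥ χ_d(a')` for every child `a'` of `a` -/
  chi_mono : ∀ a ∈ verts, ∀ a' ∈ verts, par a' = some a →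
    ∀ d : Fin q, (d : ℕ) = dep a → χ d a' ≤ χ d a

section BlockMap

open Finset

variable {α ι : Type*} [LinearOrder α]

/-- `f` sends every `x ∈ s` to the head `f x ≤ x` of its block: two of the intervals `[f x, x]` with
`x ∈ s` intersect only if they have the same left end. For a fixed depth, this is what the
well-ordering of a forest says about the map from leaves to their ancestors at that depth. -/
structure IsBlockMap (f : α → α) (s : Set α) : Prop where
  apply_le : ∀ x ∈ s, f x ≤ x
  apply_eq : ∀ x ∈ s, ∀ y ∈ s, f x ≤ y → f y ≤ x → f x = f y

namespace IsBlockMap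

variable {f g : α → α} {s t : Set α}

theorem id (s : Set α) : IsBlockMap (fun x ↦ x) s where
  apply_le _ _ := le_rfl
  apply_eq _ _ _ _ := le_antisymm

theorem mono (hf : IsBlockMap f s) (hts : t ⊆ s) : IsBlockMap f t where
  apply_le x hx := hf.apply_le x (hts hx)
  apply_eq x hx y hy := hf.apply_eq x (hts hx) y (hts hy)

theorem lt_apply_of_apply_lt_apply (hf : IsBlockMap f s) {x y : α} (hx : x ∈ s) (hy : y ∈ s)
    (hxy : f x < f y) : x < f y := by
  by_contra! hyx
  exact hxy.ne (hf.apply_eq x hx y hy (hxy.le.trans (hf.apply_le y hy)) hyx)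

end IsBlockMap

theorem card_filter_lt_eq_add_one {s : Finset α} {a b : α} (ha : a ∈ s) (hab : a < b)
    (hgap : ∀ z ∈ s, a < z → b ≤ z) : #{z ∈ s | z < b} = #{z ∈ s | z < a} + 1 := by
  have hinsert : {z ∈ s | z < b} = insert a {z ∈ s | z < a} := by
    ext z
    grind
  rw [hinsert, card_insert_of_notMem (by simp)]

theorem exists_subset_card_le_two_mul_of_bool (s : Finset ι) (c : ι → Bool) :
    ∃ t ⊆ s, #s ≤ 2 * #t ∧ ∀ x ∈ t, ∀ y ∈ t, c x = c y := by
  have hsum : #{x ∈ s | c x = true} + #{x ∈ s | ¬ c x = true} = #s :=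
    card_filter_add_card_filter_not _
  rcases le_total #{x ∈ s | c x = true} #{x ∈ s | ¬ c x = true} with hle | hle
  · exact ⟨{x ∈ s | ¬ c x = true}, filter_subset _ s, by omega, by grind⟩
  · exact ⟨{x ∈ s | c x = true}, filter_subset _ s, by omega, by grind⟩

theorem exists_subset_card_le_two_mul_separated (s : Finset ι) (f : ι → α) :
    ∃ t ⊆ s, #s ≤ 2 * #t ∧
      ∀ x ∈ t, ∀ y ∈ t, f x < f y → ∃ z ∈ s, f x < f z ∧ f z < f y := by
  let rank (a : α) : ℕ := #{b ∈ s.image f | b < a}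
  obtain ⟨t, hts, hcard, hparity⟩ :=
    exists_subset_card_le_two_mul_of_bool s fun x ↦ (rank (f x)).bodd
  refine ⟨t, hts, hcard, fun x hx y hy hxy ↦ ?_⟩
  by_contra! hgap
  have hrank : rank (f y) = rank (f x) + 1 :=
    card_filter_lt_eq_add_one (mem_image_of_mem f (hts hx)) hxy (by simpa using hgap)
  simpa [hrank] using hparity x hx y hy

theorem IsBlockMap.exists_subset_comp {f g : α → α} {s : Finset α} {t : Set α}
    (hf : IsBlockMap f s) (hg : IsBlockMap g t) (hfst : Set.MapsTo f s t) :
    ∃ u ⊆ s, #s ≤ 2 * #u ∧ IsBlockMap (g ∘ f) u := by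
  obtain ⟨u, hus, hcard, hsep⟩ := exists_subset_card_le_two_mul_separated s (g ∘ f)
  have hlt : ∀ x ∈ u, ∀ y ∈ u, g (f x) < g (f y) → x < g (f y) := by
    intro x hx y hy hxy
    obtain ⟨z, hz, hxz, hzy⟩ := hsep x hx y hy hxy
    have hfxz : f x < f z :=
      (hg.lt_apply_of_apply_lt_apply (hfst (hus hx)) (hfst hz) hxz).trans_le
        (hg.apply_le _ (hfst hz))
    calc
      x < f z := hf.lt_apply_of_apply_lt_apply (hus hx) hz hfxz
      _ < g (f y) := hg.lt_apply_of_apply_lt_apply (hfst hz) (hfst (hus hy)) hzy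
  refine ⟨u, hus, hcard, fun x hx ↦ ?_, fun x hx y hy hxy hyx ↦ ?_⟩
  · exact (hg.apply_le _ (hfst (hus hx))).trans (hf.apply_le x (hus hx))
  · exact le_antisymm (not_lt.mp fun h ↦ (hlt y hy x hx h).not_ge hxy)
      (not_lt.mp fun h ↦ (hlt x hx y hy h).not_ge hyx)

end BlockMap

section Record

open Finset

variable {α β : Type*} [LinearOrder α] [LinearOrder β] {c : α → β} {S : Finset α}

/-- `y` is the last record of the colouring `c` of `S` at or before the point `r`, where a record is
a point of `S` whose colour is strictly larger than all earlier ones. -/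
structure IsLastRecord (c : α → β) (S : Finset α) (r y : α) : Prop where
  mem : y ∈ S
  le : y ≤ r
  color_le : ∀ z ∈ S, z ≤ r → c z ≤ c y
  color_lt : ∀ z ∈ S, z < y → c z < c y

theorem exists_isLastRecord (c : α → β) {r : α} (hr : r ∈ S) : ∃ y, IsLastRecord c S r y := by
  obtain ⟨m, hm, hmax⟩ := exists_max_image {z ∈ S | z ≤ r} c ⟨r, by simp [hr]⟩
  obtain ⟨y, hy, hmin⟩ :=
    exists_min_image {z ∈ S | z ≤ r ∧ c z = c m} (fun z ↦ z) ⟨m, by grind⟩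
  simp only [mem_filter, and_imp] at hy hmax hmin
  obtain ⟨hyS, hyr, hcy⟩ := hy
  refine ⟨y, hyS, hyr, fun z hz hzr ↦ (hmax z hz hzr).trans_eq hcy.symm, fun z hz hzy ↦ ?_⟩
  have hzr : z ≤ r := hzy.le.trans hyr
  exact hcy ▸ (hmax z hz hzr).lt_of_ne fun hcz ↦ hzy.not_ge (hmin z hz hzr hcz)

theorem IsLastRecord.eq_of_le_of_le {r r' y y' : α} (hy : IsLastRecord c S r y)
    (hy' : IsLastRecord c S r' y') (hle : y ≤ r') (hle' : y' ≤ r) : y = y' := by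
  have hcolor : c y = c y' :=
    le_antisymm (hy'.color_le y hy.mem hle) (hy.color_le y' hy'.mem hle')
  exact le_antisymm (not_lt.mp fun h ↦ (hy.color_lt y' hy'.mem h).ne' hcolor)
    (not_lt.mp fun h ↦ (hy'.color_lt y hy.mem h).ne hcolor)

theorem card_le_of_isLastRecord_self [Fintype β] {R : Finset α}
    (hR : ∀ y ∈ R, IsLastRecord c S y y) : #R ≤ Fintype.card β := by
  refine card_le_card_of_injOn c (fun _ _ ↦ mem_univ _) fun y hy y' hy' hcolor ↦ ?_
  exact le_antisymm (not_lt.mp fun h ↦ ((hR y hy).color_lt y' (hR y' hy').mem h).ne' hcolor)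
    (not_lt.mp fun h ↦ ((hR y' hy').color_lt y (hR y hy).mem h).ne hcolor)

end Record

/-- `p` assigns to every vertex of `T` a potential parent in `S` for a layer of edges along which
the colour `c` must not increase from parent to child. -/
structure IsParentMap {α β : Type*} [LinearOrder α] [LE β] (c : α → β) (S T : Finset α)
    (p : α → α) : Prop where
  apply_mem : ∀ r ∈ T, p r ∈ S
  apply_lt : ∀ r ∈ T, p r < r
  color_le : ∀ r ∈ T, c r ≤ c (p r)
  isBlockMap : IsBlockMap p T

open Finset in
theorem exists_isParentMap {α β : Type*} [LinearOrder α] [LinearOrder β] [Fintype β] (c : α → β)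
    (S : Finset α) : ∃ T ⊆ S, ∃ p, #S ≤ #T + Fintype.card β ∧ IsParentMap c S T p := by
  choose! p hp using fun r (hr : r ∈ S) ↦ exists_isLastRecord c hr
  have hrecords : #{r ∈ S | p r = r} ≤ Fintype.card β :=
    card_le_of_isLastRecord_self (c := c) (S := S) (by grind)
  have hsum : #{r ∈ S | p r = r} + #{r ∈ S | p r ≠ r} = #S := card_filter_add_card_filter_not _
  have hpT : ∀ r ∈ ({r ∈ S | p r ≠ r} : Finset α), IsLastRecord c S r (p r) :=
    fun r hr ↦ hp r (mem_of_mem_filter r hr)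
  refine ⟨{r ∈ S | p r ≠ r}, filter_subset _ S, p, by omega, ?_⟩
  exact {
    apply_mem r hr := (hpT r hr).mem
    apply_lt r hr := (hpT r hr).le.lt_of_ne (mem_filter.mp hr).2
    color_le r hr := (hpT r hr).color_le r (mem_of_mem_filter r hr) le_rfl
    isBlockMap := {
      apply_le r hr := (hpT r hr).le
      apply_eq r hr r' hr' := (hpT r hr).eq_of_le_of_le (hpT r' hr') } }

/-- A balanced well-ordered forest of depth `q` with vertices in `S`, compatible with the colourings
`χ`, given by its leaves and by the ancestor `ancestor d x` at depth `d` of every leaf `x`. Vertices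
that are not ancestors of a leaf do not exist in this encoding, so leaves can be discarded freely.
The values of `ancestor d` outside `leaves` are irrelevant. -/
structure PathForest {α β : Type*} [LinearOrder α] [LE β] {q : ℕ} (χ : Fin q → α → β)
    (S : Finset α) where
  leaves : Finset α
  ancestor : Fin (q + 1) → α → α
  ancestor_mem : ∀ d, ∀ x ∈ leaves, ancestor d x ∈ S
  ancestor_last : ∀ x ∈ leaves, ancestor (Fin.last q) x = x
  ancestor_lt : ∀ (d : Fin q), ∀ x ∈ leaves, ancestor d.castSucc x < ancestor d.succ x
  color_le : ∀ (d : Fin q), ∀ x ∈ leaves, χ d (ancestor d.succ x) ≤ χ d (ancestor d.castSucc x)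
  isBlockMap : ∀ d, IsBlockMap (ancestor d) leaves

namespace PathForest

section Construction

open Finset

variable {α β : Type*} [LinearOrder α] {q : ℕ} {S T : Finset α}

/-- The forest of depth `0` whose vertices, all isolated, are the points of `S`. -/
def ofFinset [LE β] (χ : Fin 0 → α → β) (S : Finset α) : PathForest χ S where
  leaves := S
  ancestor _ x := x
  ancestor_mem _ _ hx := hx
  ancestor_last _ _ := rfl
  ancestor_lt d := d.elim0
  color_le d := d.elim0
  isBlockMap _ := .id _

/-- Puts a new layer of roots, assigned by `p` to the old ones, on top of the part of `F` that lies
above the leaves in `L`. -/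
def cons [LE β] {χ : Fin (q + 1) → α → β} (F : PathForest (Fin.tail χ) T) (hTS : T ⊆ S) {p : α → α}
    (hp : IsParentMap (χ 0) S T p) {L : Finset α} (hL : L ⊆ F.leaves)
    (hblock : IsBlockMap (p ∘ F.ancestor 0) L) : PathForest χ S where
  leaves := L
  ancestor := Fin.cons (p ∘ F.ancestor 0) F.ancestor
  ancestor_mem := Fin.cases (fun x hx ↦ hp.apply_mem _ (F.ancestor_mem 0 x (hL hx)))
    fun d x hx ↦ hTS (F.ancestor_mem d x (hL hx))
  ancestor_last x hx := F.ancestor_last x (hL hx)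
  ancestor_lt := Fin.cases (fun x hx ↦ hp.apply_lt _ (F.ancestor_mem 0 x (hL hx)))
    fun d x hx ↦ F.ancestor_lt d x (hL hx)
  color_le := Fin.cases (fun x hx ↦ hp.color_le _ (F.ancestor_mem 0 x (hL hx)))
    fun d x hx ↦ F.color_le d x (hL hx)
  isBlockMap := Fin.cases hblock fun d ↦ (F.isBlockMap d).mono hL

theorem exists_card_le_two_pow_mul [LinearOrder β] [Fintype β] (χ : Fin (q + 1) → α → β)
    (S : Finset α) :
    ∃ F : PathForest χ S, #S ≤ 2 ^ q * (#F.leaves + Fintype.card β) := by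
  induction q generalizing S with
  | zero =>
    obtain ⟨T, hTS, p, hcard, hp⟩ := exists_isParentMap (χ 0) S
    refine ⟨(ofFinset (Fin.tail χ) T).cons hTS hp subset_rfl hp.isBlockMap, ?_⟩
    rw [pow_zero, one_mul]
    exact hcard
  | succ q ih =>
    obtain ⟨T, hTS, p, hcardS, hp⟩ := exists_isParentMap (χ 0) S
    obtain ⟨F, hcardT⟩ := ih (Fin.tail χ) T
    obtain ⟨L, hL, hcardF, hblock⟩ :=
      (F.isBlockMap 0).exists_subset_comp hp.isBlockMap fun x hx ↦ F.ancestor_mem 0 x hx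
    refine ⟨F.cons hTS hp hL hblock, ?_⟩
    calc
      #S ≤ 2 ^ q * (#F.leaves + Fintype.card β) + Fintype.card β := by omega
      _ ≤ 2 ^ q * (2 * #L + Fintype.card β) + 2 ^ q * Fintype.card β := by
        gcongr
        exact Nat.le_mul_of_pos_left _ (by positivity)
      _ = 2 ^ (q + 1) * (#L + Fintype.card β) := by ring

end Construction

section Encoding

variable {α β : Type*} [LinearOrder α] [LE β] {q : ℕ} {χ : Fin q → α → β} {S : Finset α}
  (F : PathForest χ S) {x y : α} {d e : Fin (q + 1)}

theorem strictMono_ancestor (hx : x ∈ F.leaves) : StrictMono fun d ↦ F.ancestor d x :=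
  Fin.strictMono_iff_lt_succ.mpr fun d ↦ F.ancestor_lt d x hx

theorem not_lt_of_ancestor_eq (hx : x ∈ F.leaves) (hy : y ∈ F.leaves)
    (h : F.ancestor d x = F.ancestor e y) : ¬ d < e := by
  intro hde
  have hlt : F.ancestor d y < F.ancestor e y := F.strictMono_ancestor hy hde
  refine hlt.ne' (h.symm.trans ((F.isBlockMap d).apply_eq x hx y hy ?_ ?_))
  · exact h.le.trans ((F.isBlockMap e).apply_le y hy)
  · exact (hlt.trans_eq h.symm).le.trans ((F.isBlockMap d).apply_le x hx)

theorem depth_eq_of_ancestor_eq (hx : x ∈ F.leaves) (hy : y ∈ F.leaves)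
    (h : F.ancestor d x = F.ancestor e y) : d = e :=
  le_antisymm (not_lt.mp (F.not_lt_of_ancestor_eq hy hx h.symm))
    (not_lt.mp (F.not_lt_of_ancestor_eq hx hy h))

theorem ancestor_eq_of_le (hx : x ∈ F.leaves) (hy : y ∈ F.leaves)
    (h : F.ancestor d x = F.ancestor d y) (hed : e ≤ d) : F.ancestor e x = F.ancestor e y := by
  refine (F.isBlockMap e).apply_eq x hx y hy ?_ ?_
  · exact ((F.strictMono_ancestor hx).monotone hed).trans
      (h.le.trans ((F.isBlockMap d).apply_le y hy))
  · exact ((F.strictMono_ancestor hy).monotone hed).trans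
      (h.ge.trans ((F.isBlockMap d).apply_le x hx))

/-- The vertex of the forest at a given depth on the path to a given leaf. -/
def vertex (a : F.leaves × Fin (q + 1)) : α :=
  F.ancestor a.2 a.1

/-- The vertex set of the forest. -/
def vertices : Finset α :=
  Finset.univ.image F.vertex

/-- The depth of a vertex, with junk value `0` outside `F.vertices`. -/
noncomputable def depth : α → ℕ :=
  Function.extend F.vertex (fun a ↦ a.2) 0

/-- The parent of a vertex, `none` for roots and, as junk value, outside `F.vertices`. -/
noncomputable def parent : α → Option α :=
  Function.extend F.vertex
    (fun a ↦ Fin.cases none (fun d ↦ some (F.ancestor d.castSucc a.1)) a.2) fun _ ↦ none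

theorem mem_vertices {v : α} : v ∈ F.vertices ↔ ∃ d, ∃ x ∈ F.leaves, F.ancestor d x = v := by
  simp only [vertices, vertex, Finset.mem_image, Finset.mem_univ, true_and, Prod.exists,
    Subtype.exists]
  grind

theorem ancestor_mem_vertices (d : Fin (q + 1)) (hx : x ∈ F.leaves) :
    F.ancestor d x ∈ F.vertices :=
  F.mem_vertices.mpr ⟨d, x, hx, rfl⟩

theorem depth_ancestor (d : Fin (q + 1)) (hx : x ∈ F.leaves) : F.depth (F.ancestor d x) = d := by
  have hfactors : Function.FactorsThrough (fun a ↦ (a.2 : ℕ)) F.vertex :=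
    fun a b h ↦ congrArg Fin.val (F.depth_eq_of_ancestor_eq a.1.2 b.1.2 h)
  exact hfactors.extend_apply 0 (⟨x, hx⟩, d)

theorem parent_ancestor (d : Fin (q + 1)) (hx : x ∈ F.leaves) :
    F.parent (F.ancestor d x) = Fin.cases none (fun e ↦ some (F.ancestor e.castSucc x)) d := by
  refine Function.FactorsThrough.extend_apply (f := F.vertex) ?_ (fun _ ↦ none) (⟨x, hx⟩, d)
  rintro ⟨x, d⟩ ⟨y, e⟩ h
  obtain rfl : d = e := F.depth_eq_of_ancestor_eq x.2 y.2 h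
  cases d using Fin.cases with
  | zero => rfl
  | succ d => exact congrArg some (F.ancestor_eq_of_le x.2 y.2 h d.castSucc_lt_succ.le)

theorem parent_ancestor_zero (hx : x ∈ F.leaves) : F.parent (F.ancestor 0 x) = none :=
  F.parent_ancestor 0 hx

theorem parent_ancestor_succ (d : Fin q) (hx : x ∈ F.leaves) :
    F.parent (F.ancestor d.succ x) = some (F.ancestor d.castSucc x) :=
  F.parent_ancestor d.succ hx

theorem exists_of_parent_eq_some {u v : α} (hv : v ∈ F.vertices) (h : F.parent v = some u) :
    ∃ d : Fin q, ∃ x ∈ F.leaves, F.ancestor d.succ x = v ∧ F.ancestor d.castSucc x = u := by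
  obtain ⟨d, x, hx, rfl⟩ := F.mem_vertices.mp hv
  cases d using Fin.cases with
  | zero => simp [F.parent_ancestor_zero hx] at h
  | succ d => exact ⟨d, x, hx, rfl, by simpa [F.parent_ancestor_succ d hx] using h⟩

theorem exists_of_transGen_parent {u v : α} (hu : u ∈ F.vertices)
    (h : Relation.TransGen (fun a b ↦ F.parent a = some b) u v) :
    ∃ e d, e < d ∧ ∃ x ∈ F.leaves, F.ancestor d x = u ∧ F.ancestor e x = v := by
  induction h with
  | single h =>
    obtain ⟨d, x, hx, hdu, hdv⟩ := F.exists_of_parent_eq_some hu h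
    exact ⟨d.castSucc, d.succ, d.castSucc_lt_succ, x, hx, hdu, hdv⟩
  | tail _ h ih =>
    obtain ⟨e, d, hed, x, hx, hdu, rfl⟩ := ih
    cases e using Fin.cases with
    | zero => simp [F.parent_ancestor_zero hx] at h
    | succ e =>
      exact ⟨e.castSucc, d, e.castSucc_lt_succ.trans hed, x, hx, hdu,
        by simpa [F.parent_ancestor_succ e hx] using h⟩

theorem parent_ne_some_of_mem_leaves {u : α} (hx : x ∈ F.leaves) (hu : u ∈ F.vertices) :
    F.parent u ≠ some x := by
  intro h
  obtain ⟨d, y, hy, -, hdx⟩ := F.exists_of_parent_eq_some hu h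
  exact (Fin.castSucc_lt_last d).ne
    (F.depth_eq_of_ancestor_eq hy hx (hdx.trans (F.ancestor_last x hx).symm))

end Encoding

variable {M n q : ℕ} {χ : Fin q → Fin M → Fin n} {S : Finset (Fin M)}

/-- The forest as a vertex set with a parent map. -/
noncomputable def toChiForest (F : PathForest χ S) : ChiForest M n q χ where
  verts := F.vertices
  par := F.parent
  dep := F.depth
  par_mem v hv u h := by
    obtain ⟨d, x, hx, -, rfl⟩ := F.exists_of_parent_eq_some hv h
    exact F.ancestor_mem_vertices _ hx
  root_iff v hv := by
    obtain ⟨d, x, hx, rfl⟩ := F.mem_vertices.mp hv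
    cases d using Fin.cases with
    | zero => simp [F.parent_ancestor_zero hx, F.depth_ancestor 0 hx]
    | succ d => simp [F.parent_ancestor_succ d hx, F.depth_ancestor d.succ hx]
  dep_par v hv u h := by
    obtain ⟨d, x, hx, rfl, rfl⟩ := F.exists_of_parent_eq_some hv h
    simp [F.depth_ancestor _ hx]
  depth_le v hv := by
    obtain ⟨d, x, hx, rfl⟩ := F.mem_vertices.mp hv
    exact (F.depth_ancestor d hx).trans_le d.is_le
  balanced v hv hleaf := by
    obtain ⟨d, x, hx, rfl⟩ := F.mem_vertices.mp hv
    cases d using Fin.lastCases with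
    | last => exact F.depth_ancestor (Fin.last q) hx
    | cast d => exact absurd (F.parent_ancestor_succ d hx) (hleaf _ (F.ancestor_mem_vertices _ hx))
  desc_gt u hu v _ huv := by
    obtain ⟨e, d, hed, x, hx, rfl, rfl⟩ := F.exists_of_transGen_parent hu huv
    exact F.strictMono_ancestor hx hed
  well_ordered y _ y' hy' hdepth hlt u hu huy := by
    obtain ⟨e, d, -, x, hx, rfl, rfl⟩ := F.exists_of_transGen_parent hu huy
    obtain ⟨e', x', hx', rfl⟩ := F.mem_vertices.mp hy'
    obtain rfl : e = e' := Fin.ext (by simpa [F.depth_ancestor _ hx, F.depth_ancestor _ hx']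
      using hdepth)
    exact ((F.isBlockMap d).apply_le x hx).trans_lt
      ((F.isBlockMap e).lt_apply_of_apply_lt_apply hx hx' hlt)
  chi_mono a _ a' ha' h d hd := by
    obtain ⟨e, x, hx, rfl, rfl⟩ := F.exists_of_parent_eq_some ha' h
    obtain rfl : d = e := Fin.ext (by simpa [F.depth_ancestor _ hx] using hd)
    exact F.color_le d x hx

theorem card_leaves_le_toChiForest (F : PathForest χ S) :
    F.leaves.card ≤ (F.toChiForest.verts.filter fun v ↦
      ∀ u ∈ F.toChiForest.verts, F.toChiForest.par u ≠ some v).card := by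
  refine Finset.card_le_card fun x hx ↦ Finset.mem_filter.mpr ⟨?_, fun u hu ↦ ?_⟩
  · exact F.mem_vertices.mpr ⟨Fin.last q, x, hx, F.ancestor_last x hx⟩
  · exact F.parent_ne_some_of_mem_leaves hx hu

end PathForest

/-- for every `q ≥ 1` and functions `χ_0, …, χ_{q−1} : [M] → [n]`,
there is a `(χ_0, …, χ_{q−1})`-forest `F` whose set of leaves `L(F)` satisfies
`|L(F)| ≥ M / 2^(q−1) − n`. -/
theorem stmt15 (q M n : ℕ) (hq : 1 ≤ q) (hM : 1 ≤ M) (hn : 1 ≤ n)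
    (χ : Fin q → Fin M → Fin n) :
    ∃ F : ChiForest M n q χ,
      (M : ℝ) / 2 ^ (q - 1) - n ≤
        ((F.verts.filter fun v => ∀ u ∈ F.verts, F.par u ≠ some v).card : ℝ) := by
  obtain ⟨k, rfl⟩ := Nat.exists_eq_add_of_le' hq
  obtain ⟨F, hF⟩ := PathForest.exists_card_le_two_pow_mul χ Finset.univ
  refine ⟨F.toChiForest, ?_⟩
  have hcard := hF.trans (Nat.mul_le_mul_left _
    (Nat.add_le_add_right F.card_leaves_le_toChiForest _))
  rw [Finset.card_univ, Fintype.card_fin, Fintype.card_fin] at hcard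
  rw [Nat.add_sub_cancel, sub_le_iff_le_add, div_le_iff₀' (by positivity)]
  exact_mod_cast hcard
end

section
/- Let s ≥ 1 and n ≥ t ≥ 1, and consider a red/blue edge-coloring of the complete graph on {1,…,N}. Suppose there exists an s-red-net (F, (X_v)_{v∈V(F)}) of order r, where r ≥ 3·(4s^2)^t and |V(F)| ≥ 3sn/r. Then the coloring contains a red clique of size s+1 or a blue ordered copy of P_n^t. -/
/-- `χ i j` is the color of the edge `{i, j}` for `i < j`: `true` = red, `false` = blue.
An `s`-red-net of order `r` (for the parameter `t`): a pair `(F, (X_v)_{v ∈ V(F)})`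
where `F` is a balanced well-ordered rooted forest of depth `s − 1` with vertex set a
finite set of naturals (encoded by `verts`, a parent map `par`, and a depth function
`dep`), and each `X_v` is a blue clique of size `r` in `K_N`, such that
(1) `v < u` in `V(F)` implies every element of `X_v` is smaller than every element of
`X_u`, and (2) for every vertex `v` and every descendant `u` of `v` there is no blue
`K_{t,t}` with one part in `X_v` and the other in `X_u`. -/
structure RedNet (N : ℕ) (χ : Fin N → Fin N → Bool) (s r t : ℕ) where
  verts : Finset ℕ
  par : ℕ → Option ℕ
  dep : ℕ → ℕ
  X : ℕ → Finset (Fin N)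
  /-- parents of vertices are vertices -/
  par_mem : ∀ v ∈ verts, ∀ u : ℕ, par v = some u → u ∈ verts
  /-- the roots are exactly the vertices of depth `0` -/
  root_iff : ∀ v ∈ verts, (par v = none ↔ dep v = 0)
  /-- depth increases by one along edges -/
  dep_par : ∀ v ∈ verts, ∀ u : ℕ, par v = some u → dep v = dep u + 1
  /-- the forest has depth `s − 1` -/
  depth_le : ∀ v ∈ verts, dep v ≤ s - 1
  /-- balanced: every leaf (vertex with no children) is at depth `s − 1` -/
  balanced : ∀ v ∈ verts, (∀ u ∈ verts, par u ≠ some v) → dep v = s - 1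
  /-- well-ordered, part 1: every vertex comes before all of its descendants -/
  desc_gt : ∀ u ∈ verts, ∀ v ∈ verts,
    Relation.TransGen (fun a b : ℕ => par a = some b) u v → v < u
  /-- well-ordered, part 2: for vertices `y < y'` of the same depth, all descendants
  of `y` come before `y'` -/
  well_ordered : ∀ y ∈ verts, ∀ y' ∈ verts, dep y = dep y' → y < y' →
    ∀ u ∈ verts, Relation.TransGen (fun a b : ℕ => par a = some b) u y → u < y'
  /-- each `X_v` has `r` vertices -/
  X_card : ∀ v ∈ verts, (X v).card = r
  /-- each `X_v` is a blue clique -/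
  X_blue : ∀ v ∈ verts, ∀ a ∈ X v, ∀ b ∈ X v, a < b → χ a b = false
  /-- `v < u` implies `X_v < X_u` elementwise -/
  X_ordered : ∀ v ∈ verts, ∀ u ∈ verts, v < u → ∀ a ∈ X v, ∀ b ∈ X u, a < b
  /-- no blue `K_{t,t}` between `X_v` and `X_u` for `u` a descendant of `v` -/
  no_blue_Ktt : ∀ v ∈ verts, ∀ u ∈ verts,
    Relation.TransGen (fun a b : ℕ => par a = some b) u v →
    ¬ ∃ (A B : Finset (Fin N)), A ⊆ X v ∧ B ⊆ X u ∧ A.card = t ∧ B.card = t ∧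
        ∀ a ∈ A, ∀ b ∈ B, χ a b = false

/-!
Split each `X_v` into an initial segment `F_v`, a middle segment `M_v` and a final segment `L_v`,
each of about `r / 3` vertices. If there is a blue `K_{t,t}` from `L_a` to `F_b`, then a blue path
power ending in `M_a` can be continued through this `K_{t,t}` to one ending in `M_b`. Let the height
of `v` be the number of blocks of size `#M_v` in a longest blue path power ending in `M_v`; then
`b` has larger height than `a`.

On the other hand, by the Kővári–Sós–Turán counting argument a pair of sets of size `q ≥ (4 * s ^ 2)
^ t` without a blue `K_{t,t}` has fewer than `q ^ 2 / s ^ 2` blue edges, so `s + 1` sets of size `q`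
that are pairwise free of blue `K_{t,t}` have a red transversal clique. Assume that there is no red
`K_{s+1}`. For two leaves `v < w` and every `j`, this bounds by `s` the number of vertices which lie
on the path from the root to `v` and have height at least `j`, or lie on the path to `w` and have
height at most `j`. Summed over `j`, these bounds say that from `v` to `w` the total height of the
root path grows at least by the number of vertices that are on the second path but not on the first.
Hence the root path of the last leaf has total height at least `|V(F)|`, and one of its `s` vertices
has height at least `|V(F)| / s`.
-/

section KovariSosTuran

open Finset

/-- Between `Y` and `Z` there is a complete bipartite graph `K_{t,t}` whose edges, read from `Y`
to `Z`, all lie in the relation `R`. -/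
def HasBiclique {α β : Type*} (R : α → β → Prop) (t : ℕ) (Y : Finset α) (Z : Finset β) : Prop :=
  ∃ (A : Finset α) (B : Finset β), A ⊆ Y ∧ B ⊆ Z ∧ #A = t ∧ #B = t ∧ ∀ a ∈ A, ∀ b ∈ B, R a b

theorem HasBiclique.mono {α β : Type*} {R : α → β → Prop} {t : ℕ} {Y Y' : Finset α}
    {Z Z' : Finset β} (hY : Y ⊆ Y') (hZ : Z ⊆ Z') (h : HasBiclique R t Y Z) :
    HasBiclique R t Y' Z' := by
  obtain ⟨A, B, hA, hB, hAB⟩ := h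
  exact ⟨A, B, hA.trans hY, hB.trans hZ, hAB⟩

-- A function `f` with `(f i, f j) ∈ E` and a pair `(a, b)` can be recovered from `(f i, f j)` and
-- the function obtained from `f` by overwriting its values at `i` and `j` with `a` and `b`.
theorem card_filter_piFinset_mem_mul_le {ι : Type*} [Fintype ι] [DecidableEq ι] {α : ι → Type*}
    [∀ i, DecidableEq (α i)] (Y : ∀ i, Finset (α i)) {i j : ι} (hij : i ≠ j)
    (E : Finset (α i × α j)) :
    #{f ∈ Fintype.piFinset Y | (f i, f j) ∈ E} * (#(Y i) * #(Y j)) ≤ #E * ∏ k, #(Y k) := by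
  rw [← card_product, ← card_product, ← Fintype.card_piFinset, ← card_product]
  refine card_le_card_of_injOn
    (fun x => ((x.1 i, x.1 j), Function.update (Function.update x.1 i x.2.1) j x.2.2)) ?_ ?_
  · rintro ⟨f, a, b⟩ h
    simp only [coe_product, Set.mem_prod, mem_coe, mem_filter, Fintype.mem_piFinset] at h ⊢
    refine ⟨h.1.2, fun k => ?_⟩
    rcases eq_or_ne k j with rfl | hkj
    · simpa only [Function.update_self] using h.2.2
    rcases eq_or_ne k i with rfl | hki
    · simpa only [Function.update_of_ne hkj, Function.update_self] using h.2.1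
    · simpa only [Function.update_of_ne hkj, Function.update_of_ne hki] using h.1.1 k
  · rintro ⟨f, a, b⟩ - ⟨g, a', b'⟩ - h
    simp only [Prod.mk.injEq] at h ⊢
    obtain ⟨⟨hi, hj⟩, hupd⟩ := h
    refine ⟨funext fun k => ?_, ?_, ?_⟩
    · rcases eq_or_ne k j with rfl | hkj
      · exact hj
      rcases eq_or_ne k i with rfl | hki
      · exact hi
      simpa only [Function.update_of_ne hkj, Function.update_of_ne hki] using congrFun hupd k
    · simpa only [Function.update_of_ne hij, Function.update_self] using congrFun hupd i
    · simpa only [Function.update_self] using congrFun hupd j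

theorem card_filter_not_injective_mul_le {α : Type*} [DecidableEq α] (Y : Finset α) (t : ℕ) :
    #{f ∈ Fintype.piFinset fun _ : Fin t => Y | ¬ Function.Injective f} * #Y ≤
      t ^ 2 * #Y ^ t := by
  rcases (#Y).eq_zero_or_pos with hY | hY
  · simp only [hY, mul_zero, zero_le]
  set G := Fintype.piFinset fun _ : Fin t => Y
  have hcover : {f ∈ G | ¬ Function.Injective f} ⊆
      (univ : Finset (Fin t)).offDiag.biUnion fun p => {f ∈ G | (f p.1, f p.2) ∈ Y.diag} := by
    intro f hf
    obtain ⟨hfG, hinj⟩ := mem_filter.1 hf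
    obtain ⟨i, j, hfij, hij⟩ := Function.not_injective_iff.1 hinj
    exact mem_biUnion.2 ⟨(i, j), by simpa only [mem_offDiag, mem_univ, true_and] using hij,
      mem_filter.2 ⟨hfG, mem_diag.2 ⟨Fintype.mem_piFinset.1 hfG i, hfij⟩⟩⟩
  have hpair : ∀ p ∈ (univ : Finset (Fin t)).offDiag,
      #{f ∈ G | (f p.1, f p.2) ∈ Y.diag} * #Y ≤ #Y ^ t := by
    intro p hp
    have h := card_filter_piFinset_mem_mul_le (fun _ : Fin t => Y) (mem_offDiag.1 hp).2.2 Y.diag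
    rw [diag_card, prod_const, card_univ, Fintype.card_fin, ← mul_assoc, mul_comm #Y] at h
    exact Nat.le_of_mul_le_mul_right h hY
  calc #{f ∈ G | ¬ Function.Injective f} * #Y
      ≤ (∑ p ∈ (univ : Finset (Fin t)).offDiag, #{f ∈ G | (f p.1, f p.2) ∈ Y.diag}) * #Y :=
        Nat.mul_le_mul_right _ ((card_le_card hcover).trans card_biUnion_le)
    _ ≤ #(univ : Finset (Fin t)).offDiag * #Y ^ t := by
        rw [sum_mul, ← smul_eq_mul (#_)]
        exact sum_le_card_nsmul _ _ _ hpair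
    _ ≤ t ^ 2 * #Y ^ t := by
        refine Nat.mul_le_mul_right _ ?_
        rw [offDiag_card, card_univ, Fintype.card_fin, sq]
        exact Nat.sub_le _ _

theorem sum_card_filter_pow_eq_sum_piFinset {α β : Type*} (R : α → β → Prop)
    [∀ a, DecidablePred (R a)] (Y : Finset α) (Z : Finset β) (t : ℕ) :
    ∑ b ∈ Z, #{a ∈ Y | R a b} ^ t =
      ∑ f ∈ Fintype.piFinset fun _ : Fin t => Y, #{b ∈ Z | ∀ i, R (f i) b} := by
  classical
  calc ∑ b ∈ Z, #{a ∈ Y | R a b} ^ t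
      = ∑ b ∈ Z, #{f ∈ Fintype.piFinset fun _ : Fin t => Y | ∀ i, R (f i) b} := by
        refine sum_congr rfl fun b _ => ?_
        rw [← Fintype.card_piFinset_const]
        congr 1
        ext f
        simp only [Fintype.mem_piFinset, mem_filter, forall_and]
    _ = _ := (sum_card_bipartiteAbove_eq_sum_card_bipartiteBelow
          fun (f : Fin t → α) b => ∀ i, R (f i) b).symm

variable {α β : Type*} {R : α → β → Prop} [∀ a, DecidablePred (R a)] {Y : Finset α} {Z : Finset β}

theorem card_commonNeighbors_lt_of_not_hasBiclique {t : ℕ} (h : ¬ HasBiclique R t Y Z)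
    {f : Fin t → α} (hf : ∀ i, f i ∈ Y) (hinj : Function.Injective f) :
    #{b ∈ Z | ∀ i, R (f i) b} < t := by
  by_contra! hle
  obtain ⟨B, hB, hBt⟩ := exists_subset_card_eq hle
  refine h ⟨univ.map ⟨f, hinj⟩, B, ?_, hB.trans (filter_subset _ _), ?_, hBt, ?_⟩
  · simpa only [map_subset_iff_subset_preimage, subset_iff, mem_map, mem_univ, true_and,
      Function.Embedding.coeFn_mk, forall_exists_index, forall_apply_eq_imp_iff] using hf
  · rw [card_map, card_univ, Fintype.card_fin]
  · rintro a ha b hb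
    obtain ⟨i, -, rfl⟩ := mem_map.1 ha
    exact (mem_filter.1 (hB hb)).2 i

theorem sum_card_commonNeighbors_le_of_not_hasBiclique {k : ℕ} (hZY : #Z ≤ #Y)
    (h : ¬ HasBiclique R (k + 1) Y Z) :
    ∑ f ∈ Fintype.piFinset fun _ : Fin (k + 1) => Y, #{b ∈ Z | ∀ i, R (f i) b} ≤
      (k + (k + 1) ^ 2) * #Y ^ (k + 1) := by
  classical
  set G := Fintype.piFinset fun _ : Fin (k + 1) => Y with hG
  have hinjective : ∑ f ∈ G with Function.Injective f, #{b ∈ Z | ∀ i, R (f i) b} ≤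
      k * #Y ^ (k + 1) := by
    calc ∑ f ∈ G with Function.Injective f, #{b ∈ Z | ∀ i, R (f i) b}
        ≤ #{f ∈ G | Function.Injective f} * k := by
          refine sum_le_card_nsmul _ _ _ fun f hf => ?_
          obtain ⟨hfG, hinj⟩ := mem_filter.1 hf
          exact Nat.le_of_lt_succ
            (card_commonNeighbors_lt_of_not_hasBiclique h (Fintype.mem_piFinset.1 hfG) hinj)
      _ ≤ #G * k := Nat.mul_le_mul_right _ (card_filter_le _ _)
      _ = k * #Y ^ (k + 1) := by rw [hG, Fintype.card_piFinset_const, mul_comm]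
  have hnot_injective : ∑ f ∈ G with ¬ Function.Injective f, #{b ∈ Z | ∀ i, R (f i) b} ≤
      (k + 1) ^ 2 * #Y ^ (k + 1) :=
    (sum_le_card_nsmul _ _ _ fun _ _ => (card_filter_le _ _).trans hZY).trans
      (card_filter_not_injective_mul_le Y (k + 1))
  rw [← sum_filter_add_sum_filter_not G fun f => Function.Injective f, add_mul]
  exact add_le_add hinjective hnot_injective

theorem card_interedges_pow_le_of_not_hasBiclique {k : ℕ} (hZY : #Z ≤ #Y)
    (h : ¬ HasBiclique R (k + 1) Y Z) :
    #(Rel.interedges R Y Z) ^ (k + 1) ≤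
      #Z ^ k * ((k + (k + 1) ^ 2) * #Y ^ (k + 1)) := by
  have hdegrees : #(Rel.interedges R Y Z) = ∑ b ∈ Z, #{a ∈ Y | R a b} := by
    simp only [Rel.interedges, card_filter, sum_product_right]
  calc #(Rel.interedges R Y Z) ^ (k + 1)
      ≤ #Z ^ k * ∑ b ∈ Z, #{a ∈ Y | R a b} ^ (k + 1) := by
        rw [hdegrees]
        exact pow_sum_le_card_mul_sum_pow (fun _ _ => Nat.zero_le _) k
    _ ≤ _ := by
        rw [sum_card_filter_pow_eq_sum_piFinset]
        exact Nat.mul_le_mul_left _ (sum_card_commonNeighbors_le_of_not_hasBiclique hZY h)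

theorem add_succ_sq_lt_four_pow (k : ℕ) : k + (k + 1) ^ 2 < 4 ^ (k + 1) := by
  induction k with
  | zero => norm_num
  | succ k ih =>
    rw [pow_succ 4]
    nlinarith

theorem card_interedges_mul_lt_sq_of_not_hasBiclique {q d t : ℕ} (hY : #Y = q) (hZ : #Z = q)
    (hd : d ≠ 0) (hq : (4 * d) ^ t ≤ q) (h : ¬ HasBiclique R t Y Z) :
    #(Rel.interedges R Y Z) * d < q ^ 2 := by
  obtain _ | k := t
  · exact absurd ⟨∅, ∅, by simp⟩ h
  have hqpos : 0 < q := lt_of_lt_of_le (by positivity) hq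
  refine lt_of_pow_lt_pow_left₀ (k + 1) (Nat.zero_le _) ?_
  have hpow := card_interedges_pow_le_of_not_hasBiclique (hZ.trans_le hY.ge) h
  rw [hY, hZ] at hpow
  calc (#(Rel.interedges R Y Z) * d) ^ (k + 1)
      ≤ q ^ k * ((k + (k + 1) ^ 2) * q ^ (k + 1)) * d ^ (k + 1) := by
        rw [mul_pow]
        exact Nat.mul_le_mul_right _ hpow
    _ = q ^ k * q ^ (k + 1) * ((k + (k + 1) ^ 2) * d ^ (k + 1)) := by ring
    _ < q ^ k * q ^ (k + 1) * (4 ^ (k + 1) * d ^ (k + 1)) := by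
        gcongr
        exact add_succ_sq_lt_four_pow k
    _ ≤ q ^ k * q ^ (k + 1) * q := by
        rw [← mul_pow]
        exact Nat.mul_le_mul_left _ hq
    _ = (q ^ 2) ^ (k + 1) := by ring

end KovariSosTuran

section Transversal

open Finset

theorem exists_mem_piFinset_forall_notMem {ι α : Type*} [Fintype ι] [DecidableEq ι]
    {q : ℕ} (hq : 0 < q) {Y : ι → Finset α} (hY : ∀ i, #(Y i) = q) {P : Finset (ι × ι)}
    (hP : ∀ p ∈ P, p.1 ≠ p.2) {E : ι × ι → Finset (α × α)}
    (hE : ∀ p ∈ P, #(E p) * #P < q ^ 2) :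
    ∃ f ∈ Fintype.piFinset Y, ∀ p ∈ P, (f p.1, f p.2) ∉ E p := by
  classical
  set G := Fintype.piFinset Y with hG
  have hGcard : #G = q ^ Fintype.card ι := by
    simp only [hG, Fintype.card_piFinset, hY, prod_const, card_univ]
  have hGpos : 0 < #G := hGcard ▸ Nat.pow_pos hq
  have hpair : ∀ p ∈ P, #{f ∈ G | (f p.1, f p.2) ∈ E p} * #P < #G := by
    intro p hp
    have h := card_filter_piFinset_mem_mul_le Y (hP p hp) (E p)
    rw [hY, hY, ← sq, ← Fintype.card_piFinset] at h
    refine Nat.lt_of_mul_lt_mul_right (a := q ^ 2) ?_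
    calc #{f ∈ G | (f p.1, f p.2) ∈ E p} * #P * q ^ 2
        = #{f ∈ G | (f p.1, f p.2) ∈ E p} * q ^ 2 * #P := by ring
      _ ≤ #(E p) * #G * #P := Nat.mul_le_mul_right _ h
      _ = #(E p) * #P * #G := by ring
      _ < q ^ 2 * #G := Nat.mul_lt_mul_of_pos_right (hE p hp) hGpos
      _ = #G * q ^ 2 := mul_comm _ _
  have hbad : #(P.biUnion fun p => {f ∈ G | (f p.1, f p.2) ∈ E p}) < #G := by
    rcases P.eq_empty_or_nonempty with rfl | hne
    · simpa only [biUnion_empty, card_empty] using hGpos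
    refine card_biUnion_le.trans_lt (Nat.lt_of_mul_lt_mul_right (a := #P) ?_)
    rw [sum_mul, mul_comm #G, ← smul_eq_mul (#P), ← sum_const]
    exact sum_lt_sum_of_nonempty hne hpair
  obtain ⟨f, hfG, hf⟩ := exists_mem_notMem_of_card_lt_card hbad
  exact ⟨f, hfG, fun p hp hfp => hf (mem_biUnion.2 ⟨p, hp, mem_filter.2 ⟨hfG, hfp⟩⟩)⟩

theorem exists_transversal_of_forall_not_hasBiclique {α : Type*} (R : α → α → Prop) {s t q : ℕ}
    (hs : s ≠ 0) (hq : (4 * s ^ 2) ^ t ≤ q) {Y : Fin (s + 1) → Finset α} (hY : ∀ i, #(Y i) = q)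
    (h : ∀ i j, i < j → ¬ HasBiclique R t (Y i) (Y j)) :
    ∃ f : Fin (s + 1) → α, (∀ i, f i ∈ Y i) ∧ ∀ i j, i < j → ¬ R (f i) (f j) := by
  classical
  set P : Finset (Fin (s + 1) × Fin (s + 1)) := {p ∈ univ ×ˢ univ | p.1 < p.2} with hPdef
  have hlt : ∀ p ∈ P, p.1 < p.2 := fun p hp => (mem_filter.1 hp).2
  have hPcard : #P ≤ s ^ 2 := by
    rw [hPdef, card_product_filter_lt, card_univ, Fintype.card_fin, Nat.choose_two_right,
      Nat.add_sub_cancel]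
    exact Nat.div_le_of_le_mul (by nlinarith [Nat.pos_of_ne_zero hs])
  have hsparse : ∀ p ∈ P, #(Rel.interedges R (Y p.1) (Y p.2)) * #P < q ^ 2 := fun p hp =>
    (Nat.mul_le_mul_left _ hPcard).trans_lt <|
      card_interedges_mul_lt_sq_of_not_hasBiclique (hY _) (hY _) (pow_ne_zero 2 hs) hq
        (h _ _ (hlt p hp))
  obtain ⟨f, hf, hfP⟩ := exists_mem_piFinset_forall_notMem
    (lt_of_lt_of_le (by positivity) hq) hY (fun p hp => (hlt p hp).ne) hsparse
  rw [Fintype.mem_piFinset] at hf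
  refine ⟨f, hf, fun i j hij hR => hfP (i, j) ?_ ?_⟩
  · exact mem_filter.2 ⟨mk_mem_product (mem_univ _) (mem_univ _), hij⟩
  · exact Rel.mk_mem_interedges_iff.2 ⟨hf i, hf j, hR⟩

end Transversal

section PathPower

open Finset

variable {α : Type*} [LinearOrder α] {R : α → α → Prop} {t : ℕ} {S T D : Finset α}

/-- The vertices of `S`, in increasing order, form a `t`-th power of a monotone path in the
relation `R`, and `T` is a final segment of `S` with at least `t` elements. The distance of two
vertices along the path is measured by the number of elements of `S` strictly between them. The
tail `T` is what a further piece of the path is attached to. -/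
structure IsPathPowerWithTail (R : α → α → Prop) (t : ℕ) (S T : Finset α) : Prop where
  tail_subset : T ⊆ S
  le_card_tail : t ≤ #T
  lt_of_notMem_tail : ∀ a ∈ S, a ∉ T → ∀ b ∈ T, a < b
  rel : ∀ a ∈ S, ∀ b ∈ S, a < b → #{x ∈ S | a < x ∧ x < b} < t → R a b

theorem isPathPowerWithTail_self (hS : ∀ a ∈ S, ∀ b ∈ S, a < b → R a b) (ht : t ≤ #S) :
    IsPathPowerWithTail R t S S where
  tail_subset := Subset.rfl
  le_card_tail := ht
  lt_of_notMem_tail _ ha haS := absurd ha haS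
  rel a ha b hb hab _ := hS a ha b hb hab

namespace IsPathPowerWithTail

theorem forall_lt (h : IsPathPowerWithTail R t S T) (ht : 1 ≤ t)
    (hTD : ∀ a ∈ T, ∀ b ∈ D, a < b) : ∀ a ∈ S, ∀ b ∈ D, a < b := by
  intro a ha b hb
  by_cases haT : a ∈ T
  · exact hTD a haT b hb
  · obtain ⟨x, hx⟩ : T.Nonempty := card_pos.1 (ht.trans h.le_card_tail)
    exact (h.lt_of_notMem_tail a ha haT x hx).trans (hTD x hx b hb)

theorem union (h : IsPathPowerWithTail R t S T) (ht : 1 ≤ t)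
    (hTD : ∀ a ∈ T, ∀ b ∈ D, a < b) (hTDrel : ∀ a ∈ T, ∀ b ∈ D, R a b)
    (hD : ∀ a ∈ D, ∀ b ∈ D, a < b → R a b) (hDcard : t ≤ #D) :
    IsPathPowerWithTail R t (S ∪ D) D where
  tail_subset := subset_union_right
  le_card_tail := hDcard
  lt_of_notMem_tail a ha haD := h.forall_lt ht hTD a ((mem_union.1 ha).resolve_right haD)
  rel a ha b hb hab hbetween := by
    rcases mem_union.1 ha with haS | haD <;> rcases mem_union.1 hb with hbS | hbD
    · exact h.rel a haS b hbS hab <|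
        (card_le_card (filter_subset_filter _ subset_union_left)).trans_lt hbetween
    · by_cases haT : a ∈ T
      · exact hTDrel a haT b hbD
      have hT : T ⊆ {x ∈ S ∪ D | a < x ∧ x < b} := fun x hx =>
        mem_filter.2 ⟨mem_union_left _ (h.tail_subset hx), h.lt_of_notMem_tail a haS haT x hx,
          hTD x hx b hbD⟩
      exact absurd (h.le_card_tail.trans (card_le_card hT)) hbetween.not_ge
    · exact absurd (h.forall_lt ht hTD b hbS a haD) hab.not_gt
    · exact hD a haD b hbD hab

theorem card_union (h : IsPathPowerWithTail R t S T) (ht : 1 ≤ t)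
    (hTD : ∀ a ∈ T, ∀ b ∈ D, a < b) : #(S ∪ D) = #S + #D :=
  card_union_of_disjoint <| disjoint_left.2 fun a haS haD =>
    lt_irrefl a (h.forall_lt ht hTD a haS a haD)

theorem exists_strictMono (h : IsPathPowerWithTail R t S T) {n : ℕ} (hn : n ≤ #S) :
    ∃ f : Fin n → α, StrictMono f ∧
      ∀ i j : Fin n, i < j → (j : ℕ) ≤ (i : ℕ) + t → R (f i) (f j) := by
  set f : Fin n ↪o α := (Fin.castLEOrderEmb hn).trans (S.orderEmbOfFin rfl)
  have hmem : ∀ i, f i ∈ S := fun i => S.orderEmbOfFin_mem rfl _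
  refine ⟨f, f.strictMono, fun i j hij hjt => h.rel _ (hmem i) _ (hmem j) (f.strictMono hij) ?_⟩
  have hbetween : {x ∈ S | f i < x ∧ x < f j} ⊆ (Ioo i j).map f.toEmbedding := by
    intro x hx
    obtain ⟨hxS, hix, hxj⟩ := mem_filter.1 hx
    obtain ⟨k, rfl⟩ : x ∈ Set.range (S.orderEmbOfFin rfl) := by
      rwa [range_orderEmbOfFin]
    have hik : Fin.castLE hn i < k := (S.orderEmbOfFin rfl).lt_iff_lt.1 hix
    have hkj : k < Fin.castLE hn j := (S.orderEmbOfFin rfl).lt_iff_lt.1 hxj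
    exact mem_map.2 ⟨⟨k, (Fin.lt_def.1 hkj).trans j.2⟩, mem_Ioo.2 ⟨hik, hkj⟩, rfl⟩
  calc #{x ∈ S | f i < x ∧ x < f j} ≤ #(Ioo i j) := (card_le_card hbetween).trans (card_map _).le
    _ = j - i - 1 := Fin.card_Ioo i j
    _ < t := by rw [Fin.lt_def] at hij; omega

end IsPathPowerWithTail

open Classical in
/-- The largest number of vertices in a `t`-th power of a monotone path with tail `T`, and `0` if
there is none. -/
noncomputable def maxPathPower [Fintype α] (R : α → α → Prop) (t : ℕ) (T : Finset α) : ℕ :=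
  ({S | IsPathPowerWithTail R t S T} : Finset (Finset α)).sup card

variable [Fintype α]

theorem IsPathPowerWithTail.card_le_maxPathPower (h : IsPathPowerWithTail R t S T) :
    #S ≤ maxPathPower R t T := by
  classical
  exact le_sup (f := card) (mem_filter.2 ⟨mem_univ _, h⟩)

theorem IsPathPowerWithTail.exists_card_eq_maxPathPower (h : IsPathPowerWithTail R t S T) :
    ∃ S', IsPathPowerWithTail R t S' T ∧ #S' = maxPathPower R t T := by
  classical
  obtain ⟨S', hS', hcard⟩ := exists_mem_eq_sup {S | IsPathPowerWithTail R t S T}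
    ⟨S, mem_filter.2 ⟨mem_univ _, h⟩⟩ card
  exact ⟨S', (mem_filter.1 hS').2, hcard.symm⟩

end PathPower

section OrderedSplit

open Finset

variable {α : Type*} [LinearOrder α]

/-- `F`, `M`, `L` are an initial, a middle and a final segment of `X`, where `F` and `L` have
`q` elements each and `M` is everything between them. -/
structure IsOrderedSplit (q : ℕ) (X F M L : Finset α) : Prop where
  first_subset : F ⊆ X
  middle_subset : M ⊆ X
  last_subset : L ⊆ X
  card_first : #F = q
  card_middle : #M + 2 * q = #X
  card_last : #L = q
  first_lt_middle : ∀ a ∈ F, ∀ b ∈ M, a < b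
  middle_lt_last : ∀ a ∈ M, ∀ b ∈ L, a < b

theorem exists_subsets_forall_lt (X : Finset α) {m n : ℕ} (h : #X = m + n) :
    ∃ Y Z : Finset α, Y ⊆ X ∧ Z ⊆ X ∧ #Y = m ∧ #Z = n ∧ ∀ a ∈ Y, ∀ b ∈ Z, a < b := by
  set f := X.orderEmbOfFin h
  refine ⟨univ.map ((Fin.castAddEmb n).trans f.toEmbedding),
    univ.map ((Fin.natAddEmb m).trans f.toEmbedding), ?_, ?_, by simp, by simp, ?_⟩
  · intro a ha
    obtain ⟨i, -, rfl⟩ := mem_map.1 ha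
    exact X.orderEmbOfFin_mem h _
  · intro b hb
    obtain ⟨i, -, rfl⟩ := mem_map.1 hb
    exact X.orderEmbOfFin_mem h _
  · intro a ha b hb
    obtain ⟨i, -, rfl⟩ := mem_map.1 ha
    obtain ⟨j, -, rfl⟩ := mem_map.1 hb
    refine f.strictMono ?_
    simp only [Fin.lt_def, Fin.castAddEmb_apply, Fin.natAddEmb_apply, Fin.val_castAdd,
      Fin.val_natAdd]
    omega

theorem exists_isOrderedSplit {X : Finset α} {q : ℕ} (h : 2 * q ≤ #X) :
    ∃ F M L, IsOrderedSplit q X F M L := by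
  obtain ⟨F, Z, hF, hZ, hFcard, hZcard, hFZ⟩ :=
    exists_subsets_forall_lt X (m := q) (n := #X - q) (by omega)
  obtain ⟨M, L, hM, hL, hMcard, hLcard, hML⟩ :=
    exists_subsets_forall_lt Z (m := #X - 2 * q) (n := q) (by omega)
  exact ⟨F, M, L, hF, hM.trans hZ, hL.trans hZ, hFcard, by omega, hLcard,
    fun a ha b hb => hFZ a ha b (hM hb), hML⟩

variable {R : α → α → Prop} {t q : ℕ} {X F M L X' F' M' L' S : Finset α}

theorem IsPathPowerWithTail.exists_extend_of_hasBiclique (ht : 1 ≤ t)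
    (hX : ∀ a ∈ X, ∀ b ∈ X, a < b → R a b) (hX' : ∀ a ∈ X', ∀ b ∈ X', a < b → R a b)
    (hXX' : ∀ a ∈ X, ∀ b ∈ X', a < b) (hsplit : IsOrderedSplit q X F M L)
    (hsplit' : IsOrderedSplit q X' F' M' L') (hM' : t ≤ #M')
    (hS : IsPathPowerWithTail R t S M) (h : HasBiclique R t L F') :
    ∃ S', IsPathPowerWithTail R t S' M' ∧ #S + #M' ≤ #S' := by
  obtain ⟨A, B, hA, hB, hAcard, hBcard, hAB⟩ := h
  have hAX := hA.trans hsplit.last_subset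
  have hBX' := hB.trans hsplit'.first_subset
  have hMA : ∀ a ∈ M, ∀ b ∈ A, a < b := fun a ha b hb =>
    hsplit.middle_lt_last a ha b (hA hb)
  have hBM' : ∀ a ∈ B, ∀ b ∈ M', a < b := fun a ha b hb =>
    hsplit'.first_lt_middle a (hB ha) b hb
  have hSA : IsPathPowerWithTail R t (S ∪ A) A := hS.union ht hMA
    (fun a ha b hb => hX a (hsplit.middle_subset ha) b (hAX hb) (hMA a ha b hb))
    (fun a ha b hb => hX a (hAX ha) b (hAX hb)) hAcard.ge
  have hSAB : IsPathPowerWithTail R t (S ∪ A ∪ B) B := hSA.union ht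
    (fun a ha b hb => hXX' a (hAX ha) b (hBX' hb)) hAB
    (fun a ha b hb => hX' a (hBX' ha) b (hBX' hb)) hBcard.ge
  refine ⟨S ∪ A ∪ B ∪ M', hSAB.union ht hBM'
    (fun a ha b hb => hX' a (hBX' ha) b (hsplit'.middle_subset hb) (hBM' a ha b hb))
    (fun a ha b hb => hX' a (hsplit'.middle_subset ha) b (hsplit'.middle_subset hb)) hM', ?_⟩
  rw [hSAB.card_union ht hBM']
  gcongr
  exact subset_union_left.trans subset_union_left

theorem maxPathPower_add_card_le_of_hasBiclique [Fintype α] (ht : 1 ≤ t)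
    (hX : ∀ a ∈ X, ∀ b ∈ X, a < b → R a b) (hX' : ∀ a ∈ X', ∀ b ∈ X', a < b → R a b)
    (hXX' : ∀ a ∈ X, ∀ b ∈ X', a < b) (hsplit : IsOrderedSplit q X F M L)
    (hsplit' : IsOrderedSplit q X' F' M' L') (hM : t ≤ #M) (hM' : t ≤ #M')
    (h : HasBiclique R t L F') : maxPathPower R t M + #M' ≤ maxPathPower R t M' := by
  have hself : IsPathPowerWithTail R t M M := isPathPowerWithTail_self
    (fun a ha b hb => hX a (hsplit.middle_subset ha) b (hsplit.middle_subset hb)) hM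
  obtain ⟨S, hS, hScard⟩ := hself.exists_card_eq_maxPathPower
  obtain ⟨S', hS', hle⟩ := hS.exists_extend_of_hasBiclique ht hX hX' hXX' hsplit hsplit' hM' h
  exact hScard ▸ hle.trans hS'.card_le_maxPathPower

end OrderedSplit

section LayerCounting

open Finset

variable {α : Type*} [DecidableEq α]

theorem card_filter_le_of_card_union_le {P Q : Finset α} {l : α → ℕ} {j : ℕ}
    (h : #({a ∈ P | j ≤ l a} ∪ {b ∈ Q | l b ≤ j}) ≤ #Q) :
    #{a ∈ P | j ≤ l a} ≤ #{b ∈ Q | j < l b} + #{x ∈ P ∩ Q | l x = j} := by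
  have hinter : {a ∈ P | j ≤ l a} ∩ {b ∈ Q | l b ≤ j} = {x ∈ P ∩ Q | l x = j} := by
    ext x
    simp only [mem_inter, mem_filter]
    grind
  have hunion := card_union_add_card_inter {a ∈ P | j ≤ l a} {b ∈ Q | l b ≤ j}
  have hQ := card_filter_add_card_filter_not (s := Q) fun b => l b ≤ j
  simp only [not_le] at hQ
  rw [hinter] at hunion
  omega

theorem sum_add_card_sdiff_le_sum {P Q : Finset α} {l : α → ℕ}
    (h : ∀ j, #({a ∈ P | j ≤ l a} ∪ {b ∈ Q | l b ≤ j}) ≤ #Q) :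
    ∑ a ∈ P, l a + #(P \ Q) ≤ ∑ b ∈ Q, l b := by
  obtain ⟨K, hK⟩ : ∃ K, ∀ a ∈ P, l a < K :=
    ⟨P.sup l + 1, fun a ha => Nat.lt_succ_of_le (le_sup ha)⟩
  have hP : ∑ j ∈ range K, #{a ∈ P | j ≤ l a} = ∑ a ∈ P, (l a + 1) := by
    refine (sum_card_bipartiteAbove_eq_sum_card_bipartiteBelow fun j a => j ≤ l a).trans
      (sum_congr rfl fun a ha => ?_)
    have hlevels : {j ∈ range K | j ≤ l a} = range (l a + 1) := by
      ext j
      have := hK a ha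
      simp only [mem_filter, mem_range]
      omega
    rw [bipartiteBelow, hlevels, card_range]
  have hQ : ∑ j ∈ range K, #{b ∈ Q | j < l b} ≤ ∑ b ∈ Q, l b := by
    refine (sum_card_bipartiteAbove_eq_sum_card_bipartiteBelow fun j b => j < l b).trans_le
      (sum_le_sum fun b _ => ?_)
    calc #{j ∈ range K | j < l b} ≤ #(range (l b)) := card_le_card fun j hj =>
          mem_range.2 (mem_filter.1 hj).2
      _ = l b := card_range _
  have hinter : ∑ j ∈ range K, #{x ∈ P ∩ Q | l x = j} ≤ #(P ∩ Q) :=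
    (sum_card_fiberwise_eq_card_filter (P ∩ Q) (range K) l).trans_le (card_filter_le _ _)
  have hlevels := sum_le_sum fun j (_ : j ∈ range K) => card_filter_le_of_card_union_le (h j)
  rw [hP, sum_add_distrib, sum_add_distrib, sum_const, smul_eq_mul, mul_one,
    ← card_inter_add_card_sdiff P Q] at hlevels
  omega

theorem card_biUnion_le_sum_max' {ι : Type*} [LinearOrder ι] {P : ι → Finset α} {l : α → ℕ}
    {V : Finset ι} (hV : V.Nonempty) (hl : ∀ v ∈ V, #(P v) ≤ ∑ x ∈ P v, l x)
    (hstep : ∀ v ∈ V, ∀ w ∈ V, v < w → ∑ x ∈ P v, l x + #(P w \ P v) ≤ ∑ x ∈ P w, l x) :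
    #(V.biUnion P) ≤ ∑ x ∈ P (V.max' hV), l x := by
  induction V using Finset.induction_on_max with
  | empty => exact absurd hV not_nonempty_empty
  | insert w V hw ih =>
    have hmax : (insert w V).max' hV = w :=
      (max'_eq_iff _ _ _).2 ⟨mem_insert_self w V, fun v hv =>
        (mem_insert.1 hv).elim le_of_eq fun hv => (hw v hv).le⟩
    rw [hmax, biUnion_insert]
    rcases V.eq_empty_or_nonempty with rfl | hne
    · simpa only [biUnion_empty, union_empty] using hl w (mem_insert_self w ∅)
    set v := V.max' hne
    have hv : v ∈ V := V.max'_mem hne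
    have ih := ih hne (fun u hu => hl u (mem_insert_of_mem hu)) fun u hu u' hu' =>
      hstep u (mem_insert_of_mem hu) u' (mem_insert_of_mem hu')
    have hnew : P w ∪ V.biUnion P ⊆ V.biUnion P ∪ (P w \ P v) := by
      intro x hx
      have := subset_biUnion_of_mem P hv
      grind
    calc #(P w ∪ V.biUnion P) ≤ #(V.biUnion P) + #(P w \ P v) :=
          (card_le_card hnew).trans (card_union_le _ _)
      _ ≤ ∑ x ∈ P v, l x + #(P w \ P v) := by gcongr
      _ ≤ ∑ x ∈ P w, l x :=
          hstep v (mem_insert_of_mem hv) w (mem_insert_self w V) (hw v hv)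

end LayerCounting

/-- The relation of being joined by a blue edge in the coloring `χ`. -/
abbrev Blue {N : ℕ} (χ : Fin N → Fin N → Bool) (a b : Fin N) : Prop :=
  χ a b = false

/-- The coloring `χ` contains a red clique of size `k`, listed in increasing order. -/
def HasRedClique {N : ℕ} (χ : Fin N → Fin N → Bool) (k : ℕ) : Prop :=
  ∃ f : Fin k → Fin N, StrictMono f ∧ ∀ i j : Fin k, i < j → χ (f i) (f j) = true

namespace RedNet

open Finset

variable {N s r t : ℕ} {χ : Fin N → Fin N → Bool} (C : RedNet N χ s r t) {u v w a b y z : ℕ}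

section Forest

/-- `u` is a descendant of `v` in the forest of the net; every vertex is a descendant of
itself. -/
def IsDescendant (u v : ℕ) : Prop :=
  Relation.ReflTransGen (fun a b : ℕ => C.par a = some b) u v

variable {C}

theorem IsDescendant.mem_verts (h : C.IsDescendant u v) (hu : u ∈ C.verts) : v ∈ C.verts := by
  induction h with
  | refl => exact hu
  | tail _ hpar ih => exact C.par_mem _ ih _ hpar

theorem IsDescendant.le (h : C.IsDescendant u v) (hu : u ∈ C.verts) : v ≤ u := by
  rcases Relation.reflTransGen_iff_eq_or_transGen.1 h with rfl | htrans
  · exact le_rfl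
  · exact (C.desc_gt u hu v (h.mem_verts hu) htrans).le

theorem IsDescendant.dep_le (h : C.IsDescendant u v) (hu : u ∈ C.verts) : C.dep v ≤ C.dep u := by
  induction h using Relation.ReflTransGen.head_induction_on with
  | refl => exact le_rfl
  | head hpar _ ih =>
    rw [C.dep_par _ hu _ hpar]
    exact (ih (C.par_mem _ hu _ hpar)).trans (Nat.le_succ _)

theorem IsDescendant.eq_of_dep_eq (h : C.IsDescendant u v) (hu : u ∈ C.verts)
    (hdep : C.dep u = C.dep v) : u = v := by
  rcases Relation.ReflTransGen.cases_head h with huv | ⟨p, hpar, hpv⟩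
  · exact huv
  · have hle := IsDescendant.dep_le hpv (C.par_mem _ hu _ hpar)
    have hdep_par := C.dep_par _ hu _ hpar
    omega

theorem IsDescendant.lt_of_lt (h : C.IsDescendant u y) (hu : u ∈ C.verts) (hz : z ∈ C.verts)
    (hdep : C.dep y = C.dep z) (hyz : y < z) : u < z := by
  rcases Relation.reflTransGen_iff_eq_or_transGen.1 h with rfl | htrans
  · exact hyz
  · exact C.well_ordered y (h.mem_verts hu) z hz hdep hyz u hu htrans

theorem exists_isDescendant_dep_eq (hv : v ∈ C.verts) {d : ℕ} (hd : d ≤ C.dep v) :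
    ∃ u, C.IsDescendant v u ∧ C.dep u = d := by
  induction hk : C.dep v generalizing v with
  | zero => exact ⟨v, .refl, by omega⟩
  | succ k ih =>
    rcases hd.eq_or_lt with rfl | hlt
    · exact ⟨v, .refl, rfl⟩
    obtain ⟨p, hpar⟩ : ∃ p, C.par v = some p :=
      Option.ne_none_iff_exists'.1 fun hroot => by
        have := (C.root_iff v hv).1 hroot
        omega
    have hdep := C.dep_par v hv p hpar
    obtain ⟨u, hpu, hu⟩ := ih (C.par_mem v hv p hpar) (by omega) (by omega)
    exact ⟨u, hpu.head hpar, hu⟩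

theorem exists_leaf_isDescendant (hv : v ∈ C.verts) :
    ∃ u ∈ C.verts, C.dep u = s - 1 ∧ C.IsDescendant u v := by
  classical
  obtain ⟨u, hu, hmax⟩ := exists_max_image {u ∈ C.verts | C.IsDescendant u v} id
    ⟨v, mem_filter.2 ⟨hv, .refl⟩⟩
  obtain ⟨huC, huv⟩ := mem_filter.1 hu
  refine ⟨u, huC, C.balanced u huC fun x hx hpar => ?_, huv⟩
  have hxu : x ≤ u := hmax x (mem_filter.2 ⟨hx, huv.head hpar⟩)
  exact hxu.not_gt (C.desc_gt x hx u huC (.single hpar))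

open Classical in
variable (C) in
/-- The vertices on the path from `v` to the root of its tree, including `v`. -/
noncomputable def rootPath (v : ℕ) : Finset ℕ :=
  {u ∈ C.verts | C.IsDescendant v u}

theorem mem_rootPath : u ∈ C.rootPath v ↔ u ∈ C.verts ∧ C.IsDescendant v u := by
  classical
  exact mem_filter

-- Well-orderedness only compares vertices of equal depth, so replace the deeper one of `a` and `b`
-- by its ancestor at the depth of the other.
theorem isDescendant_of_mem_rootPath_of_le (hv : v ∈ C.verts) (hw : w ∈ C.verts) (hvw : v ≤ w)
    (ha : a ∈ C.rootPath v) (hb : b ∈ C.rootPath w) (hba : b ≤ a) : C.IsDescendant a b := by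
  obtain ⟨haC, hva⟩ := mem_rootPath.1 ha
  obtain ⟨hbC, hwb⟩ := mem_rootPath.1 hb
  rcases le_total (C.dep a) (C.dep b) with hdep | hdep
  · obtain ⟨y, hby, hy⟩ := exists_isDescendant_dep_eq hbC hdep
    rcases ((hby.le hbC).trans hba).lt_or_eq with hlt | rfl
    · have hwa : w < a := IsDescendant.lt_of_lt (hwb.trans hby) hw haC hy hlt
      exact absurd (hva.le hv) (hvw.trans_lt hwa).not_ge
    · exact hba.antisymm (hby.le hbC) ▸ .refl
  · obtain ⟨y, hay, hy⟩ := exists_isDescendant_dep_eq haC hdep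
    have hyC := hay.mem_verts haC
    rcases lt_trichotomy y b with hlt | rfl | hlt
    · exact absurd hba (hay.lt_of_lt haC hbC hy hlt).not_ge
    · exact hay
    · have hwy : w < y := hwb.lt_of_lt hw hyC hy.symm hlt
      exact absurd (IsDescendant.le (hva.trans hay) hv) (hvw.trans_lt hwy).not_ge

theorem injOn_dep_rootPath (hv : v ∈ C.verts) : Set.InjOn C.dep (C.rootPath v) := by
  intro a ha b hb hdep
  rcases le_total b a with hba | hab
  · exact (isDescendant_of_mem_rootPath_of_le hv hv le_rfl ha hb hba).eq_of_dep_eq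
      (mem_rootPath.1 ha).1 hdep
  · exact ((isDescendant_of_mem_rootPath_of_le hv hv le_rfl hb ha hab).eq_of_dep_eq
      (mem_rootPath.1 hb).1 hdep.symm).symm

theorem card_rootPath (hv : v ∈ C.verts) : #(C.rootPath v) = C.dep v + 1 := by
  rw [← card_range (C.dep v + 1), ← card_image_of_injOn (injOn_dep_rootPath hv)]
  congr 1
  ext d
  simp only [mem_image, mem_range, Nat.lt_succ_iff]
  constructor
  · rintro ⟨u, hu, rfl⟩
    exact (mem_rootPath.1 hu).2.dep_le hv
  · intro hd
    obtain ⟨u, hvu, hu⟩ := exists_isDescendant_dep_eq hv hd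
    exact ⟨u, mem_rootPath.2 ⟨hvu.mem_verts hv, hvu⟩, hu⟩

theorem not_hasBiclique_of_isDescendant (hu : u ∈ C.verts) (h : C.IsDescendant u v) (hvu : v ≠ u) :
    ¬ HasBiclique (Blue χ) t (C.X v) (C.X u) :=
  C.no_blue_Ktt v (h.mem_verts hu) u hu
    ((Relation.reflTransGen_iff_eq_or_transGen.1 h).resolve_left hvu)

end Forest

section RedClique

variable {C} {q : ℕ} {F M L : ℕ → Finset (Fin N)}

theorem hasRedClique_of_forall_not_hasBiclique (hs : s ≠ 0) (hq : (4 * s ^ 2) ^ t ≤ q)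
    {W : Finset ℕ} (hW : W ⊆ C.verts) (hcard : s + 1 ≤ #W) {Y : ℕ → Finset (Fin N)}
    (hYX : ∀ x ∈ W, Y x ⊆ C.X x) (hYcard : ∀ x ∈ W, #(Y x) = q)
    (h : ∀ x ∈ W, ∀ y ∈ W, x < y → ¬ HasBiclique (Blue χ) t (Y x) (Y y)) :
    HasRedClique χ (s + 1) := by
  let o : Fin (s + 1) ↪o ℕ := (Fin.castLEOrderEmb hcard).trans (W.orderEmbOfFin rfl)
  have ho : ∀ i, o i ∈ W := fun i => W.orderEmbOfFin_mem rfl _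
  obtain ⟨f, hfY, hfχ⟩ := exists_transversal_of_forall_not_hasBiclique (Blue χ) hs hq
    (fun i => hYcard (o i) (ho i)) fun i j hij => h _ (ho i) _ (ho j) (o.strictMono hij)
  refine ⟨f, fun i j hij => ?_, fun i j hij => Bool.eq_true_of_not_eq_false (hfχ i j hij)⟩
  exact C.X_ordered _ (hW (ho i)) _ (hW (ho j)) (o.strictMono hij) _ (hYX _ (ho i) (hfY i)) _
    (hYX _ (ho j) (hfY j))

theorem hasRedClique_of_lt_card_union (hs : s ≠ 0) (hq : (4 * s ^ 2) ^ t ≤ q)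
    (hsplit : ∀ x ∈ C.verts, IsOrderedSplit q (C.X x) (F x) (M x) (L x))
    (hv : v ∈ C.verts) (hw : w ∈ C.verts) (hvw : v ≤ w) {A B : Finset ℕ}
    (hA : A ⊆ C.rootPath v) (hB : B ⊆ C.rootPath w)
    (hAB : ∀ a ∈ A, ∀ b ∈ B, a < b → ¬ HasBiclique (Blue χ) t (L a) (F b))
    (hcard : s < #(A ∪ B)) : HasRedClique χ (s + 1) := by
  -- A pair `x < y` in `A ∪ B` can fail to be comparable in the forest only if `x ∈ A`, `y ∈ B`.
  set Y : ℕ → Finset (Fin N) := fun x => if x ∈ B then F x else L x with hY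
  have hverts : A ∪ B ⊆ C.verts := fun x hx => by
    rcases mem_union.1 hx with hxA | hxB
    · exact (mem_rootPath.1 (hA hxA)).1
    · exact (mem_rootPath.1 (hB hxB)).1
  have hYX : ∀ x ∈ A ∪ B, Y x ⊆ C.X x := fun x hx => by
    have hx := hsplit x (hverts hx)
    simp only [hY]
    split_ifs
    exacts [hx.first_subset, hx.last_subset]
  have hYcard : ∀ x ∈ A ∪ B, #(Y x) = q := fun x hx => by
    have hx := hsplit x (hverts hx)
    simp only [hY]
    split_ifs
    exacts [hx.card_first, hx.card_last]
  refine hasRedClique_of_forall_not_hasBiclique hs hq hverts hcard hYX hYcard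
    fun x hx y hy hxy => ?_
  suffices hcases : C.IsDescendant y x ∨ x ∈ A ∧ x ∉ B ∧ y ∈ B by
    rcases hcases with hdesc | ⟨hxA, hxB, hyB⟩
    · exact fun h => not_hasBiclique_of_isDescendant (hverts hy) hdesc hxy.ne
        (h.mono (hYX x hx) (hYX y hy))
    · simpa only [hY, hxB, hyB, if_true, if_false] using hAB x hxA y hyB hxy
  by_cases hxB : x ∈ B
  · by_cases hyB : y ∈ B
    · exact .inl (isDescendant_of_mem_rootPath_of_le hw hw le_rfl (hB hyB) (hB hxB) hxy.le)
    · have hyA := (mem_union.1 hy).resolve_right hyB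
      exact .inl (isDescendant_of_mem_rootPath_of_le hv hw hvw (hA hyA) (hB hxB) hxy.le)
  · have hxA := (mem_union.1 hx).resolve_right hxB
    by_cases hyB : y ∈ B
    · exact .inr ⟨hxA, hxB, hyB⟩
    · have hyA := (mem_union.1 hy).resolve_right hyB
      exact .inl (isDescendant_of_mem_rootPath_of_le hv hv le_rfl (hA hyA) (hA hxA) hxy.le)

end RedClique

section Heights

variable {C} {q : ℕ} {F M L : ℕ → Finset (Fin N)} {l : ℕ → ℕ}

theorem sum_rootPath_add_card_sdiff_le (hs : s ≠ 0) (hq : (4 * s ^ 2) ^ t ≤ q)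
    (hsplit : ∀ x ∈ C.verts, IsOrderedSplit q (C.X x) (F x) (M x) (L x))
    (hlt : ∀ a ∈ C.verts, ∀ b ∈ C.verts, a < b → HasBiclique (Blue χ) t (L a) (F b) → l a < l b)
    (hred : ¬ HasRedClique χ (s + 1)) (hv : v ∈ C.verts) (hw : w ∈ C.verts) (hvw : v ≤ w)
    (hvleaf : C.dep v = s - 1) (hwleaf : C.dep w = s - 1) :
    ∑ x ∈ C.rootPath v, l x + #(C.rootPath w \ C.rootPath v) ≤ ∑ x ∈ C.rootPath w, l x := by
  have hvcard : #(C.rootPath v) = s := by rw [card_rootPath hv]; omega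
  have hwcard : #(C.rootPath w) = s := by rw [card_rootPath hw]; omega
  rw [← card_sdiff_comm (hvcard.trans hwcard.symm)]
  refine sum_add_card_sdiff_le_sum fun j => ?_
  rw [hwcard]
  by_contra! hcard
  refine hred (hasRedClique_of_lt_card_union hs hq hsplit hv hw hvw (filter_subset _ _)
    (filter_subset _ _) (fun a ha b hb hab hbiclique => ?_) hcard)
  obtain ⟨haP, hja⟩ := mem_filter.1 ha
  obtain ⟨hbP, hbj⟩ := mem_filter.1 hb
  exact (hlt a (mem_rootPath.1 haP).1 b (mem_rootPath.1 hbP).1 hab hbiclique).not_ge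
    (hbj.trans hja)

theorem exists_card_verts_le_mul (hs : s ≠ 0) (hq : (4 * s ^ 2) ^ t ≤ q)
    (hsplit : ∀ x ∈ C.verts, IsOrderedSplit q (C.X x) (F x) (M x) (L x))
    (hpos : ∀ x ∈ C.verts, 1 ≤ l x)
    (hlt : ∀ a ∈ C.verts, ∀ b ∈ C.verts, a < b → HasBiclique (Blue χ) t (L a) (F b) → l a < l b)
    (hred : ¬ HasRedClique χ (s + 1)) (hne : C.verts.Nonempty) :
    ∃ x ∈ C.verts, #C.verts ≤ s * l x := by
  set leaves := {v ∈ C.verts | C.dep v = s - 1}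
  have hcover : C.verts ⊆ leaves.biUnion C.rootPath := fun x hx => by
    obtain ⟨u, hu, hdep, hdesc⟩ := exists_leaf_isDescendant hx
    exact mem_biUnion.2 ⟨u, mem_filter.2 ⟨hu, hdep⟩, mem_rootPath.2 ⟨hx, hdesc⟩⟩
  have hleaves : leaves.Nonempty := (biUnion_nonempty.1 (hne.mono hcover)).imp fun _ h => h.1
  have htotal : #C.verts ≤ ∑ x ∈ C.rootPath (leaves.max' hleaves), l x := by
    refine (card_le_card hcover).trans (card_biUnion_le_sum_max' hleaves ?_ ?_)
    · intro v _
      rw [card_eq_sum_ones]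
      exact sum_le_sum fun x hx => hpos x (mem_rootPath.1 hx).1
    · intro v hv w hw hvw
      obtain ⟨hvC, hvleaf⟩ := mem_filter.1 hv
      obtain ⟨hwC, hwleaf⟩ := mem_filter.1 hw
      exact sum_rootPath_add_card_sdiff_le hs hq hsplit hlt hred hvC hwC hvw.le hvleaf hwleaf
  obtain ⟨hvC, hvleaf⟩ := mem_filter.1 (leaves.max'_mem hleaves)
  have hcard : #(C.rootPath (leaves.max' hleaves)) = s := by rw [card_rootPath hvC]; omega
  obtain ⟨x, hx, hmax⟩ := exists_max_image (C.rootPath (leaves.max' hleaves)) l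
    (card_pos.1 (by omega))
  refine ⟨x, (mem_rootPath.1 hx).1, htotal.trans ?_⟩
  simpa only [hcard, smul_eq_mul] using sum_le_card_nsmul _ _ _ hmax

theorem exists_isPathPowerWithTail_of_isOrderedSplit {c : ℕ} (hs : s ≠ 0) (ht : 1 ≤ t)
    (hq : (4 * s ^ 2) ^ t ≤ q) (hc : c + 2 * q = r) (htc : t ≤ c)
    (hsplit : ∀ x ∈ C.verts, IsOrderedSplit q (C.X x) (F x) (M x) (L x))
    (hne : C.verts.Nonempty) (hred : ¬ HasRedClique χ (s + 1)) :
    ∃ S T, IsPathPowerWithTail (Blue χ) t S T ∧ #C.verts * c ≤ s * #S := by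
  have hcpos : 0 < c := ht.trans htc
  have hMcard : ∀ v ∈ C.verts, #(M v) = c := fun v hv => by
    have := (hsplit v hv).card_middle
    rw [C.X_card v hv] at this
    omega
  have hself : ∀ v ∈ C.verts, IsPathPowerWithTail (Blue χ) t (M v) (M v) := fun v hv =>
    isPathPowerWithTail_self (fun a ha b hb => C.X_blue v hv a ((hsplit v hv).middle_subset ha) b
      ((hsplit v hv).middle_subset hb)) (htc.trans_eq (hMcard v hv).symm)
  -- The height of `v` counts how many blocks of size `c` fit into a path power ending in `M v`.
  let height : ℕ → ℕ := fun v => maxPathPower (Blue χ) t (M v) / c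
  have height_pos : ∀ v ∈ C.verts, 1 ≤ height v := fun v hv => by
    rw [Nat.one_le_div_iff hcpos, ← hMcard v hv]
    exact (hself v hv).card_le_maxPathPower
  have height_lt : ∀ a ∈ C.verts, ∀ b ∈ C.verts, a < b → HasBiclique (Blue χ) t (L a) (F b) →
      height a < height b := fun a ha b hb hab h => by
    have hglue := maxPathPower_add_card_le_of_hasBiclique ht (C.X_blue a ha) (C.X_blue b hb)
      (C.X_ordered a ha b hb hab) (hsplit a ha) (hsplit b hb) (hself a ha).le_card_tail
      (hself b hb).le_card_tail h
    rw [hMcard b hb] at hglue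
    calc height a < height a + 1 := Nat.lt_succ_self _
      _ = (maxPathPower (Blue χ) t (M a) + c) / c := (Nat.add_div_right _ hcpos).symm
      _ ≤ height b := Nat.div_le_div_right hglue
  obtain ⟨x, hx, hcard⟩ :=
    exists_card_verts_le_mul hs hq hsplit height_pos height_lt hred hne
  obtain ⟨S, hS, hScard⟩ := (hself x hx).exists_card_eq_maxPathPower
  refine ⟨S, M x, hS, ?_⟩
  calc #C.verts * c ≤ s * (#S / c) * c := by
        rw [hScard]
        exact Nat.mul_le_mul_right _ hcard
    _ = s * (#S / c * c) := mul_assoc _ _ _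
    _ ≤ s * #S := Nat.mul_le_mul_left _ (Nat.div_mul_le_self _ _)

variable (C) in
theorem exists_isPathPowerWithTail (hs : s ≠ 0) (ht : 1 ≤ t) (hr : 3 * (4 * s ^ 2) ^ t ≤ r)
    (hne : C.verts.Nonempty) (hred : ¬ HasRedClique χ (s + 1)) :
    ∃ S T, IsPathPowerWithTail (Blue χ) t S T ∧ #C.verts * r ≤ 3 * s * #S := by
  obtain ⟨q, c, hc, hq, hrc⟩ : ∃ q c, c + 2 * q = r ∧ (4 * s ^ 2) ^ t ≤ q ∧ r ≤ 3 * c :=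
    ⟨r / 3, r - 2 * (r / 3), by omega, by omega, by omega⟩
  have htc : t ≤ c := by
    have : t < (4 * s ^ 2) ^ t := Nat.lt_pow_self (by nlinarith [Nat.pos_of_ne_zero hs])
    omega
  have hexists : ∀ v ∈ C.verts, ∃ F M L, IsOrderedSplit q (C.X v) F M L := fun v hv =>
    exists_isOrderedSplit (by rw [C.X_card v hv]; omega)
  choose! F M L hsplit using hexists
  obtain ⟨S, T, hS, hcard⟩ :=
    exists_isPathPowerWithTail_of_isOrderedSplit hs ht hq hc htc hsplit hne hred
  refine ⟨S, T, hS, ?_⟩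
  calc #C.verts * r ≤ #C.verts * (3 * c) := Nat.mul_le_mul_left _ hrc
    _ = 3 * (#C.verts * c) := mul_left_comm _ _ _
    _ ≤ 3 * (s * #S) := Nat.mul_le_mul_left _ hcard
    _ = 3 * s * #S := (mul_assoc _ _ _).symm

end Heights

end RedNet

/-- let `s ≥ 1`, `n ≥ t ≥ 1`, and suppose a red/blue coloring of
`K_N` admits an `s`-red-net of order `r ≥ 3·(4s²)^t` with `|V(F)| ≥ 3sn/r`. Then the
coloring contains a red clique of size `s + 1` or a blue ordered copy of `P_n^t`. -/
theorem stmt16 (s t n r N : ℕ) (hs : 1 ≤ s) (ht : 1 ≤ t) (hn : t ≤ n)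
    (χ : Fin N → Fin N → Bool) (hr : 3 * (4 * s ^ 2) ^ t ≤ r)
    (C : RedNet N χ s r t) (hF : (3 * s * n : ℝ) / r ≤ (C.verts.card : ℝ)) :
    (∃ f : Fin (s + 1) → Fin N, StrictMono f ∧
      ∀ i j : Fin (s + 1), i < j → χ (f i) (f j) = true) ∨
    (∃ f : Fin n → Fin N, StrictMono f ∧
      ∀ i j : Fin n, i < j → (j : ℕ) ≤ (i : ℕ) + t → χ (f i) (f j) = false) := by
  rw [or_iff_not_imp_left]
  intro hred
  have hspos : 0 < 3 * s := by omega
  have hrpos : 0 < r := lt_of_lt_of_le (by positivity) hr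
  have hcard : 3 * s * n ≤ C.verts.card * r := by
    rw [div_le_iff₀ (by exact_mod_cast hrpos)] at hF
    exact_mod_cast hF
  have hne : C.verts.Nonempty := by
    rw [← Finset.card_pos]
    exact Nat.pos_of_mul_pos_right ((Nat.mul_pos hspos (ht.trans hn)).trans_le hcard)
  obtain ⟨S, T, hS, hScard⟩ := C.exists_isPathPowerWithTail (by omega) ht hr hne hred
  exact hS.exists_strictMono (Nat.le_of_mul_le_mul_left (hcard.trans hScard) hspos)
end

section
/- For all positive integers t and n, the ordered Ramsey number satisfies R_<(P_n[t], K_n) ≤ (2 t n^3)^{2t−1}. -/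
/-- `χ i j` is the color of the edge `{i, j}` for `i < j`: `true` = red, `false` = blue.
A red ordered copy of `P_n[t]`, the `t`-blowup of the monotone path `P_n`: it has
`n·t` vertices, vertex `i` (0-indexed) lying in block `i / t`, and two vertices are
adjacent exactly when their blocks are consecutive. -/
def ContainsRedPathBlowup (N n t : ℕ) (χ : Fin N → Fin N → Bool) : Prop :=
  ∃ f : Fin (n * t) → Fin N, StrictMono f ∧
    ∀ i j : Fin (n * t), (j : ℕ) / t = (i : ℕ) / t + 1 → χ (f i) (f j) = true

/-- A blue ordered copy of the complete ordered graph `K_m`. -/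
def ContainsBlueClique (N m : ℕ) (χ : Fin N → Fin N → Bool) : Prop :=
  ∃ f : Fin m → Fin N, StrictMono f ∧ ∀ i j : Fin m, i < j → χ (f i) (f j) = false

/-- The ordered Ramsey number `R_<(P_n[t], K_m)`. -/
noncomputable def ordRamseyBlowupClique (n t m : ℕ) : ℕ :=
  sInf {N | ∀ χ : Fin N → Fin N → Bool,
    ContainsRedPathBlowup N n t χ ∨ ContainsBlueClique N m χ}

/-!
Write red edges as a relation `r` refining the order, so that a blue clique is an `r`-antichain. Fix
`s > (t - 1) m` and call an `s`-set rich at level `k` if each of its `t`-subsets is the last block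
of a red `P_{k+1}[t]`; every `s`-set is rich at level `0`. Take `m (2 D + 1)` disjoint sets rich at
level `k`, where `D = (s choose t) (s - 1)`. If a `t`-subset `A` of one of them has `s` common red
out-neighbours, these form a set rich at level `k + 1`, because `A` can be followed by any `t` of
them. Otherwise at most `D` vertices receive `t` red edges from any one of the sets. Then there are
`m` of the sets such that no vertex of one receives `t` red edges from another. Choosing vertices
from these `m` sets from right to left, and deleting after each choice the at most `t - 1` red
in-neighbours in every remaining set, produces a blue `K_m`.
-/

open Finset

section Digraph

variable {β : Type*} {r : β → β → Prop} [DecidableRel r]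

theorem exists_inDegree_le_of_outDegree_le {F : Finset β} {D : ℕ} (hF : F.Nonempty)
    (hout : ∀ x ∈ F, #{y ∈ F | r x y} ≤ D) : ∃ x ∈ F, #{y ∈ F | r y x} ≤ D := by
  refine exists_le_of_sum_le hF ?_
  calc ∑ x ∈ F, #{y ∈ F | r y x} = ∑ x ∈ F, #{y ∈ F | r x y} :=
        (sum_card_bipartiteAbove_eq_sum_card_bipartiteBelow r).symm
    _ ≤ ∑ _x ∈ F, D := sum_le_sum hout

theorem exists_isAntichain_of_outDegree_le {D n : ℕ} {F : Finset β}
    (hF : n * (2 * D + 1) ≤ #F) (hout : ∀ x ∈ F, #{y ∈ F | r x y} ≤ D) :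
    ∃ G ⊆ F, #G = n ∧ IsAntichain r (G : Set β) := by
  classical
  induction n generalizing F with
  | zero => exact ⟨∅, by simp⟩
  | succ n ih =>
    have hsucc : (n + 1) * (2 * D + 1) = n * (2 * D + 1) + (2 * D + 1) := by ring
    obtain ⟨x, hx, hin⟩ := exists_inDegree_le_of_outDegree_le (card_pos.1 (by omega)) hout
    let B : Finset β := insert x ({y ∈ F | r x y} ∪ {y ∈ F | r y x})
    have hB : #B ≤ 2 * D + 1 :=
      calc #B ≤ #{y ∈ F | r x y} + #{y ∈ F | r y x} + 1 :=
            (card_insert_le _ _).trans (Nat.succ_le_succ (card_union_le _ _))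
        _ ≤ D + D + 1 := by gcongr; exact hout x hx
        _ = 2 * D + 1 := by ring
    obtain ⟨G, hGF, hGn, hG⟩ := ih (F := F \ B)
      (by have := le_card_sdiff B F; omega)
      (fun y hy => (card_le_card (filter_subset_filter _ sdiff_subset)).trans
        (hout y (sdiff_subset hy)))
    have hGx : ∀ y ∈ G, y ≠ x ∧ ¬r x y ∧ ¬r y x := by
      intro y hy
      have hyF := mem_sdiff.1 (hGF hy)
      simp only [B, mem_insert, mem_union, mem_filter, not_or] at hyF
      tauto
    refine ⟨insert x G, insert_subset hx (hGF.trans sdiff_subset), ?_, ?_⟩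
    · rw [card_insert_of_notMem fun hxG => (hGx x hxG).1 rfl, hGn]
    · rw [coe_insert]
      exact hG.insert (fun y hy _ => (hGx y hy).2.2) (fun y hy _ => (hGx y hy).2.1)

theorem card_filter_le_inDegree_le {U W : Finset β} {t d : ℕ}
    (hco : ∀ A ⊆ U, #A = t → #{v ∈ W | ∀ a ∈ A, r a v} ≤ d) :
    #{v ∈ W | t ≤ #{a ∈ U | r a v}} ≤ (#U).choose t * d := by
  classical
  rw [← card_powersetCard]
  have hcover : {v ∈ W | t ≤ #{a ∈ U | r a v}} ⊆
      (U.powersetCard t).biUnion fun A => {v ∈ W | ∀ a ∈ A, r a v} := by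
    intro v hv
    obtain ⟨hvW, ht⟩ := mem_filter.1 hv
    obtain ⟨A, hA, hAt⟩ := exists_subset_card_eq ht
    exact mem_biUnion.2 ⟨A, mem_powersetCard.2 ⟨hA.trans (filter_subset _ _), hAt⟩,
      mem_filter.2 ⟨hvW, fun a ha => (mem_filter.1 (hA ha)).2⟩⟩
  exact (card_le_card hcover).trans <| card_biUnion_le_card_mul _ _ _ fun A hA =>
    hco A (mem_powersetCard.1 hA).1 (mem_powersetCard.1 hA).2

end Digraph

section DisjointFamily

variable {α : Type*}

theorem card_filter_not_disjoint_le [DecidableEq α] {F : Finset (Finset α)}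
    (hF : (F : Set (Finset α)).PairwiseDisjoint id) (B : Finset α) :
    #{U ∈ F | ¬Disjoint U B} ≤ #B := by
  have hdisj : (({U ∈ F | ¬Disjoint U B} : Finset _) : Set (Finset α)).PairwiseDisjoint (· ∩ B) :=
    (hF.subset (filter_subset _ _)).mono fun _ => inter_subset_left
  refine (card_le_card_biUnion hdisj fun U hU => ?_).trans
    (card_le_card (biUnion_subset.2 fun _ _ => inter_subset_right))
  exact not_disjoint_iff_nonempty_inter.1 (mem_filter.1 hU).2

theorem exists_pairwiseDisjoint_of_card_le {P : Finset α → Prop} {W : Finset α} {s L M : ℕ}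
    (hs : 0 < s) (hP : ∀ V ⊆ W, L ≤ #V → ∃ U ⊆ V, #U = s ∧ P U) (hW : L + s * M ≤ #W) :
    ∃ F : Finset (Finset α), #F = M ∧ (F : Set (Finset α)).PairwiseDisjoint id ∧
      ∀ U ∈ F, U ⊆ W ∧ #U = s ∧ P U := by
  classical
  induction M generalizing W with
  | zero => exact ⟨∅, by simp⟩
  | succ M ih =>
    obtain ⟨U, hUW, hUs, hPU⟩ := hP W Subset.rfl (by omega)
    obtain ⟨F, hFM, hdisj, hF⟩ := ih (W := W \ U) (fun V hV => hP V (hV.trans sdiff_subset))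
      (by rw [card_sdiff_of_subset hUW, hUs]; rw [mul_add_one] at hW; omega)
    have hUF : ∀ V ∈ F, Disjoint U V := fun V hV =>
      disjoint_sdiff.mono_right (hF V hV).1
    have hU_notMem : U ∉ F := fun hU =>
      (card_pos.1 (hUs ▸ hs)).ne_empty (disjoint_self_iff_empty U |>.1 (hUF U hU))
    refine ⟨insert U F, by rw [card_insert_of_notMem hU_notMem, hFM], ?_, ?_⟩
    · rw [coe_insert]
      exact hdisj.insert fun V hV _ => hUF V hV
    · exact forall_mem_insert .. |>.2
        ⟨⟨hUW, hUs, hPU⟩, fun V hV => ⟨(hF V hV).1.trans sdiff_subset, (hF V hV).2⟩⟩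

end DisjointFamily

theorem mul_lt_card_filter_not {β : Type*} {p : β → Prop} [DecidablePred p] {s : Finset β}
    {c m : ℕ} (hs : c * (m + 1) < #s) (hp : #{a ∈ s | p a} ≤ c) :
    c * m < #{a ∈ s | ¬p a} := by
  have hsplit := card_filter_add_card_filter_not (s := s) (p ·)
  rw [mul_add_one] at hs
  omega

section Antichain

variable {α : Type*} [LinearOrder α] {r : α → α → Prop} [DecidableRel r]

theorem exists_isAntichain_of_inDegree_le {ι : Type*} (hr : ∀ a b, r a b → a < b)
    {c : ℕ} {I : Finset ι} {g : ι → Finset α} (hcard : ∀ i ∈ I, c * #I < #(g i))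
    (hdisj : (I : Set ι).PairwiseDisjoint g)
    (hin : ∀ i ∈ I, ∀ j ∈ I, i ≠ j → ∀ v ∈ g j, #{a ∈ g i | r a v} ≤ c) :
    ∃ S ⊆ I.biUnion g, #S = #I ∧ IsAntichain r (S : Set α) := by
  classical
  induction hm : #I generalizing I g with
  | zero => exact ⟨∅, by simp⟩
  | succ m ih =>
    have hne : (I.biUnion g).Nonempty := by
      obtain ⟨i, hi⟩ : I.Nonempty := card_pos.1 (by omega)
      exact (card_pos.1 (Nat.zero_lt_of_lt (hcard i hi))).mono (subset_biUnion_of_mem g hi)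
    obtain ⟨v, hv, hmax⟩ := exists_max_image _ id hne
    obtain ⟨j, hj, hvj⟩ := mem_biUnion.1 hv
    let g' : ι → Finset α := fun i => {a ∈ g i | ¬r a v}
    have hg' : ∀ i, g' i ⊆ g i := fun i => filter_subset _ _
    have hm' : #(I.erase j) = m := by rw [card_erase_of_mem hj, hm, Nat.add_sub_cancel]
    have hcard' : ∀ i ∈ I.erase j, c * #(I.erase j) < #(g' i) := by
      intro i hi
      obtain ⟨hij, hiI⟩ := mem_erase.1 hi
      rw [hm']
      exact mul_lt_card_filter_not (hm ▸ hcard i hiI) (hin i hiI j hj hij v hvj)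
    obtain ⟨S, hSg, hSm, hS⟩ := ih hcard'
      ((hdisj.subset (erase_subset j I)).mono hg')
      (fun i hi k hk hik w hw => (card_le_card (filter_subset_filter _ (hg' i))).trans
        (hin i (mem_of_mem_erase hi) k (mem_of_mem_erase hk) hik w (hg' k hw)))
      hm'
    have hSv : ∀ a ∈ S, a ∈ I.biUnion g ∧ a ≠ v ∧ ¬r a v := by
      intro a ha
      obtain ⟨i, hi, hai⟩ := mem_biUnion.1 (hSg ha)
      obtain ⟨hij, hiI⟩ := mem_erase.1 hi
      obtain ⟨hag, hav⟩ := mem_filter.1 hai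
      refine ⟨mem_biUnion.2 ⟨i, hiI, hag⟩, ?_, hav⟩
      rintro rfl
      exact disjoint_left.1 (hdisj hiI hj hij) hag hvj
    refine ⟨insert v S, insert_subset hv fun a ha => (hSv a ha).1, ?_, ?_⟩
    · rw [card_insert_of_notMem fun hvS => (hSv v hvS).2.1 rfl, hSm]
    · rw [coe_insert]
      exact hS.insert (fun a ha _ => (hSv a ha).2.2)
        (fun a ha _ hva => (hmax a (hSv a ha).1).not_gt (hr v a hva))

theorem exists_isAntichain_of_codegree_le (hr : ∀ a b, r a b → a < b) {t m s d : ℕ}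
    (hs : (t - 1) * m < s) {W : Finset α} {F : Finset (Finset α)}
    (hFW : ∀ U ∈ F, U ⊆ W) (hFs : ∀ U ∈ F, #U = s)
    (hdisj : (F : Set (Finset α)).PairwiseDisjoint id)
    (hF : m * (2 * (s.choose t * d) + 1) ≤ #F)
    (hco : ∀ U ∈ F, ∀ A ⊆ U, #A = t → #{v ∈ W | ∀ a ∈ A, r a v} ≤ d) :
    ∃ S : Finset α, #S = m ∧ IsAntichain r (S : Set α) := by
  let R : Finset α → Finset α → Prop := fun U V => ¬Disjoint V {v ∈ W | t ≤ #{a ∈ U | r a v}}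
  have hout : ∀ U ∈ F, #{V ∈ F | R U V} ≤ s.choose t * d := fun U hU =>
    (card_filter_not_disjoint_le hdisj _).trans
      (hFs U hU ▸ card_filter_le_inDegree_le (hco U hU))
  obtain ⟨G, hGF, hGm, hG⟩ := exists_isAntichain_of_outDegree_le hF hout
  obtain ⟨S, -, hSm, hS⟩ := exists_isAntichain_of_inDegree_le hr (c := t - 1) (I := G) (g := id)
    (fun U hU => by rwa [hGm, id, hFs U (hGF hU)]) (hdisj.subset hGF)
    (fun U hU V hV hUV v hv => by
      have hv_poor := disjoint_left.1 (not_not.1 (hG hU hV hUV)) hv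
      have hlt : ¬t ≤ #{a ∈ U | r a v} := fun ht =>
        hv_poor (mem_filter.2 ⟨hFW V (hGF hV) hv, ht⟩)
      change #{a ∈ U | r a v} ≤ t - 1
      omega)
  exact ⟨S, hSm.trans hGm, hS⟩

end Antichain

/-- `A` is the last block of an `r`-copy of the path blowup `P_{k+1}[t]`, whose blocks are the
sets `F i`. -/
def IsPathBlowupEnd {α : Type*} (r : α → α → Prop) (t k : ℕ) (A : Finset α) : Prop :=
  ∃ F : Fin (k + 1) → Finset α, F (Fin.last k) = A ∧ (∀ i, #(F i) = t) ∧
    ∀ i : Fin k, ∀ a ∈ F i.castSucc, ∀ b ∈ F i.succ, r a b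

section PathBlowup

variable {α : Type*} {r : α → α → Prop} {t : ℕ}

theorem isPathBlowupEnd_zero {A : Finset α} (hA : #A = t) : IsPathBlowupEnd r t 0 A :=
  ⟨fun _ => A, rfl, fun _ => hA, fun i => i.elim0⟩

theorem IsPathBlowupEnd.succ {k : ℕ} {A B : Finset α} (hA : IsPathBlowupEnd r t k A)
    (hB : #B = t) (hAB : ∀ a ∈ A, ∀ b ∈ B, r a b) : IsPathBlowupEnd r t (k + 1) B := by
  obtain ⟨F, rfl, hFt, hF⟩ := hA
  refine ⟨Fin.snoc F B, Fin.snoc_last _ _, Fin.forall_fin_succ'.2 ?_, Fin.forall_fin_succ'.2 ?_⟩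
  · simpa only [Fin.snoc_castSucc, Fin.snoc_last] using ⟨hFt, hB⟩
  · simpa only [Fin.succ_castSucc, Fin.succ_last, Fin.snoc_castSucc, Fin.snoc_last]
      using ⟨hF, hAB⟩

theorem exists_forall_isPathBlowupEnd [LinearOrder α]
    (hr : ∀ a b, r a b → a < b) {m s M k : ℕ} (hs : (t - 1) * m < s)
    (hM : m * (2 * (s.choose t * (s - 1)) + 1) ≤ M)
    (hm : ¬∃ S : Finset α, #S = m ∧ IsAntichain r (S : Set α))
    {W : Finset α} (hW : s + k * (s * M) ≤ #W) :
    ∃ U ⊆ W, #U = s ∧ ∀ A ⊆ U, #A = t → IsPathBlowupEnd r t k A := by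
  classical
  induction k generalizing W with
  | zero =>
    obtain ⟨U, hUW, hUs⟩ := exists_subset_card_eq (show s ≤ #W by omega)
    exact ⟨U, hUW, hUs, fun A _ hA => isPathBlowupEnd_zero hA⟩
  | succ k ih =>
    obtain ⟨F, hFM, hdisj, hF⟩ := exists_pairwiseDisjoint_of_card_le (Nat.zero_lt_of_lt hs)
      (fun V _ hV => ih hV) (W := W) (M := M) (by rwa [add_assoc, ← add_one_mul])
    obtain ⟨U, hU, A, hAU, hAt, hA⟩ :
        ∃ U ∈ F, ∃ A ⊆ U, #A = t ∧ s ≤ #{v ∈ W | ∀ a ∈ A, r a v} := by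
      by_contra! hco
      exact hm <| exists_isAntichain_of_codegree_le hr hs (fun U hU => (hF U hU).1)
        (fun U hU => (hF U hU).2.1) hdisj (hM.trans_eq hFM.symm)
        (fun U hU A hAU hAt => Nat.le_sub_one_of_lt (hco U hU A hAU hAt))
    obtain ⟨X, hX, hXs⟩ := exists_subset_card_eq hA
    refine ⟨X, hX.trans (filter_subset _ _), hXs, fun B hBX hBt => ?_⟩
    exact ((hF U hU).2.2 A hAU hAt).succ hBt
      fun a ha b hb => (mem_filter.1 (hX (hBX hb))).2 a ha

end PathBlowup

section Blocks

variable {α : Type*} [Preorder α]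

theorem lt_of_forall_castSucc_lt_succ {ι : Type*} [Nonempty ι] {k : ℕ} {e : Fin (k + 1) → ι → α}
    (he : ∀ i : Fin k, ∀ x y, e i.castSucc x < e i.succ y) {i j : Fin (k + 1)} (hij : i < j)
    (x y : ι) : e i x < e j y := by
  let R : (ι → α) → (ι → α) → Prop := fun f g => ∀ x y, f x < g y
  have : IsTrans (ι → α) R :=
    ⟨fun _ _ _ hfg hgh x y => (hfg x (Classical.arbitrary ι)).trans (hgh _ y)⟩
  exact (Fin.liftFun_iff_succ R).2 he hij x y

theorem strictMono_divNat_modNat {k t : ℕ} {e : Fin (k + 1) → Fin t → α}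
    (hmono : ∀ i, StrictMono (e i)) (he : ∀ i : Fin k, ∀ x y, e i.castSucc x < e i.succ y) :
    StrictMono fun i : Fin ((k + 1) * t) => e i.divNat i.modNat := by
  intro i j hij
  have : Nonempty (Fin t) := ⟨i.modNat⟩
  obtain hlt | heq := (Nat.div_le_div_right (c := t) (Fin.le_def.1 hij.le)).lt_or_eq
  · exact lt_of_forall_castSucc_lt_succ he (Fin.lt_def.2 hlt) _ _
  · have hdiv : i.divNat = j.divNat := Fin.ext heq
    have hmod : i.modNat < j.modNat := by
      have hi := Nat.div_add_mod (i : ℕ) t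
      have hj := Nat.div_add_mod (j : ℕ) t
      rw [← heq] at hj
      rw [Fin.lt_def] at hij
      change (i : ℕ) % t < j % t
      omega
    simpa only [hdiv] using hmono j.divNat hmod

end Blocks

section Coloring

variable {N t : ℕ} {χ : Fin N → Fin N → Bool}

/-- The red edges of the colouring `χ`, oriented from left to right. The orientation makes the blue
cliques exactly the antichains of this relation. -/
def RedEdge (χ : Fin N → Fin N → Bool) (a b : Fin N) : Prop := a < b ∧ χ a b = true

theorem IsPathBlowupEnd.containsRedPathBlowup {k : ℕ} {A : Finset (Fin N)}
    (hA : IsPathBlowupEnd (RedEdge χ) t k A) : ContainsRedPathBlowup N (k + 1) t χ := by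
  obtain ⟨F, -, hFt, hF⟩ := hA
  let e : Fin (k + 1) → Fin t → Fin N := fun i => (F i).orderEmbOfFin (hFt i)
  have he : ∀ i : Fin k, ∀ x y, RedEdge χ (e i.castSucc x) (e i.succ y) := fun i x y =>
    hF i _ (orderEmbOfFin_mem _ _ x) _ (orderEmbOfFin_mem _ _ y)
  refine ⟨fun i => e i.divNat i.modNat, strictMono_divNat_modNat
    (fun i => ((F i).orderEmbOfFin (hFt i)).strictMono) (fun i x y => (he i x y).1), ?_⟩
  intro i j hij
  have hj : (j : ℕ) / t < k + 1 := j.divNat.isLt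
  let q : Fin k := ⟨i / t, by omega⟩
  have hi_div : i.divNat = q.castSucc := rfl
  have hj_div : j.divNat = q.succ := Fin.ext hij
  simpa only [hi_div, hj_div] using (he q i.modNat j.modNat).2

theorem containsBlueClique_of_isAntichain {m : ℕ} {S : Finset (Fin N)} (hSm : #S = m)
    (hS : IsAntichain (RedEdge χ) (S : Set (Fin N))) : ContainsBlueClique N m χ := by
  refine ⟨S.orderEmbOfFin hSm, (S.orderEmbOfFin hSm).strictMono, fun i j hij => ?_⟩
  have hlt := (S.orderEmbOfFin hSm).strictMono hij
  have hblue := hS (orderEmbOfFin_mem S hSm i) (orderEmbOfFin_mem S hSm j) hlt.ne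
  exact Bool.eq_false_of_not_eq_true fun hred => hblue ⟨hlt, hred⟩

theorem containsRedPathBlowup_or_containsBlueClique {k m s M : ℕ} (hs : (t - 1) * m < s)
    (hts : t ≤ s) (hM : m * (2 * (s.choose t * (s - 1)) + 1) ≤ M) (hN : s + k * (s * M) ≤ N)
    (χ : Fin N → Fin N → Bool) :
    ContainsRedPathBlowup N (k + 1) t χ ∨ ContainsBlueClique N m χ := by
  by_cases hm : ∃ S : Finset (Fin N), #S = m ∧ IsAntichain (RedEdge χ) (S : Set (Fin N))
  · obtain ⟨S, hSm, hS⟩ := hm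
    exact .inr (containsBlueClique_of_isAntichain hSm hS)
  · obtain ⟨U, -, hUs, hU⟩ := exists_forall_isPathBlowupEnd (fun _ _ h => h.1) hs hM hm
      (W := univ) (by rwa [card_univ, Fintype.card_fin])
    obtain ⟨A, hAU, hAt⟩ := exists_subset_card_eq (hUs ▸ hts)
    exact .inl (hU A hAU hAt).containsRedPathBlowup

end Coloring

section Arithmetic

theorem two_mul_choose_mul_pred_add_one_le {s : ℕ} (hs : 0 < s) (t : ℕ) :
    2 * (s.choose t * (s - 1)) + 1 ≤ 2 * s ^ (t + 1) := by
  have hpow : 0 < s ^ t := pow_pos hs t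
  calc 2 * (s.choose t * (s - 1)) + 1 ≤ 2 * (s ^ t * (s - 1)) + 2 * s ^ t := by
        gcongr
        · exact Nat.choose_le_pow s t
        · omega
    _ = 2 * (s ^ t * (s - 1 + 1)) := by ring
    _ = 2 * s ^ (t + 1) := by rw [Nat.sub_add_cancel hs, pow_succ]

theorem mul_pow_add_two_le {t m x : ℕ} (ht : 2 ≤ t) (hm : 0 < m) (hx : 2 * m ≤ x) :
    x * (t * m) ^ (t + 2) ≤ (t * m * x) ^ (2 * t - 1) := by
  obtain ⟨r, rfl⟩ := Nat.exists_eq_add_of_le' ht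
  have hbase : (r + 2) * m ≤ x ^ (2 * r + 2) :=
    calc (r + 2) * m ≤ 2 ^ (r + 1) * m ^ (r + 1) := by
          gcongr
          · exact Nat.lt_two_pow_self
          · exact Nat.le_self_pow r.succ_ne_zero m
      _ = (2 * m) ^ (r + 1) := (mul_pow ..).symm
      _ ≤ x ^ (r + 1) := by gcongr
      _ ≤ x ^ (2 * r + 2) := Nat.pow_le_pow_right (by omega) (by omega)
  calc x * ((r + 2) * m) ^ (r + 2 + 2)
      = x * ((r + 2) * m) ^ (r + 3) * ((r + 2) * m) := by ring
    _ ≤ x * ((r + 2) * m) ^ (2 * r + 3) * x ^ (2 * r + 2) := by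
        gcongr
        · exact Nat.mul_pos (by omega) hm
        · omega
    _ = ((r + 2) * m * x) ^ (2 * r + 3) := by rw [mul_pow _ x]; ring

theorem ramsey_bound_le_pow {t n m s : ℕ} (ht : 1 ≤ t) (hn : 1 ≤ n) (hm : 1 ≤ m)
    (hs : s = (t - 1) * m + 1) :
    n * (s * (m * (2 * (s.choose t * (s - 1)) + 1))) ≤ (2 * t * n * m ^ 2) ^ (2 * t - 1) := by
  obtain rfl | ht := ht.eq_or_lt
  · simp only [tsub_self, zero_mul, zero_add] at hs
    subst hs
    calc n * (1 * (m * (2 * (Nat.choose 1 1 * (1 - 1)) + 1))) = n * m := by simp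
      _ ≤ n * m * (2 * m) := Nat.le_mul_of_pos_right _ (by omega)
      _ = (2 * 1 * n * m ^ 2) ^ (2 * 1 - 1) := by ring
  have hst : s ≤ t * m :=
    calc s ≤ (t - 1) * m + m := by omega
      _ = t * m := by rw [← add_one_mul, Nat.sub_add_cancel (by omega)]
  have hs_pos : 0 < s := by omega
  calc n * (s * (m * (2 * (s.choose t * (s - 1)) + 1)))
      ≤ n * (s * (m * (2 * s ^ (t + 1)))) := by
        gcongr
        exact two_mul_choose_mul_pred_add_one_le hs_pos t
    _ = 2 * n * m * s ^ (t + 2) := by ring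
    _ ≤ 2 * n * m * (t * m) ^ (t + 2) := by gcongr
    _ ≤ (t * m * (2 * n * m)) ^ (2 * t - 1) := mul_pow_add_two_le ht hm (by gcongr; omega)
    _ = (2 * t * n * m ^ 2) ^ (2 * t - 1) := by ring

end Arithmetic

theorem stmt18_general (t n m : ℕ) (ht : 1 ≤ t) (hn : 1 ≤ n) (hm : 1 ≤ m) :
    ordRamseyBlowupClique n t m ≤ (2 * t * n * m ^ 2) ^ (2 * t - 1) := by
  obtain ⟨s, hs⟩ : ∃ s, s = (t - 1) * m + 1 := ⟨_, rfl⟩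
  obtain ⟨M, hM⟩ : ∃ M, M = m * (2 * (s.choose t * (s - 1)) + 1) := ⟨_, rfl⟩
  have hts : t ≤ s := by
    have := Nat.le_mul_of_pos_right (t - 1) hm
    omega
  have hbound := ramsey_bound_le_pow ht hn hm hs
  obtain ⟨k, rfl⟩ := Nat.exists_eq_add_of_le' hn
  have hN : s + k * (s * M) ≤ (2 * t * (k + 1) * m ^ 2) ^ (2 * t - 1) :=
    calc s + k * (s * M) ≤ s * M + k * (s * M) := by
          gcongr
          exact Nat.le_mul_of_pos_right s (by rw [hM]; positivity)
      _ = (k + 1) * (s * M) := by ring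
      _ ≤ _ := by rwa [hM]
  exact Nat.sInf_le
    (containsRedPathBlowup_or_containsBlueClique (hs ▸ Nat.lt_succ_self _) hts hM.ge hN)

/-- `R_<(P_n[t], K_n) ≤ (2 t n³)^(2t−1)`. -/
theorem stmt18 (t n : ℕ) (ht : 1 ≤ t) (hn : 1 ≤ n) :
    ordRamseyBlowupClique n t n ≤ (2 * t * n ^ 3) ^ (2 * t - 1) := by
  simpa only [mul_assoc, ← pow_succ'] using stmt18_general t n n ht hn hn
end
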